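/- Let n ≥ 1, let b ≥ 1 be an integer, and let α ∈ (1/2, 1] satisfy 2α < n, nb > 2α(b+1). Let p(·) ∈ P^log(ℝ^n) with p⁻ > b+1 and 2α·p⁺ < n(b+1), and set r = nb/(2α). Then there exists ε > 0 with the following property: for every u₀ ∈ L^{p(·)}(ℝ^n) ∩ L^r(ℝ^n) and every measurable 𝓕 : (0,∞)×ℝ^n → ℝ such that ‖u₀‖_{𝓛^{p(·)}_r} + N_{p(·)/(b+1), nb/((b+1)·2α)}(𝓕) < ε, there exist R > 0 and a measurable u : (0,∞)×ℝ^n → ℝ with N_{p(·),r}(u) ≤ R which is a mild solution (with γ = 0) of ∂_t u + (−Δ)^α u = |u|^b u + 𝓕 with data u₀, and u is the unique mild solution satisfying N_{p(·),r}(u) ≤ R. -/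

import Mathlib

open MeasureTheory Set
open scoped ENNReal FourierTransform

noncomputable section

/-- Euclidean space `ℝ^n`. -/
abbrev Rn (n : ℕ) := EuclideanSpace ℝ (Fin n)

/-- Luxemburg norm of an `ℝ≥0∞`-valued function for a variable exponent `p`. -/
def luxNorm {Ω : Type*} [MeasurableSpace Ω] (μ : Measure Ω) (p : Ω → ℝ) (f : Ω → ℝ≥0∞) : ℝ≥0∞ :=
  sInf {lam : ℝ≥0∞ | 0 < lam ∧ ∫⁻ x, (f x / lam) ^ (p x) ∂μ ≤ 1}

/-- Luxemburg norm `‖f‖_{L^{p(·)}}` of a real-valued function. -/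
def luxNormR {Ω : Type*} [MeasurableSpace Ω] (μ : Measure Ω) (p : Ω → ℝ) (f : Ω → ℝ) : ℝ≥0∞ :=
  luxNorm μ p (fun x => ENNReal.ofReal |f x|)

/-- `p(·) ∈ P^log(Ω)`: measurable, with values in `[1,∞)` on `Ω`, locally log-Hölder
continuous on `Ω`, and satisfying the log-Hölder decay condition on `Ω`. -/
def IsPLog {E : Type*} [NormedAddCommGroup E] [MeasurableSpace E] (Ω : Set E) (p : E → ℝ) : Prop :=
  Measurable p ∧ (∀ x ∈ Ω, 1 ≤ p x) ∧
  ∃ C₁ > (0:ℝ), ∃ C₂ > (0:ℝ), ∃ pinf : ℝ,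
    (∀ x ∈ Ω, ∀ y ∈ Ω, x ≠ y →
      |1 / p x - 1 / p y| ≤ C₁ / Real.log (Real.exp 1 + 1 / ‖x - y‖)) ∧
    (∀ x ∈ Ω, |1 / p x - 1 / pinf| ≤ C₂ / Real.log (Real.exp 1 + ‖x‖))

/-- The fractional heat kernel `𝔤_t^α` on `ℝ^n`: the inverse Fourier transform of
`ξ ↦ exp (-t‖ξ‖^{2α})` (it is real-valued; we take the real part). -/
def gKer (n : ℕ) (α t : ℝ) (x : Rn n) : ℝ :=
  (𝓕⁻ (fun ξ : Rn n => (Real.exp (-t * ‖ξ‖ ^ (2 * α)) : ℂ)) x).re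

/-- Convolution on `ℝ^n`. -/
def conv (n : ℕ) (g f : Rn n → ℝ) (x : Rn n) : ℝ := ∫ y, g (x - y) * f y

/-- `x ↦ ess sup_{t>0} |u(t,x)|`, as an `ℝ≥0∞`-valued function. -/
def timeSup (n : ℕ) (u : ℝ → Rn n → ℝ) (x : Rn n) : ℝ≥0∞ :=
  essSup (fun t => ENNReal.ofReal |u t x|) (volume.restrict (Ioi (0:ℝ)))

/-- Mixed norm `‖f‖_{𝓛^{p(·)}_r} = max {‖f‖_{L^{p(·)}}, ‖f‖_{L^r}}`. -/
def mixedNorm (n : ℕ) (p : Rn n → ℝ) (r : ℝ) (f : Rn n → ℝ) : ℝ≥0∞ :=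
  max (luxNormR volume p f) (luxNormR volume (fun _ => r) f)

/-- `N_{p(·),r}(u) = ‖x ↦ ess sup_{t>0}|u(t,x)|‖_{𝓛^{p(·)}_r}`. -/
def mixedN (n : ℕ) (p : Rn n → ℝ) (r : ℝ) (u : ℝ → Rn n → ℝ) : ℝ≥0∞ :=
  max (luxNorm volume p (timeSup n u)) (luxNorm volume (fun _ => r) (timeSup n u))

/-- Mild solution (γ = 0), on the time set `S`, of `∂_t u + (-Δ)^α u = |u|^b u + f`,
`u(0) = u₀`: for a.e. `(t,x)` with `t ∈ S`, all integrals converge absolutely and the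
Duhamel formula holds. -/
def IsMildSol0 (n : ℕ) (α : ℝ) (b : ℕ) (S : Set ℝ) (f : ℝ → Rn n → ℝ) (u₀ : Rn n → ℝ)
    (u : ℝ → Rn n → ℝ) : Prop :=
  ∀ᵐ tx : ℝ × Rn n ∂((volume.restrict S).prod volume),
    Integrable (fun y => gKer n α tx.1 (tx.2 - y) * u₀ y) volume ∧
    IntegrableOn (fun sy : ℝ × Rn n => gKer n α (tx.1 - sy.1) (tx.2 - sy.2) * f sy.1 sy.2)
      (Ioc 0 tx.1 ×ˢ univ) (volume.prod volume) ∧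
    IntegrableOn (fun sy : ℝ × Rn n =>
        gKer n α (tx.1 - sy.1) (tx.2 - sy.2) * (|u sy.1 sy.2| ^ b * u sy.1 sy.2))
      (Ioc 0 tx.1 ×ˢ univ) (volume.prod volume) ∧
    u tx.1 tx.2 = conv n (gKer n α tx.1) u₀ tx.2
      + (∫ s in Ioc (0:ℝ) tx.1, conv n (gKer n α (tx.1 - s)) (f s) tx.2)
      - ∫ s in Ioc (0:ℝ) tx.1, conv n (gKer n α (tx.1 - s)) (fun y => |u s y| ^ b * u s y) tx.2

/-- Jensen's inequality for powers against a measure of mass at most one. -/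
lemma rpow_lintegral_le_lintegral_rpow {X : Type*} [MeasurableSpace X] {μ : Measure X}
    (hμ : μ univ ≤ 1) {f : X → ℝ≥0∞} (hf : AEMeasurable f μ) {s : ℝ} (hs : 1 ≤ s) :
    (∫⁻ x, f x ∂μ) ^ s ≤ ∫⁻ x, f x ^ s ∂μ := by
  have hs0 : 0 < s := by linarith
  have h := ENNReal.lintegral_mul_norm_pow_le (μ := μ) (f := fun x => f x ^ s) (g := fun _ => 1)
    (hf.pow_const s) aemeasurable_const (p := 1 / s) (q := 1 - 1 / s) (by positivity)
    (by rw [sub_nonneg, div_le_one hs0]; exact hs) (by ring)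
  have h1 : ∀ x, (f x ^ s) ^ (1 / s) * (1 : ℝ≥0∞) ^ (1 - 1 / s) = f x := fun x => by
    rw [← ENNReal.rpow_mul, mul_one_div_cancel hs0.ne', ENNReal.rpow_one, ENNReal.one_rpow, mul_one]
  simp only [h1] at h
  have h2 : (∫⁻ _ : X, (1 : ℝ≥0∞) ∂μ) ^ (1 - 1 / s) ≤ 1 := by
    refine ENNReal.rpow_le_one (by simpa using hμ) ?_
    rw [sub_nonneg, div_le_one hs0]; exact hs
  have h3 : (∫⁻ x, f x ∂μ) ≤ (∫⁻ x, f x ^ s ∂μ) ^ (1 / s) :=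
    h.trans (by simpa using mul_le_mul_right h2 ((∫⁻ x, f x ^ s ∂μ) ^ (1 / s)))
  calc (∫⁻ x, f x ∂μ) ^ s ≤ ((∫⁻ x, f x ^ s ∂μ) ^ (1 / s)) ^ s := ENNReal.rpow_le_rpow h3 hs0.le
    _ = _ := by rw [← ENNReal.rpow_mul, one_div_mul_cancel hs0.ne', ENNReal.rpow_one]

/-- The uncentred Hardy–Littlewood maximal function. -/
def maxFn {n : ℕ} (f : Rn n → ℝ≥0∞) (x : Rn n) : ℝ≥0∞ :=
  ⨆ (z : Rn n) (ρ : ℝ) (_ : 0 < ρ) (_ : x ∈ Metric.ball z ρ),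
    (volume (Metric.ball z ρ))⁻¹ * ∫⁻ y in Metric.ball z ρ, f y

section maximal
variable {n : ℕ}

lemma volume_ball_ne_zero (z : Rn n) {ρ : ℝ} (hρ : 0 < ρ) : volume (Metric.ball z ρ) ≠ 0 :=
  (Metric.measure_ball_pos volume z hρ).ne'

lemma volume_ball_ne_top (z : Rn n) (ρ : ℝ) : volume (Metric.ball z ρ) ≠ ⊤ :=
  measure_ball_lt_top.ne

lemma average_le_maxFn (f : Rn n → ℝ≥0∞) {x z : Rn n} {ρ : ℝ} (hx : x ∈ Metric.ball z ρ) :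
    (volume (Metric.ball z ρ))⁻¹ * ∫⁻ y in Metric.ball z ρ, f y ≤ maxFn f x :=
  le_iSup_of_le z <| le_iSup_of_le ρ <| le_iSup_of_le (Metric.pos_of_mem_ball hx) <|
    le_iSup_of_le hx le_rfl

lemma maxFn_le {f : Rn n → ℝ≥0∞} {x : Rn n} {c : ℝ≥0∞}
    (h : ∀ z ρ, 0 < ρ → x ∈ Metric.ball z ρ →
      (volume (Metric.ball z ρ))⁻¹ * ∫⁻ y in Metric.ball z ρ, f y ≤ c) : maxFn f x ≤ c :=
  iSup_le fun z => iSup_le fun ρ => iSup_le fun hρ => iSup_le fun hx => h z ρ hρ hx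

lemma setLIntegral_ball_le_maxFn (f : Rn n → ℝ≥0∞) {x z : Rn n} {ρ : ℝ}
    (hx : x ∈ Metric.ball z ρ) :
    ∫⁻ y in Metric.ball z ρ, f y ≤ volume (Metric.ball z ρ) * maxFn f x := by
  have hρ := Metric.pos_of_mem_ball hx
  calc ∫⁻ y in Metric.ball z ρ, f y
      = volume (Metric.ball z ρ) * ((volume (Metric.ball z ρ))⁻¹ *
          ∫⁻ y in Metric.ball z ρ, f y) := by
        rw [← mul_assoc, ENNReal.mul_inv_cancel (volume_ball_ne_zero z hρ) (volume_ball_ne_top z ρ),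
          one_mul]
    _ ≤ _ := by gcongr; exact average_le_maxFn f hx

lemma measurable_maxFn (f : Rn n → ℝ≥0∞) : Measurable (maxFn f) := by
  refine measurable_of_Ioi fun c => IsOpen.measurableSet ?_
  have : maxFn f ⁻¹' Ioi c = ⋃ (z : Rn n) (ρ : ℝ) (_ : 0 < ρ)
      (_ : c < (volume (Metric.ball z ρ))⁻¹ * ∫⁻ y in Metric.ball z ρ, f y), Metric.ball z ρ := by
    ext x
    simp only [mem_preimage, mem_Ioi, maxFn, lt_iSup_iff, mem_iUnion]
    constructor
    · rintro ⟨z, ρ, h1, h2, h3⟩; exact ⟨z, ρ, h1, h3, h2⟩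
    · rintro ⟨z, ρ, h1, h2, h3⟩; exact ⟨z, ρ, h1, h3, h2⟩
  rw [this]
  exact isOpen_iUnion fun z => isOpen_iUnion fun ρ => isOpen_iUnion fun _ => isOpen_iUnion fun _ =>
    Metric.isOpen_ball

lemma maxFn_mono_ae {f g : Rn n → ℝ≥0∞} (h : f ≤ᵐ[volume] g) (x : Rn n) :
    maxFn f x ≤ maxFn g x :=
  maxFn_le fun _ _ _ hx => le_trans (mul_le_mul_right (lintegral_mono_ae (ae_restrict_of_ae h)) _)
    (average_le_maxFn g hx)

lemma maxFn_const (c : ℝ≥0∞) (x : Rn n) : maxFn (fun _ : Rn n => c) x ≤ c :=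
  maxFn_le fun z ρ hρ _ => by
    rw [setLIntegral_const, mul_comm c, ← mul_assoc,
      ENNReal.inv_mul_cancel (volume_ball_ne_zero z hρ) (volume_ball_ne_top z ρ), one_mul]

lemma maxFn_const_mul_le {f : Rn n → ℝ≥0∞} (hf : Measurable f) (c : ℝ≥0∞) (x : Rn n) :
    maxFn (fun y => c * f y) x ≤ c * maxFn f x :=
  maxFn_le fun z ρ hρ hx => by
    rw [lintegral_const_mul _ hf, mul_left_comm]
    gcongr
    exact average_le_maxFn f hx

lemma maxFn_add_le {f g : Rn n → ℝ≥0∞} (hf : Measurable f) (x : Rn n) :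
    maxFn (fun y => f y + g y) x ≤ maxFn f x + maxFn g x :=
  maxFn_le fun z ρ hρ hx => by
    rw [lintegral_add_left hf, mul_add]
    exact add_le_add (average_le_maxFn f hx) (average_le_maxFn g hx)

/-- The weak type (1,1) estimate. -/
lemma mul_volume_lt_maxFn_le (hn : 1 ≤ n) (f : Rn n → ℝ≥0∞) (c : ℝ≥0∞) :
    c * volume {x | c < maxFn f x} ≤ 5 ^ n * ∫⁻ y, f y := by
  have : Nonempty (Fin n) := ⟨⟨0, hn⟩⟩
  rcases eq_or_ne c 0 with rfl | hc0
  · simp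
  rcases eq_or_ne c ⊤ with rfl | hct
  · simp
  rcases eq_or_ne (∫⁻ y, f y) ⊤ with hI | hI
  · rw [hI, ENNReal.mul_top (by positivity)]; exact le_top
  set t : Set (Rn n × ℝ) := {q | 0 < q.2 ∧
    c < (volume (Metric.ball q.1 q.2))⁻¹ * ∫⁻ y in Metric.ball q.1 q.2, f y} with ht
  have hball : ∀ q ∈ t, c * volume (Metric.ball q.1 q.2) ≤ ∫⁻ y in Metric.ball q.1 q.2, f y := by
    rintro ⟨z, ρ⟩ ⟨hρ, hq⟩
    calc c * volume (Metric.ball z ρ)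
        ≤ ((volume (Metric.ball z ρ))⁻¹ * ∫⁻ y in Metric.ball z ρ, f y) *
          volume (Metric.ball z ρ) := by gcongr
      _ = _ := by
        rw [mul_right_comm, ENNReal.inv_mul_cancel (volume_ball_ne_zero z hρ)
          (volume_ball_ne_top z ρ), one_mul]
  set ω := volume (Metric.ball (0 : Rn n) 1) with hω
  have hω0 : ω ≠ 0 := volume_ball_ne_zero _ one_pos
  have hωt : ω ≠ ⊤ := volume_ball_ne_top _ _
  have hvol : ∀ (z : Rn n) (ρ : ℝ), 0 ≤ ρ → volume (Metric.ball z ρ) = ENNReal.ofReal (ρ ^ n) * ω := by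
    intro z ρ hρ
    have := Measure.addHaar_ball (volume : Measure (Rn n)) z hρ
    simpa using this
  have hbd : ∀ q ∈ t, q.2 ≤ max 1 ((∫⁻ y, f y) / (c * ω)).toReal := by
    rintro ⟨z, ρ⟩ hq
    by_contra! hlt
    obtain ⟨h1, h2⟩ := max_lt_iff.1 hlt
    have h3 : ENNReal.ofReal (ρ ^ n) ≤ (∫⁻ y, f y) / (c * ω) := by
      rw [ENNReal.le_div_iff_mul_le (Or.inl (mul_ne_zero hc0 hω0))
        (Or.inl (ENNReal.mul_ne_top hct hωt))]
      calc ENNReal.ofReal (ρ ^ n) * (c * ω) = c * volume (Metric.ball z ρ) := by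
            rw [hvol z ρ hq.1.le]; ring
        _ ≤ _ := (hball _ hq).trans (setLIntegral_le_lintegral _ _)
    have h4 : ρ ^ n ≤ ((∫⁻ y, f y) / (c * ω)).toReal :=
      (ENNReal.ofReal_le_iff_le_toReal (ENNReal.div_ne_top hI (mul_ne_zero hc0 hω0))).1 h3
    have h5 : ρ ≤ ρ ^ n := le_self_pow₀ h1.le (by omega)
    linarith
  obtain ⟨u, hut, hdis, hcov⟩ := Vitali.exists_disjoint_subfamily_covering_enlargement_closedBall
    t (fun q => q.1) (fun q => q.2) _ hbd 5 (by norm_num)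
  have hdis' : u.PairwiseDisjoint fun q => Metric.ball q.1 q.2 :=
    hdis.mono fun q => Metric.ball_subset_closedBall
  have hcount : u.Countable := hdis'.countable_of_isOpen (fun _ _ => Metric.isOpen_ball)
    fun q hq => Metric.nonempty_ball.2 (hut hq).1
  have hsub : {x | c < maxFn f x} ⊆ ⋃ q ∈ u, Metric.closedBall q.1 (5 * q.2) := by
    intro x hx
    simp only [mem_ofPred_eq, maxFn, lt_iSup_iff] at hx
    obtain ⟨z, ρ, hρ, hxz, h⟩ := hx
    obtain ⟨q, hq, hsubq⟩ := hcov (z, ρ) ⟨hρ, h⟩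
    exact mem_biUnion hq (hsubq (Metric.ball_subset_closedBall hxz))
  have hcb : ∀ q ∈ u, volume (Metric.closedBall q.1 (5 * q.2)) =
      5 ^ n * volume (Metric.ball q.1 q.2) := by
    intro q hq
    have h0 := (hut hq).1
    rw [Measure.addHaar_closedBall_eq_addHaar_ball, hvol _ _ (by positivity), hvol _ _ h0.le,
      mul_pow, ENNReal.ofReal_mul (by positivity), mul_assoc]
    congr 1
    rw [ENNReal.ofReal_pow (by norm_num)]; norm_num
  calc c * volume {x | c < maxFn f x}
      ≤ c * ∑' q : u, volume (Metric.closedBall q.1.1 (5 * q.1.2)) := by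
        gcongr
        exact (measure_mono hsub).trans (measure_biUnion_le _ hcount _)
    _ = 5 ^ n * ∑' q : u, c * volume (Metric.ball q.1.1 q.1.2) := by
        rw [← ENNReal.tsum_mul_left, ← ENNReal.tsum_mul_left]
        exact tsum_congr fun q => by rw [hcb q.1 q.2]; ring
    _ ≤ 5 ^ n * ∑' q : u, ∫⁻ y in Metric.ball q.1.1 q.1.2, f y := by
        gcongr with q
        exact hball _ (hut q.2)
    _ = 5 ^ n * ∫⁻ y in ⋃ q ∈ u, Metric.ball q.1 q.2, f y := by
        rw [lintegral_biUnion hcount (fun q _ => measurableSet_ball) hdis']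
    _ ≤ _ := mul_le_mul_right (setLIntegral_le_lintegral _ _) _

end maximal

lemma lintegral_Ioo_rpow {k : ℝ} (hk : 0 < k) {a : ℝ} (ha : 0 ≤ a) :
    ∫⁻ t in Ioo 0 a, ENNReal.ofReal (k * t ^ (k - 1)) = ENNReal.ofReal a ^ k := by
  have hint : IntervalIntegrable (fun t : ℝ => k * t ^ (k - 1)) volume 0 a :=
    (intervalIntegral.intervalIntegrable_rpow' (by linarith)).const_mul k
  have hv : ∫ t in (0:ℝ)..a, k * t ^ (k - 1) = a ^ k := by
    rw [intervalIntegral.integral_const_mul, integral_rpow (Or.inl (by linarith))]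
    simp [Real.zero_rpow hk.ne', mul_div_cancel₀ _ hk.ne']
  rw [restrict_Ioo_eq_restrict_Ioc, ← ofReal_integral_eq_lintegral_ofReal,
    ← intervalIntegral.integral_of_le ha, hv, ENNReal.ofReal_rpow_of_nonneg ha hk.le]
  · exact (intervalIntegrable_iff_integrableOn_Ioc_of_le ha).1 hint
  · filter_upwards [ae_restrict_mem measurableSet_Ioc] with t ht
    have := ht.1
    simp only [Pi.zero_apply]
    positivity

/-- Layer-cake formula for the power of a point of `[0, ∞]`. -/
lemma lintegral_rpow_layercake {k : ℝ} (hk : 0 < k) (a : ℝ≥0∞) :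
    ∫⁻ t in Ioi (0:ℝ), {t : ℝ | ENNReal.ofReal t < a}.indicator
      (fun t => ENNReal.ofReal (k * t ^ (k - 1))) t = a ^ k := by
  have hms : MeasurableSet {t : ℝ | ENNReal.ofReal t < a} :=
    measurableSet_lt ENNReal.measurable_ofReal measurable_const
  rw [setLIntegral_indicator hms]
  have key : ∀ b : ℝ, 0 ≤ b →
      {t : ℝ | ENNReal.ofReal t < ENNReal.ofReal b} ∩ Ioi 0 = Ioo 0 b := by
    intro b hb
    ext t
    simp only [mem_inter_iff, mem_ofPred_eq, mem_Ioi, mem_Ioo]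
    constructor
    · rintro ⟨h1, h2⟩
      exact ⟨h2, ((ENNReal.ofReal_lt_ofReal_iff_of_nonneg h2.le).1 h1)⟩
    · rintro ⟨h1, h2⟩
      exact ⟨(ENNReal.ofReal_lt_ofReal_iff_of_nonneg h1.le).2 h2, h1⟩
  rcases eq_or_ne a ⊤ with rfl | ha
  · rw [ENNReal.top_rpow_of_pos hk]
    refine top_le_iff.1 (ENNReal.le_of_forall_nnreal_lt fun r _ => ?_)
    have h1 : (r : ℝ≥0∞) = ENNReal.ofReal ((r:ℝ) ^ k⁻¹) ^ k := by
      rw [ENNReal.ofReal_rpow_of_nonneg (by positivity) hk.le, ← Real.rpow_mul r.coe_nonneg,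
        inv_mul_cancel₀ hk.ne', Real.rpow_one, ENNReal.ofReal_coe_nnreal]
    rw [h1, ← lintegral_Ioo_rpow hk (by positivity)]
    refine lintegral_mono_set fun t ht => ⟨ENNReal.ofReal_lt_top, ht.1⟩
  · lift a to NNReal using ha
    rw [← ENNReal.ofReal_coe_nnreal, key _ a.coe_nonneg, lintegral_Ioo_rpow hk a.coe_nonneg]

/-- The strong type `(κ,κ)` estimate for the maximal function, `κ > 1`. -/
theorem lintegral_maxFn_rpow_le {n : ℕ} (hn : 1 ≤ n) {κ : ℝ} (hκ : 1 < κ) :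
    ∃ C : ℝ≥0∞, C ≠ ⊤ ∧ ∀ f : Rn n → ℝ≥0∞, Measurable f →
      ∫⁻ x, maxFn f x ^ κ ≤ C * ∫⁻ x, f x ^ κ := by
  have hκ0 : 0 < κ := by linarith
  have hκ1 : 0 < κ - 1 := by linarith
  set D : ℝ≥0∞ := 5 ^ n * ENNReal.ofReal (2 * κ / (κ - 1)) with hD
  refine ⟨D * 2 ^ (κ - 1), by finiteness, fun f hf => ?_⟩
  have hM := measurable_maxFn f
  have weak : ∀ t : ℝ, 0 < t → volume {x | ENNReal.ofReal t < maxFn f x} ≤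
      5 ^ n * ENNReal.ofReal (2 / t) *
        ∫⁻ x, {x | ENNReal.ofReal t < 2 * f x}.indicator f x := by
    intro t ht
    set g := {x | ENNReal.ofReal t < 2 * f x}.indicator f with hg
    set c := ENNReal.ofReal (t / 2) with hc
    have hms : MeasurableSet {x | ENNReal.ofReal t < 2 * f x} :=
      measurableSet_lt measurable_const (hf.const_mul 2)
    have hgm : Measurable g := hf.indicator hms
    have hcc : ENNReal.ofReal t = 2 * c := by
      rw [hc, ← ENNReal.ofReal_ofNat, ← ENNReal.ofReal_mul (by norm_num)]; congr 1; ring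
    have hle : ∀ x, f x ≤ g x + c := by
      intro x
      by_cases hx : ENNReal.ofReal t < 2 * f x
      · simp [hg, hx]
      · have : 2 * f x ≤ 2 * c := by rw [← hcc]; exact not_lt.1 hx
        have := (ENNReal.mul_le_mul_iff_right (by norm_num) (by norm_num)).1 this
        exact this.trans le_add_self
    have hsub : {x | ENNReal.ofReal t < maxFn f x} ⊆ {x | c < maxFn g x} := by
      intro x hx
      have h1 : maxFn f x ≤ maxFn g x + c :=
        (maxFn_mono_ae (ae_of_all _ hle) x).trans ((maxFn_add_le hgm x).trans
          (by gcongr; exact maxFn_const c x))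
      simp only [mem_ofPred_eq] at hx ⊢
      by_contra! h2
      have h3 : maxFn f x ≤ c + c := h1.trans (by gcongr)
      rw [← two_mul, ← hcc] at h3
      exact absurd hx (not_lt.2 h3)
    have h1 := mul_volume_lt_maxFn_le hn g c
    have hcinv : ENNReal.ofReal (2 / t) * c = 1 := by
      rw [hc, ← ENNReal.ofReal_mul (by positivity)]; rw [show 2 / t * (t / 2) = 1 by field_simp]
      simp
    calc volume {x | ENNReal.ofReal t < maxFn f x}
        ≤ ENNReal.ofReal (2 / t) * (c * volume {x | c < maxFn g x}) := by
          rw [← mul_assoc, hcinv, one_mul]; exact measure_mono hsub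
      _ ≤ ENNReal.ofReal (2 / t) * (5 ^ n * ∫⁻ x, g x) := by gcongr
      _ = _ := by ring
  have hmeas1 : Measurable (Function.uncurry fun (x : Rn n) (t : ℝ) =>
      {t : ℝ | ENNReal.ofReal t < maxFn f x}.indicator
        (fun t => ENNReal.ofReal (κ * t ^ (κ - 1))) t) := by
    have : (Function.uncurry fun (x : Rn n) (t : ℝ) =>
      {t : ℝ | ENNReal.ofReal t < maxFn f x}.indicator
        (fun t => ENNReal.ofReal (κ * t ^ (κ - 1))) t) =
      {q : Rn n × ℝ | ENNReal.ofReal q.2 < maxFn f q.1}.indicator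
        (fun q => ENNReal.ofReal (κ * q.2 ^ (κ - 1))) := by
      ext q; simp [Function.uncurry, indicator]
    rw [this]
    refine Measurable.indicator (by fun_prop) (measurableSet_lt (by fun_prop) (by fun_prop))
  have hmeas2 : Measurable (Function.uncurry fun (t : ℝ) (x : Rn n) =>
      ENNReal.ofReal (κ * t ^ (κ - 1)) * (5 ^ n * ENNReal.ofReal (2 / t) *
        {x | ENNReal.ofReal t < 2 * f x}.indicator f x)) := by
    refine Measurable.mul (by fun_prop) (Measurable.mul (by fun_prop) ?_)
    have : (fun a : ℝ × Rn n => {x | ENNReal.ofReal a.1 < 2 * f x}.indicator f a.2) =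
      {q : ℝ × Rn n | ENNReal.ofReal q.1 < 2 * f q.2}.indicator (fun q => f q.2) := by
      ext q; simp [indicator]
    rw [this]
    exact Measurable.indicator (by fun_prop) (measurableSet_lt (by fun_prop) (by fun_prop))
  calc ∫⁻ x, maxFn f x ^ κ
      = ∫⁻ x, ∫⁻ t in Ioi (0:ℝ), {t : ℝ | ENNReal.ofReal t < maxFn f x}.indicator
          (fun t => ENNReal.ofReal (κ * t ^ (κ - 1))) t := by
        simp_rw [lintegral_rpow_layercake hκ0]
    _ = ∫⁻ t in Ioi (0:ℝ), ∫⁻ x, {t : ℝ | ENNReal.ofReal t < maxFn f x}.indicator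
          (fun t => ENNReal.ofReal (κ * t ^ (κ - 1))) t :=
        lintegral_lintegral_swap hmeas1.aemeasurable
    _ = ∫⁻ t in Ioi (0:ℝ), ENNReal.ofReal (κ * t ^ (κ - 1)) *
          volume {x | ENNReal.ofReal t < maxFn f x} := by
        congr 1; ext t
        rw [← lintegral_indicator_const (measurableSet_lt measurable_const hM)]
        rfl
    _ ≤ ∫⁻ t in Ioi (0:ℝ), ∫⁻ x, ENNReal.ofReal (κ * t ^ (κ - 1)) *
          (5 ^ n * ENNReal.ofReal (2 / t) *
          {x | ENNReal.ofReal t < 2 * f x}.indicator f x) := by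
        refine setLIntegral_mono' measurableSet_Ioi fun t ht => ?_
        have hm : Measurable ({x | ENNReal.ofReal t < 2 * f x}.indicator f) :=
          hf.indicator (measurableSet_lt measurable_const (hf.const_mul 2))
        rw [lintegral_const_mul _ (hm.const_mul _), lintegral_const_mul _ hm]
        gcongr
        exact weak t ht
    _ = ∫⁻ x, ∫⁻ t in Ioi (0:ℝ), ENNReal.ofReal (κ * t ^ (κ - 1)) *
          (5 ^ n * ENNReal.ofReal (2 / t) *
          {x | ENNReal.ofReal t < 2 * f x}.indicator f x) :=
        lintegral_lintegral_swap hmeas2.aemeasurable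
    _ = ∫⁻ x, D * 2 ^ (κ - 1) * f x ^ κ := by
        congr 1; ext x
        calc _ = ∫⁻ t in Ioi (0:ℝ), (D * f x) * {t : ℝ | ENNReal.ofReal t < 2 * f x}.indicator
              (fun t => ENNReal.ofReal ((κ - 1) * t ^ (κ - 1 - 1))) t := by
              refine setLIntegral_congr_fun measurableSet_Ioi fun t ht => ?_
              have ht : 0 < t := ht
              by_cases hx : ENNReal.ofReal t < 2 * f x
              · simp only [indicator, mem_ofPred_eq, hx, if_true, hD]
                have : ENNReal.ofReal (κ * t ^ (κ - 1)) * ENNReal.ofReal (2 / t) =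
                    ENNReal.ofReal (2 * κ / (κ - 1)) *
                      ENNReal.ofReal ((κ - 1) * t ^ (κ - 1 - 1)) := by
                  have e : t ^ (κ - 1) = t * t ^ (κ - 1 - 1) := by
                    rw [Real.rpow_sub_one ht.ne' (κ - 1)]; field_simp
                  rw [← ENNReal.ofReal_mul (by positivity), ← ENNReal.ofReal_mul (by positivity), e]
                  congr 1
                  field_simp
                calc _ = 5 ^ n * (ENNReal.ofReal (κ * t ^ (κ - 1)) * ENNReal.ofReal (2 / t))
                      * f x := by ring
                  _ = _ := by rw [this]; ring
              · simp [indicator, hx]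
          _ = D * f x * (2 * f x) ^ (κ - 1) := by
              rw [lintegral_const_mul, lintegral_rpow_layercake hκ1]
              exact Measurable.indicator (by fun_prop)
                (measurableSet_lt (by fun_prop) (by fun_prop))
          _ = D * 2 ^ (κ - 1) * f x ^ κ := by
              have : f x ^ κ = f x * f x ^ (κ - 1) := by
                conv_lhs => rw [show κ = 1 + (κ - 1) by ring,
                  ENNReal.rpow_add_of_nonneg _ _ (by norm_num) hκ1.le, ENNReal.rpow_one]
              rw [ENNReal.mul_rpow_of_nonneg _ _ hκ1.le, this]; ring
    _ = _ := lintegral_const_mul _ (hf.pow_const κ)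

section variableExponent
variable {n : ℕ}

/-- The normalised Lebesgue measure on a ball. -/
def ballMeasure (z : Rn n) (ρ : ℝ) : Measure (Rn n) :=
  (volume (Metric.ball z ρ))⁻¹ • volume.restrict (Metric.ball z ρ)

lemma ballMeasure_univ_le (z : Rn n) (ρ : ℝ) : ballMeasure z ρ univ ≤ 1 := by
  simp only [ballMeasure, Measure.smul_apply, Measure.restrict_apply MeasurableSet.univ,
    univ_inter, smul_eq_mul]
  exact ENNReal.inv_mul_le_one _

lemma lintegral_ballMeasure (z : Rn n) (ρ : ℝ) (f : Rn n → ℝ≥0∞) :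
    ∫⁻ y, f y ∂(ballMeasure z ρ) =
      (volume (Metric.ball z ρ))⁻¹ * ∫⁻ y in Metric.ball z ρ, f y := by
  rw [ballMeasure, lintegral_smul_measure, smul_eq_mul]

lemma ae_ballMeasure {z : Rn n} {ρ : ℝ} {P : Rn n → Prop} (h : ∀ y ∈ Metric.ball z ρ, P y) :
    ∀ᵐ y ∂(ballMeasure z ρ), P y :=
  Measure.ae_smul_measure (ae_restrict_of_forall_mem measurableSet_ball h) _

lemma exists_inv_volume_ball_le (n : ℕ) : ∃ W : ℝ, 1 ≤ W ∧ ∀ (z : Rn n) (ρ : ℝ), 0 < ρ →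
    (volume (Metric.ball z ρ))⁻¹ ≤
      ENNReal.ofReal (W * Real.exp (n * Real.log (Real.exp 1 + 1 / (2 * ρ)))) := by
  set ω := volume (Metric.ball (0 : Rn n) 1) with hω
  have hω0 : 0 < ω.toReal :=
    ENNReal.toReal_pos (volume_ball_ne_zero _ one_pos) (volume_ball_ne_top _ _)
  refine ⟨max 1 (2 ^ n / ω.toReal), le_max_left _ _, fun z ρ hρ => ?_⟩
  have hv : volume (Metric.ball z ρ) = ENNReal.ofReal (ρ ^ n * ω.toReal) := by
    have := Measure.addHaar_ball_of_pos (volume : Measure (Rn n)) z hρ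
    rw [ENNReal.ofReal_mul (by positivity), ENNReal.ofReal_toReal (volume_ball_ne_top _ _)]
    simpa using this
  have hpos : 0 < Real.exp 1 + 1 / (2 * ρ) := by positivity
  rw [hv, ← ENNReal.ofReal_inv_of_pos (by positivity)]
  apply ENNReal.ofReal_le_ofReal
  rw [Real.exp_nat_mul, Real.exp_log hpos]
  calc (ρ ^ n * ω.toReal)⁻¹ = 2 ^ n / ω.toReal * (1 / (2 * ρ)) ^ n := by
        rw [div_pow, mul_pow, one_pow]; field_simp
    _ ≤ max 1 (2 ^ n / ω.toReal) * (Real.exp 1 + 1 / (2 * ρ)) ^ n := by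
        gcongr
        · exact le_max_right _ _
        · linarith [Real.exp_pos 1]

lemma one_le_log_exp_one_add {r : ℝ} (hr : 0 ≤ r) : 1 ≤ Real.log (Real.exp 1 + r) := by
  rw [Real.le_log_iff_exp_le (by positivity)]; linarith

/-- Local log-Hölder continuity controls averages of functions with values in `{0} ∪ [1, ∞]`. -/
lemma exists_rpow_average_le_of_one_le {q : Rn n → ℝ} {Q C₁ : ℝ}
    (hC₁ : 0 < C₁) (h1 : ∀ x, 1 ≤ q x) (hQ : ∀ x, q x ≤ Q)
    (hlog : ∀ x y, x ≠ y →
      |1 / q x - 1 / q y| ≤ C₁ / Real.log (Real.exp 1 + 1 / ‖x - y‖)) :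
    ∃ K : ℝ≥0∞, K ≠ ⊤ ∧ ∀ f : Rn n → ℝ≥0∞, Measurable f → (∀ y, f y = 0 ∨ 1 ≤ f y) →
      ∫⁻ y, f y ^ q y ≤ 1 → ∀ (x z : Rn n) (ρ : ℝ), x ∈ Metric.ball z ρ →
      (∫⁻ y, f y ∂(ballMeasure z ρ)) ^ q x ≤ K * ∫⁻ y, f y ^ q y ∂(ballMeasure z ρ) := by
  obtain ⟨W, hW1, hW⟩ := exists_inv_volume_ball_le n
  have hQ1 : 1 ≤ Q := (h1 0).trans (hQ 0)
  refine ⟨ENNReal.ofReal (W ^ (Q * C₁) * Real.exp (n * (Q * C₁))), ENNReal.ofReal_ne_top,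
    fun f hf hf01 hint x z ρ hx => ?_⟩
  have hρ := Metric.pos_of_mem_ball hx
  set L := Real.log (Real.exp 1 + 1 / (2 * ρ)) with hL
  have hL1 : 1 ≤ L := one_le_log_exp_one_add (by positivity)
  have hL0 : 0 < L := by linarith
  have hqx : 0 < q x := by linarith [h1 x]
  set m := min 1 (1 / q x + C₁ / L) with hm
  have hm0 : 0 < m := lt_min one_pos (by positivity)
  have hs1 : 1 ≤ m⁻¹ := (one_le_inv₀ hm0).2 (min_le_left _ _)
  have hsq : ∀ y ∈ Metric.ball z ρ, m⁻¹ ≤ q y := by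
    intro y hy
    have hqy : 0 < q y := by linarith [h1 y]
    rw [inv_le_comm₀ hm0 hqy, ← one_div]
    refine le_min ((div_le_one hqy).2 (h1 y)) ?_
    rcases eq_or_ne x y with rfl | hxy
    · linarith [show 0 ≤ C₁ / L by positivity]
    · have hd : ‖x - y‖ < 2 * ρ := by
        rw [← dist_eq_norm]
        calc dist x y ≤ dist x z + dist y z := dist_triangle_right _ _ _
          _ < 2 * ρ := by rw [Metric.mem_ball] at hx hy; linarith
      have hpos : 0 < ‖x - y‖ := norm_pos_iff.2 (sub_ne_zero.2 hxy)
      have hlog1 : L ≤ Real.log (Real.exp 1 + 1 / ‖x - y‖) := by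
        apply Real.log_le_log (by positivity)
        gcongr
      have h2 := hlog x y hxy
      have h3 : C₁ / Real.log (Real.exp 1 + 1 / ‖x - y‖) ≤ C₁ / L := by gcongr
      linarith [(abs_le.1 h2).1]
  set a := ∫⁻ y, f y ∂(ballMeasure z ρ) with ha
  set B := ∫⁻ y, f y ^ q y ∂(ballMeasure z ρ) with hB
  have haB : a ^ m⁻¹ ≤ B := by
    refine (rpow_lintegral_le_lintegral_rpow (ballMeasure_univ_le z ρ) hf.aemeasurable hs1).trans
      (lintegral_mono_ae (ae_ballMeasure fun y hy => ?_))
    rcases hf01 y with h0 | h0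
    · rw [h0, ENNReal.zero_rpow_of_pos (by positivity)]; exact zero_le
    · exact ENNReal.rpow_le_rpow_of_exponent_le h0 (hsq y hy)
  have hBle : B ≤ ENNReal.ofReal (W * Real.exp (n * L)) := by
    rw [hB, lintegral_ballMeasure]
    calc _ ≤ (volume (Metric.ball z ρ))⁻¹ * 1 := by
          gcongr; exact (setLIntegral_le_lintegral _ _).trans hint
      _ ≤ _ := by rw [mul_one]; exact hW z ρ hρ
  have hτ0 : 0 ≤ q x * m - 1 := by
    have : 1 / q x ≤ m := le_min ((div_le_one hqx).2 (h1 x))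
      (by linarith [show 0 ≤ C₁ / L by positivity])
    have := mul_le_mul_of_nonneg_left this hqx.le
    rw [mul_one_div_cancel hqx.ne'] at this; linarith
  have hτ1 : q x * m - 1 ≤ Q * C₁ / L := by
    have h2 : q x * m ≤ q x * (1 / q x + C₁ / L) := by gcongr; exact min_le_right _ _
    rw [mul_add, mul_one_div_cancel hqx.ne'] at h2
    have h3 : q x * (C₁ / L) ≤ Q * (C₁ / L) := by gcongr; exact hQ x
    rw [mul_div_assoc]; linarith
  have hWe : 1 ≤ W * Real.exp (n * L) := by
    have : 1 ≤ Real.exp (n * L) := Real.one_le_exp (by positivity)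
    nlinarith
  have hBτ : B ^ (q x * m - 1) ≤ ENNReal.ofReal (W ^ (Q * C₁) * Real.exp (n * (Q * C₁))) := by
    calc B ^ (q x * m - 1) ≤ ENNReal.ofReal (W * Real.exp (n * L)) ^ (q x * m - 1) :=
          ENNReal.rpow_le_rpow hBle hτ0
      _ ≤ ENNReal.ofReal (W * Real.exp (n * L)) ^ (Q * C₁ / L) :=
          ENNReal.rpow_le_rpow_of_exponent_le (by simpa using hWe) hτ1
      _ = ENNReal.ofReal ((W * Real.exp (n * L)) ^ (Q * C₁ / L)) :=
          ENNReal.ofReal_rpow_of_nonneg (by positivity) (by positivity)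
      _ ≤ _ := by
          apply ENNReal.ofReal_le_ofReal
          rw [Real.mul_rpow (by positivity) (by positivity), ← Real.exp_mul]
          refine mul_le_mul (Real.rpow_le_rpow_of_exponent_le hW1
            (div_le_self (by positivity) hL1)) (Real.exp_le_exp.2 (le_of_eq ?_))
            (by positivity) (by positivity)
          field_simp
  calc a ^ q x = (a ^ m⁻¹) ^ (q x * m) := by
        rw [← ENNReal.rpow_mul]; congr 1; field_simp
    _ ≤ B ^ (q x * m) := ENNReal.rpow_le_rpow haB (by positivity)
    _ = B ^ (q x * m - 1) * B := by
        conv_lhs => rw [show q x * m = (q x * m - 1) + 1 by ring,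
          ENNReal.rpow_add_of_nonneg _ _ hτ0 zero_le_one, ENNReal.rpow_one]
    _ ≤ _ := by gcongr

/-- Comparison of two powers of a number in `[0, 1]`, up to a decaying error. -/
lemma rpow_le_mul_rpow_add {a : ℝ≥0∞} (ha : a ≤ 1) {u v D : ℝ} (hu : 1 ≤ u) (hv : 1 ≤ v)
    (x : Rn n) (huv : |u - v| ≤ D / Real.log (Real.exp 1 + ‖x‖)) :
    a ^ u ≤ ENNReal.ofReal (Real.exp (n * D)) * a ^ v +
      ENNReal.ofReal ((1 + ‖x‖) ^ (-(n:ℝ))) := by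
  have hat : a ≠ ⊤ := (ha.trans_lt ENNReal.one_lt_top).ne
  obtain ⟨r, hr0, rfl⟩ : ∃ r : ℝ, 0 ≤ r ∧ a = ENNReal.ofReal r :=
    ⟨a.toReal, ENNReal.toReal_nonneg, (ENNReal.ofReal_toReal hat).symm⟩
  have hr1 : r ≤ 1 := by simpa using ha
  rw [ENNReal.ofReal_rpow_of_nonneg hr0 (by linarith),
    ENNReal.ofReal_rpow_of_nonneg hr0 (by linarith), ← ENNReal.ofReal_mul (by positivity),
    ← ENNReal.ofReal_add (by positivity) (by positivity)]
  apply ENNReal.ofReal_le_ofReal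
  set H := Real.exp 1 + ‖x‖ with hH
  have hHlog : 1 ≤ Real.log H := one_le_log_exp_one_add (norm_nonneg x)
  have hH0 : 0 < H := by positivity
  have hHle : H ^ (-(n:ℝ)) ≤ (1 + ‖x‖) ^ (-(n:ℝ)) := by
    apply Real.rpow_le_rpow_of_nonpos (by positivity) _ (by simp)
    rw [hH]; linarith [Real.add_one_le_exp (1:ℝ)]
  rcases le_or_gt r (H ^ (-(n:ℝ))) with h | h
  · have : r ^ u ≤ r := by
      simpa using Real.rpow_le_rpow_of_exponent_ge' hr0 hr1 zero_le_one hu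
    have h0 : 0 ≤ Real.exp (n * D) * r ^ v := by positivity
    linarith
  · have hr : 0 < r := lt_trans (by positivity) h
    have h1 : r ^ (u - v) ≤ Real.exp (n * D) := by
      have h2 : -Real.log r ≤ n * Real.log H := by
        have := Real.log_le_log (by positivity) h.le
        rw [Real.log_rpow hH0] at this; linarith
      have hlr : Real.log r ≤ 0 := Real.log_nonpos hr0 hr1
      rw [Real.rpow_def_of_pos hr, Real.exp_le_exp]
      calc Real.log r * (u - v) ≤ |Real.log r * (u - v)| := le_abs_self _
        _ = (-Real.log r) * |u - v| := by rw [abs_mul, abs_of_nonpos hlr]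
        _ ≤ (n * Real.log H) * (D / Real.log H) := by gcongr
        _ = n * D := by field_simp
    have h3 : r ^ u = r ^ (u - v) * r ^ v := by rw [← Real.rpow_add hr]; ring_nf
    have h4 : 0 ≤ (1 + ‖x‖) ^ (-(n:ℝ)) := by positivity
    rw [h3]
    have := mul_le_mul_of_nonneg_right h1 (Real.rpow_nonneg hr0 v)
    linarith

/-- Log-Hölder decay controls averages of functions with values in `[0, 1]`. -/
lemma rpow_average_le_of_le_one {q : Rn n → ℝ} (hq : Measurable q) {D qi : ℝ}
    (h1 : ∀ x, 1 ≤ q x) (hqi : 1 ≤ qi)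
    (hlog : ∀ x, |q x - qi| ≤ D / Real.log (Real.exp 1 + ‖x‖))
    {f : Rn n → ℝ≥0∞} (hf : Measurable f) (hf1 : ∀ y, f y ≤ 1) (x z : Rn n) (ρ : ℝ) :
    (∫⁻ y, f y ∂(ballMeasure z ρ)) ^ q x ≤
      ENNReal.ofReal (Real.exp (n * D)) * (ENNReal.ofReal (Real.exp (n * D)) *
        (∫⁻ y, f y ^ q y ∂(ballMeasure z ρ)) +
        ∫⁻ y, ENNReal.ofReal ((1 + ‖y‖) ^ (-(n:ℝ))) ∂(ballMeasure z ρ)) +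
      ENNReal.ofReal ((1 + ‖x‖) ^ (-(n:ℝ))) := by
  have ha : ∫⁻ y, f y ∂(ballMeasure z ρ) ≤ 1 :=
    calc ∫⁻ y, f y ∂(ballMeasure z ρ) ≤ ∫⁻ _, 1 ∂(ballMeasure z ρ) := lintegral_mono hf1
      _ ≤ 1 := by simpa using ballMeasure_univ_le z ρ
  refine (rpow_le_mul_rpow_add ha (h1 x) hqi x (hlog x)).trans ?_
  gcongr
  refine (rpow_lintegral_le_lintegral_rpow (ballMeasure_univ_le z ρ) hf.aemeasurable hqi).trans ?_
  rw [← lintegral_const_mul _ (hf.pow hq), ← lintegral_add_left ((hf.pow hq).const_mul _)]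
  exact lintegral_mono fun y => rpow_le_mul_rpow_add (hf1 y) hqi (h1 y) y
    (by rw [abs_sub_comm]; exact hlog y)
end variableExponent

/-- The variable exponent maximal theorem in modular form, for the exponent `κ q(·)` with
`q ≥ 1` log-Hölder continuous and `κ > 1`. -/
theorem exists_lintegral_maxFn_rpow_variable_le {n : ℕ} (hn : 1 ≤ n) {q : Rn n → ℝ}
    (hq : Measurable q) {Q C₁ D qi κ : ℝ} (hC₁ : 0 < C₁) (h1 : ∀ x, 1 ≤ q x) (hQ : ∀ x, q x ≤ Q)
    (hlog : ∀ x y, x ≠ y →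
      |1 / q x - 1 / q y| ≤ C₁ / Real.log (Real.exp 1 + 1 / ‖x - y‖))
    (hqi : 1 ≤ qi) (hdecay : ∀ x, |q x - qi| ≤ D / Real.log (Real.exp 1 + ‖x‖))
    (hκ : 1 < κ) :
    ∃ K : ℝ≥0∞, K ≠ ⊤ ∧ ∀ f : Rn n → ℝ≥0∞, Measurable f →
      ∫⁻ x, f x ^ (q x * κ) ≤ 1 → ∫⁻ x, maxFn f x ^ (q x * κ) ≤ K := by
  have hκ0 : 0 < κ := by linarith
  have hQ0 : 0 < Q := by linarith [h1 0, hQ 0]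
  obtain ⟨K₁, hK₁, hlarge⟩ := exists_rpow_average_le_of_one_le hC₁ h1 hQ hlog
  obtain ⟨C, hC, hmax⟩ := lintegral_maxFn_rpow_le hn hκ
  set k : ℝ≥0∞ := ENNReal.ofReal (Real.exp (n * D)) with hk
  have hkt : k ≠ ⊤ := ENNReal.ofReal_ne_top
  set h : Rn n → ℝ≥0∞ := fun y => ENNReal.ofReal ((1 + ‖y‖) ^ (-(n:ℝ))) with hh
  have hhm : Measurable h := by fun_prop
  have hhint : ∫⁻ y, h y ^ κ ≠ ⊤ := by
    have hfin := finite_integral_one_add_norm (μ := (volume : Measure (Rn n))) (r := n * κ)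
      (by
        have : (1:ℝ) ≤ n := by exact_mod_cast hn
        simp only [finrank_euclideanSpace, Fintype.card_fin]
        nlinarith)
    refine ne_of_lt (lt_of_le_of_lt (lintegral_mono fun y => le_of_eq ?_) hfin)
    rw [hh, ENNReal.ofReal_rpow_of_nonneg (by positivity) hκ0.le, ← Real.rpow_mul (by positivity)]
    ring_nf
  set A : ℝ≥0∞ := 2 ^ Q * (K₁ + k * k) with hA
  have h2Q : (2 : ℝ≥0∞) ^ Q ≠ ⊤ := by finiteness
  have hAt : A ≠ ⊤ := by finiteness
  refine ⟨2 ^ (κ - 1) * (A ^ κ * C) + 2 ^ (κ - 1) * (2 ^ (κ - 1) *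
    (((2 ^ Q * k) ^ κ * (C * ∫⁻ y, h y ^ κ)) + (2 ^ Q) ^ κ * ∫⁻ y, h y ^ κ)), by finiteness,
    fun f hf hint => ?_⟩
  set F : Rn n → ℝ≥0∞ := fun y => f y ^ q y with hF
  have hFm : Measurable F := hf.pow hq
  have hFκ : ∀ y, F y ^ κ = f y ^ (q y * κ) := fun y => by rw [hF, ENNReal.rpow_mul]
  have hms : MeasurableSet {y | 1 ≤ f y} := measurableSet_le measurable_const hf
  set f₁ := {y | 1 ≤ f y}.indicator f with hf₁
  set f₂ := {y | 1 ≤ f y}ᶜ.indicator f with hf₂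
  have hf₁m : Measurable f₁ := hf.indicator hms
  have hf₂m : Measurable f₂ := hf.indicator hms.compl
  have hq0 : ∀ y, 0 < q y := fun y => by linarith [h1 y]
  have hf₁F : ∀ y, f₁ y ^ q y ≤ F y := fun y =>
    ENNReal.rpow_le_rpow (indicator_le_self _ _ y) (hq0 y).le
  have hf₂F : ∀ y, f₂ y ^ q y ≤ F y := fun y =>
    ENNReal.rpow_le_rpow (indicator_le_self _ _ y) (hq0 y).le
  have hf₁int : ∫⁻ y, f₁ y ^ q y ≤ 1 := by
    refine (lintegral_mono fun y => ?_).trans hint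
    by_cases hy : 1 ≤ f y
    · simp only [hf₁, indicator, mem_ofPred_eq, hy, if_true]
      refine ENNReal.rpow_le_rpow_of_exponent_le hy ?_
      nlinarith [hq0 y]
    · simp only [hf₁, indicator, mem_ofPred_eq, hy, if_false]
      rw [ENNReal.zero_rpow_of_pos (hq0 y)]; exact zero_le
  have hf₁1 : ∀ y, f₁ y = 0 ∨ 1 ≤ f₁ y := fun y => by
    by_cases hy : 1 ≤ f y
    · right; simp [hf₁, hy]
    · left; simp [hf₁, hy]
  have hf₂1 : ∀ y, f₂ y ≤ 1 := fun y => by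
    by_cases hy : 1 ≤ f y
    · simp [hf₂, hy]
    · simpa [hf₂, indicator, hy] using (not_le.1 hy).le
  have hpt : ∀ x, maxFn f x ^ q x ≤
      A * maxFn F x + (2 ^ Q * k * maxFn h x + 2 ^ Q * h x) := by
    intro x
    refine (ENNReal.le_rpow_inv_iff (hq0 x)).1 ?_
    refine maxFn_le fun z ρ hρ hx => ?_
    rw [ENNReal.le_rpow_inv_iff (hq0 x), ← lintegral_ballMeasure]
    have hsum : ∫⁻ y, f y ∂(ballMeasure z ρ) =
        ∫⁻ y, f₁ y ∂(ballMeasure z ρ) + ∫⁻ y, f₂ y ∂(ballMeasure z ρ) := by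
      rw [← lintegral_add_left hf₁m]
      congr 1; ext y
      exact (congrFun (indicator_self_add_compl {y | 1 ≤ f y} f) y).symm
    have havg : ∀ g : Rn n → ℝ≥0∞, ∫⁻ y, g y ∂(ballMeasure z ρ) ≤ maxFn g x := fun g => by
      rw [lintegral_ballMeasure]; exact average_le_maxFn g hx
    have e1 := hlarge f₁ hf₁m hf₁1 hf₁int x z ρ hx
    have e2 := rpow_average_le_of_le_one hq h1 hqi hdecay hf₂m hf₂1 x z ρ
    set a₁ := ∫⁻ y, f₁ y ∂(ballMeasure z ρ)
    set a₂ := ∫⁻ y, f₂ y ∂(ballMeasure z ρ)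
    have e1' : a₁ ^ q x ≤ K₁ * maxFn F x :=
      e1.trans (by gcongr; exact (lintegral_mono hf₁F).trans (havg F))
    have e2' : a₂ ^ q x ≤ k * (k * maxFn F x + maxFn h x) + h x :=
      e2.trans (by gcongr; exacts [(lintegral_mono hf₂F).trans (havg F), havg h])
    have e3 : (a₁ + a₂) ^ q x ≤ 2 ^ Q * (a₁ ^ q x + a₂ ^ q x) := by
      refine (ENNReal.rpow_add_le_mul_rpow_add_rpow a₁ a₂ (h1 x)).trans ?_
      gcongr
      · norm_num
      · linarith [hQ x]
    calc (∫⁻ y, f y ∂(ballMeasure z ρ)) ^ q x = (a₁ + a₂) ^ q x := by rw [hsum]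
      _ ≤ 2 ^ Q * (K₁ * maxFn F x + (k * (k * maxFn F x + maxFn h x) + h x)) := by
        refine e3.trans ?_; gcongr
      _ = _ := by rw [hA]; ring
  have hMF := hmax F hFm
  have hMh := hmax h hhm
  have mMF := measurable_maxFn F
  have mMh := measurable_maxFn h
  have hMF1 : ∫⁻ x, maxFn F x ^ κ ≤ C := by
    refine hMF.trans ?_
    simp_rw [hFκ]
    calc C * ∫⁻ x, f x ^ (q x * κ) ≤ C * 1 := by gcongr
      _ = C := mul_one C
  calc ∫⁻ x, maxFn f x ^ (q x * κ)
      ≤ ∫⁻ x, (2 ^ (κ - 1) * (A ^ κ * maxFn F x ^ κ) + 2 ^ (κ - 1) * (2 ^ (κ - 1) *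
          (((2 ^ Q * k) ^ κ * maxFn h x ^ κ) + (2 ^ Q) ^ κ * h x ^ κ))) := by
        refine lintegral_mono fun x => ?_
        simp only
        rw [ENNReal.rpow_mul]
        refine (ENNReal.rpow_le_rpow (hpt x) hκ0.le).trans ?_
        refine (ENNReal.rpow_add_le_mul_rpow_add_rpow _ _ hκ.le).trans ?_
        rw [mul_add, ENNReal.mul_rpow_of_nonneg _ _ hκ0.le]
        gcongr
        refine (ENNReal.rpow_add_le_mul_rpow_add_rpow _ _ hκ.le).trans ?_
        rw [ENNReal.mul_rpow_of_nonneg _ _ hκ0.le, ENNReal.mul_rpow_of_nonneg _ (h x) hκ0.le]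
    _ = 2 ^ (κ - 1) * (A ^ κ * ∫⁻ x, maxFn F x ^ κ) + 2 ^ (κ - 1) * (2 ^ (κ - 1) *
          (((2 ^ Q * k) ^ κ * ∫⁻ x, maxFn h x ^ κ) + (2 ^ Q) ^ κ * ∫⁻ x, h x ^ κ)) := by
        rw [lintegral_add_left (by fun_prop), lintegral_const_mul _ (by fun_prop),
          lintegral_const_mul _ (by fun_prop), lintegral_const_mul _ (by fun_prop),
          lintegral_const_mul _ (by fun_prop), lintegral_add_left (by fun_prop),
          lintegral_const_mul _ (by fun_prop), lintegral_const_mul _ (by fun_prop)]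
    _ ≤ _ := by gcongr

/-- Almost everywhere bounds of a log-Hölder exponent hold everywhere. -/
lemma IsPLog.mem_Icc_of_ae {n : ℕ} {p : Rn n → ℝ} (hp : IsPLog univ p) {l u : ℝ}
    (hl : ∀ᵐ x, l ≤ p x) (hu : ∀ᵐ x, p x ≤ u) (x : Rn n) : l ≤ p x ∧ p x ≤ u := by
  obtain ⟨-, h1, C₁, hC₁, -, -, -, hlog, -⟩ := hp
  have hpos : ∀ x, 0 < p x := fun x => by linarith [h1 x (mem_univ x)]
  have hcont : Continuous fun x => 1 / p x := by
    rw [continuous_iff_continuousAt]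
    intro x
    rw [Metric.continuousAt_iff]
    intro ε hε
    refine ⟨Real.exp (-(C₁ / ε)), Real.exp_pos _, fun {y} hy => ?_⟩
    rcases eq_or_ne y x with rfl | hyx
    · simpa using hε
    rw [Real.dist_eq]
    refine (hlog y (mem_univ y) x (mem_univ x) hyx).trans_lt ?_
    have hd : 0 < ‖y - x‖ := norm_pos_iff.2 (sub_ne_zero.2 hyx)
    rw [dist_eq_norm] at hy
    have h2 : C₁ / ε < Real.log (Real.exp 1 + 1 / ‖y - x‖) := by
      rw [Real.lt_log_iff_exp_lt (by positivity)]
      have : Real.exp (C₁ / ε) < 1 / ‖y - x‖ := by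
        rw [lt_one_div (Real.exp_pos _) hd, one_div, ← Real.exp_neg]; exact hy
      linarith [Real.exp_pos 1]
    have h3 : 0 < C₁ / ε := by positivity
    rw [div_lt_iff₀ hε] at h2
    rw [div_lt_iff₀ (by nlinarith)]
    linarith
  have hcont' : Continuous p := by
    have : p = fun x => (1 / p x)⁻¹ := by ext x; simp
    rw [this]
    exact hcont.inv₀ fun x => (one_div_pos.2 (hpos x)).ne'
  have hd1 := (Measure.dense_of_ae hl).closure_eq
  have hd2 := (Measure.dense_of_ae hu).closure_eq
  rw [(isClosed_le continuous_const hcont').closure_eq] at hd1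
  rw [(isClosed_le hcont' continuous_const).closure_eq] at hd2
  exact ⟨hd1.ge (mem_univ x), hd2.ge (mem_univ x)⟩

/-- The maximal theorem in modular form for a rescaled exponent `p(·) / c` with `p ∈ P^log`. -/
theorem IsPLog.exists_lintegral_maxFn_rpow_le {n : ℕ} (hn : 1 ≤ n) {p : Rn n → ℝ}
    (hp : IsPLog univ p) {c l u : ℝ} (hc : 0 < c) (hcl : c < l)
    (hl : ∀ᵐ x, l ≤ p x) (hu : ∀ᵐ x, p x ≤ u) :
    ∃ K : ℝ≥0∞, K ≠ ⊤ ∧ ∀ f : Rn n → ℝ≥0∞, Measurable f →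
      ∫⁻ x, f x ^ (p x / c) ≤ 1 → ∫⁻ x, maxFn f x ^ (p x / c) ≤ K := by
  have : Nonempty (Fin n) := ⟨⟨0, hn⟩⟩
  have hl0 : 0 < l := by linarith
  have hlu := hp.mem_Icc_of_ae hl hu
  obtain ⟨hpm, -, C₁, hC₁, C₂, hC₂, pinf, hlog, hdec⟩ := hp
  have hpos : ∀ x, 0 < p x := fun x => by linarith [(hlu x).1]
  have hu0 : 0 < u := (hpos 0).trans_le (hlu 0).2
  have hfar : ∀ ε : ℝ, 0 < ε → ∃ x : Rn n, |1 / p x - 1 / pinf| ≤ ε := by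
    intro ε hε
    obtain ⟨x, hx⟩ := NormedSpace.exists_lt_norm ℝ (Rn n) (Real.exp (C₂ / ε))
    refine ⟨x, (hdec x (mem_univ x)).trans ?_⟩
    have h2 : C₂ / ε ≤ Real.log (Real.exp 1 + ‖x‖) := by
      rw [Real.le_log_iff_exp_le (by positivity)]
      linarith [Real.exp_pos 1]
    rw [div_le_iff₀ (by linarith [one_le_log_exp_one_add (norm_nonneg x)])]
    rw [div_le_iff₀ hε] at h2
    linarith
  have hinf1 : 1 / u ≤ 1 / pinf := by
    refine le_of_forall_pos_le_add fun ε hε => ?_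
    obtain ⟨x, hx⟩ := hfar ε hε
    have : 1 / u ≤ 1 / p x := one_div_le_one_div_of_le (hpos x) (hlu x).2
    linarith [(abs_le.1 hx).2]
  have hinf2 : 1 / pinf ≤ 1 / l := by
    refine le_of_forall_pos_le_add fun ε hε => ?_
    obtain ⟨x, hx⟩ := hfar ε hε
    have : 1 / p x ≤ 1 / l := one_div_le_one_div_of_le hl0 (hlu x).1
    linarith [(abs_le.1 hx).1]
  have hpi0 : 0 < pinf := one_div_pos.1 (lt_of_lt_of_le (by positivity) hinf1)
  have hpil : l ≤ pinf := (one_div_le_one_div hpi0 hl0).1 hinf2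
  have hpiu : pinf ≤ u := (one_div_le_one_div hu0 hpi0).1 hinf1
  have hlogpos : ∀ r : ℝ, 0 ≤ r → 0 < Real.log (Real.exp 1 + r) := fun r hr => by
    linarith [one_le_log_exp_one_add hr]
  obtain ⟨K, hK, h⟩ := exists_lintegral_maxFn_rpow_variable_le hn (q := fun x => p x / l)
    (Q := u / l) (C₁ := l * C₁) (D := u * u / l * C₂) (qi := pinf / l) (κ := l / c)
    (hpm.div_const l) (by positivity) (fun x => (one_le_div hl0).2 (hlu x).1)
    (fun x => by have := (hlu x).2; gcongr)
    (fun x y hxy => by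
      have h2 := hlog x (mem_univ x) y (mem_univ y) hxy
      have h3 : 1 / (p x / l) - 1 / (p y / l) = l * (1 / p x - 1 / p y) := by
        have := (hpos x).ne'; have := (hpos y).ne'; field_simp
      rw [h3, abs_mul, abs_of_pos hl0, mul_div_assoc]
      gcongr)
    ((one_le_div hl0).2 hpil)
    (fun x => by
      have h2 := hdec x (mem_univ x)
      have h3 : p x / l - pinf / l = -(p x * pinf / l * (1 / p x - 1 / pinf)) := by
        have := (hpos x).ne'; have := hpi0.ne'; field_simp; ring
      have := hpos x
      have h4 := (hlu x).2
      rw [h3, abs_neg, abs_mul, abs_of_pos (show 0 < p x * pinf / l by positivity),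
        mul_div_assoc (u * u / l)]
      gcongr)
    ((one_lt_div hc).2 hcl)
  have e : ∀ x, p x / l * (l / c) = p x / c := fun x => by field_simp
  simp only [e] at h
  exact ⟨K, hK, h⟩

/-- A nonnegative convolution kernel which is dominated by the maximal function. -/
def IsMaxKernel {n : ℕ} (k : Rn n → ℝ) : Prop :=
  (∀ x, 0 ≤ k x) ∧ ∀ f : Rn n → ℝ≥0∞, Measurable f → ∀ x,
    ∫⁻ y, ENNReal.ofReal (k (x - y)) * f y ≤ maxFn f x

/-- The cosine transform, the real part of the inverse Fourier transform of a real function. -/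
def cosTransform {n : ℕ} (ψ : Rn n → ℝ) (x : Rn n) : ℝ :=
  ∫ ξ, Real.cos (2 * Real.pi * inner ℝ ξ x) * ψ ξ

section kernels
variable {n : ℕ}

lemma re_fourierInv_ofReal {ψ : Rn n → ℝ} (hψ : Integrable ψ) (x : Rn n) :
    (𝓕⁻ (fun ξ => (ψ ξ : ℂ)) x).re = cosTransform ψ x := by
  rw [Real.fourierInv_eq', cosTransform]
  have hint : Integrable (fun ξ : Rn n =>
      Complex.exp (↑(2 * Real.pi * inner ℝ ξ x) * Complex.I) • (ψ ξ : ℂ)) := by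
    refine (hψ.ofReal (𝕜 := ℂ)).bdd_mul (c := 1) (Continuous.aestronglyMeasurable (by fun_prop)) ?_
    filter_upwards with ξ
    rw [Complex.norm_exp_ofReal_mul_I]
  have h := integral_re hint
  simp only [RCLike.re_eq_complex_re] at h
  rw [← h]
  refine integral_congr_ae (Filter.Eventually.of_forall fun ξ => ?_)
  simp only [smul_eq_mul, Complex.re_mul_ofReal, Complex.exp_ofReal_mul_I_re]

lemma integrable_exp_neg_mul_norm_sq {s : ℝ} (hs : 0 < s) :
    Integrable fun ξ : Rn n => Real.exp (-s * ‖ξ‖ ^ 2) := by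
  by_contra h
  have h1 := GaussianFourier.integral_rexp_neg_mul_sq_norm (V := Rn n) hs
  rw [integral_undef h] at h1
  have : 0 < (Real.pi / s) ^ (Module.finrank ℝ (Rn n) / 2 : ℝ) := by positivity
  linarith

lemma cosTransform_gaussian {s : ℝ} (hs : 0 < s) (x : Rn n) :
    cosTransform (fun ξ : Rn n => Real.exp (-s * ‖ξ‖ ^ 2)) x =
      (Real.pi / s) ^ ((n : ℝ) / 2) * Real.exp (-(Real.pi ^ 2 / s) * ‖x‖ ^ 2) := by
  rw [← re_fourierInv_ofReal (integrable_exp_neg_mul_norm_sq hs), Real.fourierInv_eq_fourier_neg]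
  have h := fourier_gaussian_innerProductSpace (V := Rn n) (b := (s : ℂ)) (by simpa using hs) (-x)
  have h2 : (fun ξ : Rn n => ((Real.exp (-s * ‖ξ‖ ^ 2) : ℝ) : ℂ)) =
      fun v : Rn n => Complex.exp (-(s : ℂ) * ‖v‖ ^ 2) := by
    ext v; push_cast; rfl
  rw [h2, h]
  have h3 : ((Real.pi : ℂ) / s) ^ ((Module.finrank ℝ (Rn n) : ℂ) / 2) *
      Complex.exp (-(Real.pi : ℂ) ^ 2 * ‖-x‖ ^ 2 / s) =
      (((Real.pi / s) ^ ((n : ℝ) / 2) * Real.exp (-(Real.pi ^ 2 / s) * ‖x‖ ^ 2) : ℝ) : ℂ) := by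
    rw [Complex.ofReal_mul, Complex.ofReal_cpow (by positivity)]
    push_cast
    rw [norm_neg, finrank_euclideanSpace_fin]
    congr 2
    ring
  rw [h3, Complex.ofReal_re]

lemma integral_gaussian_kernel {s : ℝ} (hs : 0 < s) :
    ∫ x : Rn n, (Real.pi / s) ^ ((n : ℝ) / 2) * Real.exp (-(Real.pi ^ 2 / s) * ‖x‖ ^ 2) = 1 := by
  have hpi := Real.pi_pos
  rw [integral_const_mul, GaussianFourier.integral_rexp_neg_mul_sq_norm (by positivity),
    finrank_euclideanSpace_fin, ← Real.mul_rpow (by positivity) (by positivity)]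
  have : Real.pi / s * (Real.pi / (Real.pi ^ 2 / s)) = 1 := by field_simp
  rw [this, Real.one_rpow]

/-- Convolution with a radially decreasing kernel is controlled by the maximal function. -/
lemma lintegral_radial_mul_le_maxFn {k : Rn n → ℝ} (hk : Measurable k) (hk0 : ∀ x, 0 ≤ k x)
    (hball : ∀ t > 0, ∃ ρ : ℝ, {z | t < k z} = Metric.ball 0 ρ) {f : Rn n → ℝ≥0∞}
    (hf : Measurable f) (x : Rn n) :
    ∫⁻ y, ENNReal.ofReal (k (x - y)) * f y ≤ (∫⁻ y, ENNReal.ofReal (k y)) * maxFn f x := by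
  have hkx : Measurable fun y => k (x - y) := hk.comp (measurable_const.sub measurable_id)
  have hset : ∀ t > 0, ∃ ρ : ℝ, {y | t < k (x - y)} = Metric.ball x ρ := by
    intro t ht
    obtain ⟨ρ, hρ⟩ := hball t ht
    refine ⟨ρ, ?_⟩
    ext y
    have := Set.ext_iff.1 hρ (x - y)
    simp only [mem_ofPred_eq, mem_ball_zero_iff] at this
    rw [mem_ofPred_eq, this, mem_ball_iff_norm, norm_sub_rev]
  have h1 : ∫⁻ y, ENNReal.ofReal (k (x - y)) * f y =
      ∫⁻ y, ENNReal.ofReal (k (x - y)) ∂(volume.withDensity f) := by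
    rw [lintegral_withDensity_eq_lintegral_mul _ hf (by fun_prop)]
    simp only [Pi.mul_apply, mul_comm]
  have h2 : ∫⁻ y, ENNReal.ofReal (k y) = ∫⁻ y, ENNReal.ofReal (k (x - y)) :=
    (lintegral_sub_left_eq_self (μ := volume) (fun y => ENNReal.ofReal (k y)) x).symm
  rw [h1, h2, lintegral_eq_lintegral_meas_lt _ (Filter.Eventually.of_forall fun y => hk0 _)
    hkx.aemeasurable, lintegral_eq_lintegral_meas_lt _
    (Filter.Eventually.of_forall fun y => hk0 _) hkx.aemeasurable]
  have hmeas : Measurable fun t : ℝ => volume {y | t < k (x - y)} := by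
    refine Antitone.measurable fun a b hab => measure_mono fun y hy => ?_
    simp only [mem_ofPred_eq] at hy ⊢
    exact lt_of_le_of_lt hab hy
  rw [← lintegral_mul_const _ hmeas]
  refine setLIntegral_mono (hmeas.mul_const _) fun t ht => ?_
  obtain ⟨ρ, hρ⟩ := hset t ht
  simp only [hρ]
  rw [withDensity_apply _ Metric.isOpen_ball.measurableSet]
  rcases le_or_gt ρ 0 with h | h
  · simp [Metric.ball_eq_empty.2 h]
  · exact setLIntegral_ball_le_maxFn f (Metric.mem_ball_self h)

lemma isMaxKernel_gaussian {s : ℝ} (hs : 0 < s) :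
    IsMaxKernel (cosTransform (fun ξ : Rn n => Real.exp (-s * ‖ξ‖ ^ 2))) := by
  have hpi := Real.pi_pos
  have heq : cosTransform (fun ξ : Rn n => Real.exp (-s * ‖ξ‖ ^ 2)) = fun x =>
      (Real.pi / s) ^ ((n : ℝ) / 2) * Real.exp (-(Real.pi ^ 2 / s) * ‖x‖ ^ 2) :=
    funext fun x => cosTransform_gaussian hs x
  have h0 : ∀ x : Rn n, 0 ≤ (Real.pi / s) ^ ((n : ℝ) / 2) *
      Real.exp (-(Real.pi ^ 2 / s) * ‖x‖ ^ 2) := fun x => by positivity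
  rw [heq]
  refine ⟨h0, fun f hf x => ?_⟩
  have hI : ∫⁻ x : Rn n, ENNReal.ofReal ((Real.pi / s) ^ ((n : ℝ) / 2) *
      Real.exp (-(Real.pi ^ 2 / s) * ‖x‖ ^ 2)) = 1 := by
    rw [← ofReal_integral_eq_lintegral_ofReal
      ((integrable_exp_neg_mul_norm_sq (by positivity)).const_mul _)
      (Filter.Eventually.of_forall h0), integral_gaussian_kernel hs, ENNReal.ofReal_one]
  have key := lintegral_radial_mul_le_maxFn
    (k := fun x : Rn n => (Real.pi / s) ^ ((n : ℝ) / 2) *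
      Real.exp (-(Real.pi ^ 2 / s) * ‖x‖ ^ 2)) (by fun_prop) h0 ?_ hf x
  · rwa [hI, one_mul] at key
  intro t ht
  set c := (Real.pi / s) ^ ((n : ℝ) / 2) with hc
  have hc0 : 0 < c := by positivity
  set a := Real.pi ^ 2 / s with ha
  have ha0 : 0 < a := by positivity
  refine ⟨Real.sqrt (Real.log (c / t) / a), ?_⟩
  ext z
  rw [mem_ofPred_eq, mem_ball_zero_iff, Real.lt_sqrt (norm_nonneg z), lt_div_iff₀ ha0,
    Real.lt_log_iff_exp_lt (by positivity), lt_div_iff₀ ht, neg_mul, Real.exp_neg,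
    ← div_eq_mul_inv, lt_div_iff₀ (Real.exp_pos _), mul_comm (‖z‖ ^ 2) a, mul_comm t]

lemma IsMaxKernel.of_tendsto {k : ℕ → Rn n → ℝ} {k' : Rn n → ℝ} (hk : ∀ j, IsMaxKernel (k j))
    (hkm : ∀ j, Measurable (k j)) (h : ∀ x, Filter.Tendsto (fun j => k j x) Filter.atTop (nhds (k' x))) :
    IsMaxKernel k' := by
  refine ⟨fun x => ge_of_tendsto' (h x) fun j => (hk j).1 x, fun f hf x => ?_⟩
  have h1 : ∀ y, ENNReal.ofReal (k' (x - y)) * f y ≤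
      Filter.liminf (fun j => ENNReal.ofReal (k j (x - y)) * f y) Filter.atTop := by
    intro y
    have h2 : Filter.Tendsto (fun j => ENNReal.ofReal (k j (x - y))) Filter.atTop
      (nhds (ENNReal.ofReal (k' (x - y)))) := ENNReal.tendsto_ofReal (h _)
    rcases eq_or_ne (ENNReal.ofReal (k' (x - y))) 0 with h0 | h0
    · simp [h0]
    · exact (ENNReal.Tendsto.mul_const h2 (Or.inl h0)).liminf_eq.ge
  calc ∫⁻ y, ENNReal.ofReal (k' (x - y)) * f y
      ≤ ∫⁻ y, Filter.liminf (fun j => ENNReal.ofReal (k j (x - y)) * f y) Filter.atTop :=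
        lintegral_mono h1
    _ ≤ Filter.liminf (fun j => ∫⁻ y, ENNReal.ofReal (k j (x - y)) * f y) Filter.atTop :=
        lintegral_liminf_le fun j => by have := hkm j; fun_prop
    _ ≤ Filter.liminf (fun _ : ℕ => maxFn f x) Filter.atTop :=
        Filter.liminf_le_liminf (Filter.Eventually.of_forall fun j => (hk j).2 f hf x)
    _ = maxFn f x := Filter.liminf_const _

end kernels

open scoped NNReal in
/-- `φ` is, on `[0,∞)`, the Laplace transform of a finite measure on `[0,∞)`. -/
def IsLaplace (φ : ℝ → ℝ) : Prop :=
  ∃ μ : Measure ℝ≥0, IsFiniteMeasure μ ∧ ∀ l : ℝ, 0 ≤ l → 0 ≤ φ l ∧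
    ENNReal.ofReal (φ l) = ∫⁻ s, ENNReal.ofReal (Real.exp (-(s * l))) ∂μ

open scoped NNReal in
lemma isLaplace_const {c : ℝ} (hc : 0 ≤ c) : IsLaplace fun _ => c := by
  refine ⟨ENNReal.ofReal c • Measure.dirac 0, Measure.smul_finite _ ENNReal.ofReal_ne_top, fun l _ => ⟨hc, ?_⟩⟩
  rw [lintegral_smul_measure, lintegral_dirac' _ (by fun_prop)]
  simp

lemma IsLaplace.add {φ χ : ℝ → ℝ} (h : IsLaplace φ) (h' : IsLaplace χ) :
    IsLaplace fun l => φ l + χ l := by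
  obtain ⟨μ, _, hμ⟩ := h
  obtain ⟨ν, _, hν⟩ := h'
  refine ⟨μ + ν, inferInstance, fun l hl => ⟨add_nonneg (hμ l hl).1 (hν l hl).1, ?_⟩⟩
  rw [lintegral_add_measure, ← (hμ l hl).2, ← (hν l hl).2,
    ENNReal.ofReal_add (hμ l hl).1 (hν l hl).1]

lemma IsLaplace.mul {φ χ : ℝ → ℝ} (h : IsLaplace φ) (h' : IsLaplace χ) :
    IsLaplace fun l => φ l * χ l := by
  obtain ⟨μ, _, hμ⟩ := h
  obtain ⟨ν, _, hν⟩ := h'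
  refine ⟨Measure.conv μ ν, inferInstance, fun l hl => ⟨mul_nonneg (hμ l hl).1 (hν l hl).1, ?_⟩⟩
  rw [Measure.lintegral_conv (by fun_prop), ENNReal.ofReal_mul (hμ l hl).1, (hμ l hl).2,
    (hν l hl).2, ← lintegral_mul_const _ (by fun_prop)]
  refine lintegral_congr fun x => ?_
  rw [← lintegral_const_mul _ (by fun_prop)]
  refine lintegral_congr fun y => ?_
  rw [← ENNReal.ofReal_mul (Real.exp_pos _).le, ← Real.exp_add]
  congr 2
  push_cast
  ring

lemma IsLaplace.pow {φ : ℝ → ℝ} (h : IsLaplace φ) (k : ℕ) : IsLaplace fun l => φ l ^ k := by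
  induction k with
  | zero => simpa using isLaplace_const zero_le_one
  | succ k ih => simpa only [pow_succ] using ih.mul h

lemma measurable_cosTransform {n : ℕ} {ψ : Rn n → ℝ} (hψ : Measurable ψ) :
    Measurable (cosTransform ψ) := by
  refine (StronglyMeasurable.integral_prod_right' (ν := (volume : Measure (Rn n)))
    (f := fun q : Rn n × Rn n => Real.cos (2 * Real.pi * inner ℝ q.2 q.1) * ψ q.2) ?_).measurable
  exact Measurable.stronglyMeasurable (by fun_prop)

/-- The Gaussian regularisations of the multiplier `ψ(‖ξ‖²)` are maximal kernels. -/
def IsSubordinate (n : ℕ) (ψ : ℝ → ℝ) : Prop :=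
  ∀ ε : ℝ, 0 < ε → IsMaxKernel (cosTransform fun ξ : Rn n => Real.exp (-ε * ‖ξ‖ ^ 2) * ψ (‖ξ‖ ^ 2))

open scoped NNReal in
lemma IsLaplace.isSubordinate {n : ℕ} {φ : ℝ → ℝ} (h : IsLaplace φ) (h0 : φ 0 ≤ 1) :
    IsSubordinate n φ := by
  obtain ⟨μ, _, hμ⟩ := h
  have hmass : μ univ ≤ 1 := by
    have := (hμ 0 le_rfl).2
    simp only [mul_zero, neg_zero, Real.exp_zero, ENNReal.ofReal_one, lintegral_const, one_mul]
      at this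
    rw [← this]
    exact ENNReal.ofReal_le_one.2 h0
  have hφ : ∀ l : ℝ, 0 ≤ l → φ l = ∫ s, Real.exp (-((s : ℝ≥0) * l)) ∂μ := by
    intro l hl
    rw [integral_eq_lintegral_of_nonneg_ae (Filter.Eventually.of_forall fun s => (Real.exp_pos _).le)
      (by fun_prop), ← (hμ l hl).2, ENNReal.toReal_ofReal (hμ l hl).1]
  intro ε hε
  set G : ℝ≥0 → Rn n → ℝ := fun s x =>
    cosTransform (fun ξ : Rn n => Real.exp (-(ε + s) * ‖ξ‖ ^ 2)) x with hG
  have hεs : ∀ s : ℝ≥0, 0 < ε + s := fun s => by positivity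
  have hGood : ∀ s, IsMaxKernel (G s) := fun s => isMaxKernel_gaussian (hεs s)
  have hGm : Measurable (fun q : ℝ≥0 × Rn n => G q.1 q.2) := by
    have : (fun q : ℝ≥0 × Rn n => G q.1 q.2) = fun q => (Real.pi / (ε + q.1)) ^ ((n : ℝ) / 2) *
        Real.exp (-(Real.pi ^ 2 / (ε + q.1)) * ‖q.2‖ ^ 2) :=
      funext fun q => cosTransform_gaussian (hεs q.1) q.2
    rw [this]
    fun_prop
  have hmix : ∀ x, cosTransform (fun ξ : Rn n => Real.exp (-ε * ‖ξ‖ ^ 2) * φ (‖ξ‖ ^ 2)) x =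
      ∫ s, G s x ∂μ := by
    intro x
    have hint : Integrable (Function.uncurry fun (ξ : Rn n) (s : ℝ≥0) =>
        Real.cos (2 * Real.pi * inner ℝ ξ x) * Real.exp (-(ε + s) * ‖ξ‖ ^ 2))
        (volume.prod μ) := by
      refine Integrable.mono' ((integrable_exp_neg_mul_norm_sq hε).mul_prod
        (integrable_const (1 : ℝ))) (Measurable.aestronglyMeasurable (by fun_prop)) ?_
      filter_upwards with q
      simp only [Function.uncurry, norm_mul, mul_one]
      refine (mul_le_of_le_one_left (norm_nonneg _) (Real.abs_cos_le_one _)).trans ?_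
      rw [Real.norm_of_nonneg (Real.exp_pos _).le]
      refine Real.exp_le_exp.2 ?_
      have : 0 ≤ (q.2 : ℝ) * ‖q.1‖ ^ 2 := by positivity
      linarith
    simp only [hG, cosTransform]
    rw [← integral_integral_swap hint]
    refine integral_congr_ae (Filter.Eventually.of_forall fun ξ => ?_)
    simp only
    rw [hφ _ (by positivity), integral_const_mul, ← integral_const_mul]
    congr 1
    refine integral_congr_ae (Filter.Eventually.of_forall fun s => ?_)
    simp only
    rw [← Real.exp_add]
    congr 1
    ring
  clear_value G
  refine ⟨fun x => by rw [hmix]; exact integral_nonneg fun s => (hGood s).1 x, fun f hf x => ?_⟩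
  have hle : ∀ z, ENNReal.ofReal (∫ s, G s z ∂μ) ≤ ∫⁻ s, ENNReal.ofReal (G s z) ∂μ := by
    intro z
    have hGz : Measurable fun s : ℝ≥0 => G s z :=
      hGm.comp (measurable_id.prodMk (measurable_const (a := z)))
    rw [integral_eq_lintegral_of_nonneg_ae (Filter.Eventually.of_forall fun s => (hGood s).1 z)
      hGz.aestronglyMeasurable]
    exact ENNReal.ofReal_toReal_le
  have hGm' : Measurable fun q : Rn n × ℝ≥0 => G q.2 (x - q.1) :=
    hGm.comp (measurable_snd.prodMk (measurable_const.sub measurable_fst))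
  simp only [hmix]
  calc ∫⁻ y, ENNReal.ofReal (∫ s, G s (x - y) ∂μ) * f y
      ≤ ∫⁻ y, ∫⁻ s, ENNReal.ofReal (G s (x - y)) * f y ∂μ := by
        refine lintegral_mono fun y => ?_
        rw [lintegral_mul_const _ (by fun_prop)]
        gcongr
        exact hle _
    _ = ∫⁻ s, (∫⁻ y, ENNReal.ofReal (G s (x - y)) * f y) ∂μ :=
        lintegral_lintegral_swap (Measurable.aemeasurable (by fun_prop))
    _ ≤ ∫⁻ _, maxFn f x ∂μ := lintegral_mono fun s => (hGood s).2 f hf x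
    _ ≤ maxFn f x := by
        rw [lintegral_const]
        exact mul_le_of_le_one_right' hmass

lemma IsSubordinate.of_tendsto {n : ℕ} {ψ : ℕ → ℝ → ℝ} {ψ' : ℝ → ℝ}
    (h : ∀ j, IsSubordinate n (ψ j)) (hm : ∀ j, Measurable (ψ j))
    (hb : ∀ j l, 0 ≤ l → |ψ j l| ≤ 1)
    (hl : ∀ l, 0 ≤ l → Filter.Tendsto (fun j => ψ j l) Filter.atTop (nhds (ψ' l))) :
    IsSubordinate n ψ' := by
  intro ε hε
  refine IsMaxKernel.of_tendsto (fun j => h j ε hε)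
    (fun j => measurable_cosTransform (by have := hm j; fun_prop)) fun x => ?_
  refine tendsto_integral_of_dominated_convergence (fun ξ => Real.exp (-ε * ‖ξ‖ ^ 2))
    (fun j => Measurable.aestronglyMeasurable (by have := hm j; fun_prop))
    (integrable_exp_neg_mul_norm_sq hε) (fun j => Filter.Eventually.of_forall fun ξ => ?_)
    (Filter.Eventually.of_forall fun ξ =>
      ((hl _ (by positivity)).const_mul _).const_mul _)
  rw [norm_mul, norm_mul, Real.norm_of_nonneg (Real.exp_pos _).le]
  calc ‖Real.cos (2 * Real.pi * inner ℝ ξ x)‖ * (Real.exp (-ε * ‖ξ‖ ^ 2) * ‖ψ j (‖ξ‖ ^ 2)‖)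
      ≤ 1 * (Real.exp (-ε * ‖ξ‖ ^ 2) * 1) := by
        gcongr
        · exact Real.abs_cos_le_one _
        · exact hb j _ (by positivity)
    _ = _ := by ring

lemma isSubordinate_exp_neg_mul_sub {n : ℕ} {Φ : ℝ → ℝ} (hΦ : IsLaplace Φ) (hm : Measurable Φ)
    (hle : ∀ l, 0 ≤ l → Φ l ≤ Φ 0) {t : ℝ} (ht : 0 ≤ t) :
    IsSubordinate n fun l => Real.exp (-t * (Φ 0 - Φ l)) := by
  have h0 : ∀ l, 0 ≤ l → 0 ≤ Φ l := fun l hl => by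
    obtain ⟨μ, _, hμ⟩ := hΦ
    exact (hμ l hl).1
  have hb : ∀ (k : ℕ) (l : ℝ), 0 ≤ l →
      Real.exp (-t * Φ 0) * (1 + t * Φ l / k) ^ k ≤ 1 := by
    intro k l hl
    have h1 : (1 + t * Φ l / k) ^ k ≤ Real.exp (t * Φ 0) := by
      rcases Nat.eq_zero_or_pos k with rfl | hk
      · simpa using mul_nonneg ht (h0 0 le_rfl)
      have hk' : (0 : ℝ) < k := by exact_mod_cast hk
      have hq : 0 ≤ t * Φ l / k := div_nonneg (mul_nonneg ht (h0 l hl)) hk'.le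
      calc (1 + t * Φ l / k) ^ k ≤ Real.exp (t * Φ l / k) ^ k := by
            gcongr
            rw [add_comm]
            exact Real.add_one_le_exp _
        _ = Real.exp (t * Φ l) := by
            rw [← Real.exp_nat_mul]
            congr 1
            field_simp
        _ ≤ _ := Real.exp_le_exp.2 (mul_le_mul_of_nonneg_left (hle l hl) ht)
    calc _ ≤ Real.exp (-t * Φ 0) * Real.exp (t * Φ 0) := by gcongr
      _ = 1 := by rw [← Real.exp_add]; simp
  refine IsSubordinate.of_tendsto (ψ := fun k l => Real.exp (-t * Φ 0) * (1 + t * Φ l / k) ^ k)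
    (fun k => IsLaplace.isSubordinate ?_ (hb k 0 le_rfl)) (fun k => by fun_prop)
    (fun k l hl => ?_) fun l _ => ?_
  · refine (isLaplace_const (Real.exp_pos _).le).mul (IsLaplace.pow ?_ k)
    refine (isLaplace_const zero_le_one).add ?_
    have := (isLaplace_const (c := t / k) (by positivity)).mul hΦ
    simpa only [div_mul_eq_mul_div] using this
  · have : 0 ≤ t * Φ l / k := div_nonneg (mul_nonneg ht (h0 l hl)) (Nat.cast_nonneg k)
    rw [abs_of_nonneg (by positivity)]
    exact hb k l hl
  · have h := (Real.tendsto_one_add_div_pow_exp (t * Φ l)).const_mul (Real.exp (-t * Φ 0))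
    rw [← Real.exp_add] at h
    convert h using 3
    ring

/-- Integrability against the Lévy measure of the fractional power. -/
lemma integrableOn_one_sub_exp_mul_rpow {α : ℝ} (h0 : 0 < α) (h1 : α < 1) {l : ℝ} (hl : 0 ≤ l) :
    IntegrableOn (fun s : ℝ => (1 - Real.exp (-(s * l))) * s ^ (-1 - α)) (Ioi 0) := by
  rw [← Ioc_union_Ioi_eq_Ioi (zero_le_one (α := ℝ))]
  refine IntegrableOn.union ?_ ?_
  · have h : IntegrableOn (fun s : ℝ => l * s ^ (-α)) (Ioc 0 1) := by
      have := intervalIntegral.intervalIntegrable_rpow' (a := 0) (b := 1) (r := -α) (by linarith)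
      rw [intervalIntegrable_iff_integrableOn_Ioc_of_le zero_le_one] at this
      exact this.const_mul l
    refine Integrable.mono' h (Measurable.aestronglyMeasurable (by fun_prop)) ?_
    filter_upwards [ae_restrict_mem measurableSet_Ioc] with s hs
    have hsl : 0 ≤ s * l := mul_nonneg hs.1.le hl
    have hp := Real.rpow_nonneg hs.1.le (-1 - α)
    have h2 : 0 ≤ 1 - Real.exp (-(s * l)) := by
      rw [sub_nonneg, Real.exp_le_one_iff]; linarith
    rw [Real.norm_of_nonneg (mul_nonneg h2 hp)]
    have h3 : 1 - Real.exp (-(s * l)) ≤ s * l := by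
      have := Real.add_one_le_exp (-(s * l)); linarith
    calc _ ≤ s * l * s ^ (-1 - α) := by gcongr
      _ = l * (s ^ (1 : ℝ) * s ^ (-1 - α)) := by rw [Real.rpow_one]; ring
      _ = _ := by rw [← Real.rpow_add hs.1]; congr 2; ring
  · refine Integrable.mono' (integrableOn_Ioi_rpow_of_lt (a := -1 - α) (by linarith) one_pos)
      (Measurable.aestronglyMeasurable (by fun_prop)) ?_
    filter_upwards [ae_restrict_mem measurableSet_Ioi] with s hs
    have hs0 : 0 < s := zero_lt_one.trans hs
    have hsl : 0 ≤ s * l := mul_nonneg hs0.le hl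
    have hp := Real.rpow_nonneg hs0.le (-1 - α)
    have h2 : 0 ≤ 1 - Real.exp (-(s * l)) := by
      rw [sub_nonneg, Real.exp_le_one_iff]; linarith
    rw [Real.norm_of_nonneg (mul_nonneg h2 hp)]
    have := Real.exp_pos (-(s * l))
    exact mul_le_of_le_one_left hp (by linarith)

lemma integral_one_sub_exp_mul_rpow {α : ℝ} (h0 : 0 < α) {l : ℝ} (hl : 0 ≤ l) :
    ∫ s in Ioi (0 : ℝ), (1 - Real.exp (-(s * l))) * s ^ (-1 - α) =
      l ^ α * ∫ s in Ioi (0 : ℝ), (1 - Real.exp (-s)) * s ^ (-1 - α) := by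
  rcases hl.eq_or_lt with rfl | hl
  · simp [Real.zero_rpow h0.ne']
  have h := integral_comp_mul_left_Ioi (fun s : ℝ => (1 - Real.exp (-s)) * s ^ (-1 - α)) 0 hl
  rw [mul_zero, smul_eq_mul] at h
  have h2 : ∫ s in Ioi (0 : ℝ), (1 - Real.exp (-(s * l))) * s ^ (-1 - α) =
      l ^ (1 + α) * ∫ s in Ioi (0 : ℝ), (1 - Real.exp (-(l * s))) * (l * s) ^ (-1 - α) := by
    rw [← integral_const_mul]
    refine setIntegral_congr_fun measurableSet_Ioi fun s hs => ?_
    rw [Real.mul_rpow hl.le (le_of_lt hs), mul_left_comm (l ^ (1 + α)), ← mul_assoc (l ^ (1 + α)),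
      ← Real.rpow_add hl, mul_comm l s]
    simp
  rw [h2, h, ← mul_assoc]
  congr 1
  rw [← Real.rpow_neg_one, ← Real.rpow_add hl]
  congr 1
  ring

lemma integral_one_sub_exp_mul_rpow_pos {α : ℝ} (h0 : 0 < α) (h1 : α < 1) :
    0 < ∫ s in Ioi (0 : ℝ), (1 - Real.exp (-s)) * s ^ (-1 - α) := by
  have hpos : ∀ s ∈ Ioi (0 : ℝ), 0 < (1 - Real.exp (-s)) * s ^ (-1 - α) := by
    intro s hs
    have : Real.exp (-s) < 1 := Real.exp_lt_one_iff.2 (by simpa using hs)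
    exact mul_pos (by linarith) (Real.rpow_pos_of_pos hs _)
  have hint : IntegrableOn (fun s : ℝ => (1 - Real.exp (-s)) * s ^ (-1 - α)) (Ioi 0) := by
    simpa using integrableOn_one_sub_exp_mul_rpow h0 h1 zero_le_one
  rw [setIntegral_pos_iff_support_of_nonneg_ae
    (ae_restrict_of_forall_mem measurableSet_Ioi fun s hs => (hpos s hs).le) hint]
  have : Ioi (0 : ℝ) ⊆ Function.support (fun s : ℝ => (1 - Real.exp (-s)) * s ^ (-1 - α)) ∩ Ioi 0 :=
    fun s hs => ⟨(hpos s hs).ne', hs⟩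
  exact lt_of_lt_of_le (by simp) (measure_mono this)

open scoped NNReal in
lemma isLaplace_integral_exp_mul_rpow {α : ℝ} (h0 : 0 < α) {d : ℝ} (hd : 0 < d) :
    IsLaplace fun l => ∫ s in Ioi d, Real.exp (-(s * l)) * s ^ (-1 - α) := by
  have hI : IntegrableOn (fun s : ℝ => s ^ (-1 - α)) (Ioi d) :=
    integrableOn_Ioi_rpow_of_lt (by linarith) hd
  set ν : Measure ℝ := (volume.restrict (Ioi d)).withDensity fun s => ENNReal.ofReal (s ^ (-1 - α))
    with hν
  have hfin : IsFiniteMeasure ν := isFiniteMeasure_withDensity_ofReal hI.2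
  refine ⟨ν.map Real.toNNReal, inferInstance, fun l hl => ?_⟩
  have hnn : ∀ s ∈ Ioi d, 0 ≤ Real.exp (-(s * l)) * s ^ (-1 - α) := fun s hs =>
    mul_nonneg (Real.exp_pos _).le (Real.rpow_nonneg (hd.trans hs).le _)
  refine ⟨setIntegral_nonneg measurableSet_Ioi hnn, ?_⟩
  have hint : IntegrableOn (fun s : ℝ => Real.exp (-(s * l)) * s ^ (-1 - α)) (Ioi d) := by
    refine Integrable.mono' hI (Measurable.aestronglyMeasurable (by fun_prop)) ?_
    filter_upwards [ae_restrict_mem measurableSet_Ioi] with s hs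
    have hs0 : 0 < s := hd.trans hs
    rw [Real.norm_of_nonneg (hnn s hs)]
    refine mul_le_of_le_one_left (Real.rpow_nonneg hs0.le _) (Real.exp_le_one_iff.2 ?_)
    have := mul_nonneg hs0.le hl
    linarith
  rw [ofReal_integral_eq_lintegral_ofReal hint (ae_restrict_of_forall_mem measurableSet_Ioi hnn),
    lintegral_map (by fun_prop) (by fun_prop), hν,
    lintegral_withDensity_eq_lintegral_mul _ (by fun_prop) (by fun_prop)]
  refine setLIntegral_congr_fun measurableSet_Ioi fun s hs => ?_
  have hs0 : 0 < s := hd.trans hs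
  simp only [Pi.mul_apply]
  rw [Real.coe_toNNReal _ hs0.le, mul_comm, ENNReal.ofReal_mul (Real.rpow_nonneg hs0.le _)]

lemma isSubordinate_exp_neg_mul_rpow {n : ℕ} {α : ℝ} (h0 : 0 < α) (h1 : α ≤ 1) {t : ℝ}
    (ht : 0 ≤ t) : IsSubordinate n fun l => Real.exp (-t * l ^ α) := by
  rcases h1.eq_or_lt with rfl | h1
  · refine IsLaplace.isSubordinate ⟨Measure.dirac t.toNNReal, inferInstance, fun l hl => ?_⟩ (by simp)
    refine ⟨(Real.exp_pos _).le, ?_⟩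
    rw [lintegral_dirac' _ (by fun_prop), Real.coe_toNNReal _ ht]
    simp
  set c := ∫ s in Ioi (0 : ℝ), (1 - Real.exp (-s)) * s ^ (-1 - α) with hc
  have hc0 : 0 < c := integral_one_sub_exp_mul_rpow_pos h0 h1
  set d : ℕ → ℝ := fun N => 1 / ((N : ℝ) + 1) with hd
  have hd0 : ∀ N, 0 < d N := fun N => by positivity
  set Φ : ℕ → ℝ → ℝ := fun N l => ∫ s in Ioi (d N), Real.exp (-(s * l)) * s ^ (-1 - α) with hΦ
  have hint : ∀ N (l : ℝ), 0 ≤ l →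
      IntegrableOn (fun s : ℝ => Real.exp (-(s * l)) * s ^ (-1 - α)) (Ioi (d N)) := by
    intro N l hl
    refine Integrable.mono' (integrableOn_Ioi_rpow_of_lt (a := -1 - α) (by linarith) (hd0 N))
      (Measurable.aestronglyMeasurable (by fun_prop)) ?_
    filter_upwards [ae_restrict_mem measurableSet_Ioi] with s hs
    have hs0 : 0 < s := (hd0 N).trans hs
    have hp := Real.rpow_nonneg hs0.le (-1 - α)
    rw [Real.norm_of_nonneg (mul_nonneg (Real.exp_pos _).le hp)]
    refine mul_le_of_le_one_left hp (Real.exp_le_one_iff.2 ?_)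
    have := mul_nonneg hs0.le hl
    linarith
  have hdiff : ∀ N (l : ℝ), 0 ≤ l → Φ N 0 - Φ N l =
      ∫ s in Ioi (d N), (1 - Real.exp (-(s * l))) * s ^ (-1 - α) := by
    intro N l hl
    rw [hΦ]
    simp only
    rw [← integral_sub (hint N 0 le_rfl) (hint N l hl)]
    refine integral_congr_ae (Filter.Eventually.of_forall fun s => ?_)
    simp only [mul_zero, neg_zero, Real.exp_zero]
    ring
  have hdnn : ∀ N (l : ℝ), 0 ≤ l → 0 ≤ Φ N 0 - Φ N l := by
    intro N l hl
    rw [hdiff N l hl]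
    refine setIntegral_nonneg measurableSet_Ioi fun s hs => ?_
    have hs0 : 0 < s := (hd0 N).trans hs
    have := mul_nonneg hs0.le hl
    refine mul_nonneg ?_ (Real.rpow_nonneg hs0.le _)
    rw [sub_nonneg, Real.exp_le_one_iff]
    linarith
  have hm : ∀ N, Measurable (Φ N) := fun N =>
    (StronglyMeasurable.integral_prod_right' (ν := volume.restrict (Ioi (d N)))
      (f := fun q : ℝ × ℝ => Real.exp (-(q.2 * q.1)) * q.2 ^ (-1 - α))
      (Measurable.stronglyMeasurable (by fun_prop))).measurable
  refine IsSubordinate.of_tendsto (ψ := fun N l => Real.exp (-(t / c) * (Φ N 0 - Φ N l)))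
    (fun N => isSubordinate_exp_neg_mul_sub (isLaplace_integral_exp_mul_rpow h0 (hd0 N)) (hm N)
      (fun l hl => sub_nonneg.1 (hdnn N l hl)) (by positivity))
    (fun N => by have := hm N; fun_prop) (fun N l hl => ?_) fun l hl => ?_
  · rw [abs_of_pos (Real.exp_pos _), Real.exp_le_one_iff, neg_mul]
    have := mul_nonneg (div_nonneg ht hc0.le) (hdnn N l hl)
    linarith
  · have hU : ⋃ N, Ioi (d N) = Ioi (0 : ℝ) := by
      ext x
      simp only [mem_iUnion, mem_Ioi]
      exact ⟨fun ⟨N, h⟩ => (hd0 N).trans h, fun hx => exists_nat_one_div_lt hx⟩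
    have hlim : Filter.Tendsto (fun N => Φ N 0 - Φ N l) Filter.atTop (nhds (l ^ α * c)) := by
      rw [← integral_one_sub_exp_mul_rpow h0 hl, ← hU]
      simp only [hdiff _ l hl]
      refine tendsto_setIntegral_of_monotone (fun _ => measurableSet_Ioi) (fun a b hab => ?_)
        (by rw [hU]; exact integrableOn_one_sub_exp_mul_rpow h0 h1 hl)
      refine Ioi_subset_Ioi ?_
      exact one_div_le_one_div_of_le (by positivity) (by gcongr)
    have := (Real.continuous_exp.tendsto _).comp (hlim.const_mul (-(t / c)))
    convert this using 2
    congr 1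
    field_simp

section fractionalHeat
variable {n : ℕ} {α : ℝ}

lemma integrable_exp_neg_mul_norm_rpow (hn : 1 ≤ n) (hα : 0 < α) {t : ℝ} (ht : 0 < t) :
    Integrable fun ξ : Rn n => Real.exp (-t * ‖ξ‖ ^ (2 * α)) := by
  have : Nonempty (Fin n) := ⟨⟨0, hn⟩⟩
  have h := integrable_fun_norm_addHaar (volume : Measure (Rn n))
    (f := fun y : ℝ => Real.exp (-t * y ^ (2 * α)))
  refine h.2 ?_
  have h2 := integrableOn_rpow_mul_exp_neg_mul_rpow (s := ((n - 1 : ℕ) : ℝ)) (p := 2 * α)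
    (b := t) (by have : (0:ℝ) ≤ ((n - 1 : ℕ) : ℝ) := Nat.cast_nonneg _
                 linarith) (by positivity) ht
  simpa [finrank_euclideanSpace_fin] using h2

lemma gKer_eq_cosTransform (hn : 1 ≤ n) (hα : 0 < α) {t : ℝ} (ht : 0 < t) (x : Rn n) :
    gKer n α t x = cosTransform (fun ξ : Rn n => Real.exp (-t * ‖ξ‖ ^ (2 * α))) x :=
  re_fourierInv_ofReal (integrable_exp_neg_mul_norm_rpow hn hα ht) x

lemma isMaxKernel_gKer_of_pos (hn : 1 ≤ n) (hα : 0 < α) (hα1 : α ≤ 1) {t : ℝ} (ht : 0 < t) :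
    IsMaxKernel (gKer n α t) := by
  have hs := isSubordinate_exp_neg_mul_rpow (n := n) hα hα1 ht.le
  refine IsMaxKernel.of_tendsto (fun j : ℕ => hs (1 / ((j : ℝ) + 1)) (by positivity))
    (fun j => measurable_cosTransform (by fun_prop)) fun x => ?_
  rw [gKer_eq_cosTransform hn hα ht]
  have hpow : ∀ ξ : Rn n, (‖ξ‖ ^ 2) ^ α = ‖ξ‖ ^ (2 * α) := fun ξ => by
    rw [Real.rpow_mul (norm_nonneg ξ)]
    norm_num
  simp only [hpow]
  refine tendsto_integral_of_dominated_convergence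
    (fun ξ : Rn n => Real.exp (-t * ‖ξ‖ ^ (2 * α)))
    (fun j => Measurable.aestronglyMeasurable (by fun_prop))
    (integrable_exp_neg_mul_norm_rpow hn hα ht) (fun j => Filter.Eventually.of_forall fun ξ => ?_)
    (Filter.Eventually.of_forall fun ξ => ?_)
  · rw [norm_mul, norm_mul, Real.norm_of_nonneg (Real.exp_pos _).le,
      Real.norm_of_nonneg (Real.exp_pos _).le]
    have h1 : Real.exp (-(1 / ((j : ℝ) + 1)) * ‖ξ‖ ^ 2) ≤ 1 := by
      rw [Real.exp_le_one_iff, neg_mul]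
      have : 0 ≤ 1 / ((j : ℝ) + 1) * ‖ξ‖ ^ 2 := by positivity
      linarith
    calc _ ≤ 1 * (1 * Real.exp (-t * ‖ξ‖ ^ (2 * α))) := by
          gcongr
          exact Real.abs_cos_le_one _
      _ = _ := by ring
  · have h1 : Filter.Tendsto (fun j : ℕ => Real.exp (-(1 / ((j : ℝ) + 1)) * ‖ξ‖ ^ 2)) Filter.atTop
        (nhds 1) := by
      have h := (tendsto_one_div_add_atTop_nhds_zero_nat (𝕜 := ℝ)).neg.mul_const (‖ξ‖ ^ 2)
      have h' := (Real.continuous_exp.tendsto _).comp h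
      simpa [Function.comp_def] using h'
    simpa using (h1.mul_const (Real.exp (-t * ‖ξ‖ ^ (2 * α)))).const_mul
      (Real.cos (2 * Real.pi * inner ℝ ξ x))

lemma exists_abs_gKer_le (hn : 1 ≤ n) (hα : 0 < α) : ∃ C : ℝ, 0 ≤ C ∧
    ∀ t > 0, ∀ x : Rn n, |gKer n α t x| ≤ C * t ^ (-((n : ℝ) / (2 * α))) := by
  refine ⟨∫ ξ : Rn n, Real.exp (-1 * ‖ξ‖ ^ (2 * α)), integral_nonneg fun ξ => (Real.exp_pos _).le,
    fun t ht x => ?_⟩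
  rw [gKer_eq_cosTransform hn hα ht, cosTransform]
  calc |∫ ξ : Rn n, Real.cos (2 * Real.pi * inner ℝ ξ x) * Real.exp (-t * ‖ξ‖ ^ (2 * α))|
      ≤ ∫ ξ : Rn n, Real.exp (-t * ‖ξ‖ ^ (2 * α)) := by
        rw [← Real.norm_eq_abs]
        refine norm_integral_le_of_norm_le (integrable_exp_neg_mul_norm_rpow hn hα ht)
          (Filter.Eventually.of_forall fun ξ => ?_)
        rw [norm_mul, Real.norm_of_nonneg (Real.exp_pos _).le]
        exact mul_le_of_le_one_left (Real.exp_pos _).le (Real.abs_cos_le_one _)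
    _ = _ := by
        have h := Measure.integral_comp_smul (volume : Measure (Rn n))
          (fun ξ : Rn n => Real.exp (-1 * ‖ξ‖ ^ (2 * α))) (t ^ (1 / (2 * α)))
        rw [finrank_euclideanSpace_fin, smul_eq_mul] at h
        have h1 : ∀ ξ : Rn n, -1 * ‖t ^ (1 / (2 * α)) • ξ‖ ^ (2 * α) = -t * ‖ξ‖ ^ (2 * α) := by
          intro ξ
          rw [norm_smul, Real.norm_of_nonneg (by positivity), Real.mul_rpow (by positivity)
            (norm_nonneg _), ← Real.rpow_mul ht.le, one_div_mul_cancel (by positivity),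
            Real.rpow_one]
          ring
        simp only [h1] at h
        rw [h, abs_of_nonneg (by positivity), ← Real.rpow_natCast, ← Real.rpow_mul ht.le,
          ← Real.rpow_neg ht.le]
        rw [mul_comm]
        congr 2
        ring

lemma gKer_of_nonpos (hn : 1 ≤ n) {t : ℝ} (ht : t ≤ 0) (x : Rn n) : gKer n α t x = 0 := by
  have : Nonempty (Fin n) := ⟨⟨0, hn⟩⟩
  rw [gKer, Real.fourierInv_eq', integral_undef, Complex.zero_re]
  intro h
  have h1 : Integrable fun _ : Rn n => (1 : ℝ) := by
    refine h.norm.mono' (by fun_prop) (Filter.Eventually.of_forall fun ξ => ?_)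
    rw [norm_smul, Complex.norm_exp_ofReal_mul_I, one_mul, Complex.norm_real, norm_one,
      Real.norm_of_nonneg (Real.exp_pos _).le, Real.one_le_exp_iff]
    exact mul_nonneg (by linarith) (Real.rpow_nonneg (norm_nonneg _) _)
  rw [integrable_const_iff] at h1
  rcases h1 with h1 | h1
  · exact one_ne_zero h1
  · exact absurd (measure_lt_top (volume : Measure (Rn n)) univ) (by simp)

/-- The fractional heat kernel is nonnegative and dominated by the maximal function. -/
theorem isMaxKernel_gKer (hn : 1 ≤ n) (hα : 0 < α) (hα1 : α ≤ 1) (t : ℝ) :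
    IsMaxKernel (gKer n α t) := by
  rcases le_or_gt t 0 with ht | ht
  · exact ⟨fun x => (gKer_of_nonpos hn ht x).ge, fun f _ x => by simp [gKer_of_nonpos hn ht]⟩
  · exact isMaxKernel_gKer_of_pos hn hα hα1 ht

lemma measurable_gKer : Measurable fun q : ℝ × Rn n => gKer n α q.1 q.2 := by
  simp only [gKer, Real.fourierInv_eq']
  refine Complex.measurable_re.comp ?_
  exact (StronglyMeasurable.integral_prod_right' (ν := (volume : Measure (Rn n)))
    (f := fun q : (ℝ × Rn n) × Rn n =>
      Complex.exp (↑(2 * Real.pi * inner ℝ q.2 q.1.2) * Complex.I) •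
        (Real.exp (-q.1.1 * ‖q.2‖ ^ (2 * α)) : ℂ))
    (Measurable.stronglyMeasurable (by fun_prop))).measurable

end fractionalHeat

/-- The potential of `h` with respect to the fractional heat kernel integrated over all times. -/
def heatPotential {n : ℕ} (α : ℝ) (h : Rn n → ℝ≥0∞) (x : Rn n) : ℝ≥0∞ :=
  ∫⁻ s in Ioi (0 : ℝ), ∫⁻ y, ENNReal.ofReal (gKer n α s (x - y)) * h y

section potential
variable {n : ℕ} {α : ℝ}

@[fun_prop]
lemma Measurable.fractionalHeatKernel {X : Type*} [MeasurableSpace X] {f : X → ℝ} {g : X → Rn n}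
    (hf : Measurable f) (hg : Measurable g) : Measurable fun x => gKer n α (f x) (g x) := by
  have h := Measurable.comp (measurable_gKer (n := n) (α := α)) (hf.prodMk hg)
  simpa only [Function.comp_def] using h

lemma measurable_lintegral_gKer_mul {h : Rn n → ℝ≥0∞} (hh : Measurable h) :
    Measurable fun q : Rn n × ℝ => ∫⁻ y, ENNReal.ofReal (gKer n α q.2 (q.1 - y)) * h y := by
  have : Measurable fun q : (Rn n × ℝ) × Rn n =>
      ENNReal.ofReal (gKer n α q.1.2 (q.1.1 - q.2)) * h q.2 := by fun_prop
  exact this.lintegral_prod_right'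

lemma measurable_lintegral_gKer_mul_time {h : Rn n → ℝ≥0∞} (hh : Measurable h) (x : Rn n) :
    Measurable fun s : ℝ => ∫⁻ y, ENNReal.ofReal (gKer n α s (x - y)) * h y := by
  have : Measurable fun q : ℝ × Rn n => ENNReal.ofReal (gKer n α q.1 (x - q.2)) * h q.2 := by
    fun_prop
  exact this.lintegral_prod_right'

lemma measurable_heatPotential {h : Rn n → ℝ≥0∞} (hh : Measurable h) :
    Measurable (heatPotential α h) :=
  (measurable_lintegral_gKer_mul hh).lintegral_prod_right'

lemma heatPotential_mono {h k : Rn n → ℝ≥0∞} (hhk : h ≤ᵐ[volume] k) (x : Rn n) :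
    heatPotential α h x ≤ heatPotential α k x :=
  lintegral_mono fun _ => lintegral_mono_ae (hhk.mono fun _ hy => by gcongr)

lemma heatPotential_const_mul {h : Rn n → ℝ≥0∞} (hh : Measurable h) (c : ℝ≥0∞) (x : Rn n) :
    heatPotential α (fun y => c * h y) x = c * heatPotential α h x := by
  rw [heatPotential, heatPotential, ← lintegral_const_mul _ (measurable_lintegral_gKer_mul_time hh x)]
  refine lintegral_congr fun s => ?_
  rw [← lintegral_const_mul _ (by fun_prop)]
  refine lintegral_congr fun y => ?_
  ring

lemma heatPotential_add {h k : Rn n → ℝ≥0∞} (hh : Measurable h) (x : Rn n) :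
    heatPotential α (fun y => h y + k y) x = heatPotential α h x + heatPotential α k x := by
  rw [heatPotential, heatPotential, heatPotential,
    ← lintegral_add_left (measurable_lintegral_gKer_mul_time hh x)]
  refine lintegral_congr fun s => ?_
  rw [← lintegral_add_left (by fun_prop)]
  refine lintegral_congr fun y => ?_
  ring

lemma heatPotential_iSup {h : ℕ → Rn n → ℝ≥0∞} (hh : ∀ k, Measurable (h k))
    (hmono : Monotone h) (x : Rn n) :
    heatPotential α (fun y => ⨆ k, h k y) x = ⨆ k, heatPotential α (h k) x := by
  simp only [heatPotential]
  rw [← lintegral_iSup (fun k => measurable_lintegral_gKer_mul_time (hh k) x)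
    fun i j hij s => lintegral_mono fun y => by have := hmono hij y; gcongr]
  refine lintegral_congr fun s => ?_
  rw [← lintegral_iSup (fun k => by have := hh k; fun_prop)
    fun i j hij y => by have := hmono hij y; gcongr]
  refine lintegral_congr fun y => ?_
  rw [ENNReal.mul_iSup]

lemma lintegral_gKer_mul_rpow_le (hn : 1 ≤ n) (hα : 0 < α) (hα1 : α ≤ 1) {q : ℝ} (hq : 1 ≤ q)
    {h : Rn n → ℝ≥0∞} (hh : Measurable h) (s : ℝ) (x : Rn n) :
    (∫⁻ y, ENNReal.ofReal (gKer n α s (x - y)) * h y) ^ q ≤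
      ∫⁻ y, ENNReal.ofReal (gKer n α s (x - y)) * h y ^ q := by
  have hg : Measurable fun y : Rn n => ENNReal.ofReal (gKer n α s (x - y)) := by fun_prop
  set ν : Measure (Rn n) := volume.withDensity fun y => ENNReal.ofReal (gKer n α s (x - y)) with hν
  have hmass : ν univ ≤ 1 := by
    rw [hν, withDensity_apply _ MeasurableSet.univ, setLIntegral_univ]
    have := (isMaxKernel_gKer hn hα hα1 s).2 (fun _ => 1) measurable_const x
    simp only [mul_one] at this
    exact this.trans (maxFn_const 1 x)
  have := rpow_lintegral_le_lintegral_rpow hmass hh.aemeasurable hq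
  rwa [hν, lintegral_withDensity_eq_lintegral_mul _ hg hh,
    lintegral_withDensity_eq_lintegral_mul _ hg (hh.pow_const q)] at this

lemma lintegral_Ioi_ofReal_rpow {β T : ℝ} (hβ : 0 < β) (hT : 0 < T) :
    ∫⁻ s in Ioi T, ENNReal.ofReal (s ^ (-(1 + β))) = ENNReal.ofReal (β⁻¹ * T ^ (-β)) := by
  rw [← ofReal_integral_eq_lintegral_ofReal (integrableOn_Ioi_rpow_of_lt (by linarith) hT)
    (ae_restrict_of_forall_mem measurableSet_Ioi fun s hs => Real.rpow_nonneg (hT.trans hs).le _),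
    integral_Ioi_rpow_of_lt (by linarith) hT]
  congr 1
  have : -(1 + β) + 1 = -β := by ring
  rw [this]
  field_simp

/-- A Hedberg type inequality. -/
theorem exists_heatPotential_le (hn : 1 ≤ n) (hα : 0 < α) (hα1 : α ≤ 1) {q β : ℝ} (hq : 1 ≤ q)
    (hβ : 0 < β) (hqβ : (n : ℝ) / (2 * α) / q = 1 + β) :
    ∃ C : ℝ≥0∞, C ≠ ⊤ ∧ ∀ h : Rn n → ℝ≥0∞, Measurable h → ∫⁻ y, h y ^ q ≤ 1 → ∀ x,
      heatPotential α h x ≤ C * maxFn h x ^ (β / (1 + β)) := by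
  obtain ⟨C, hC0, hC⟩ := exists_abs_gKer_le hn hα
  have hq0 : 0 < q := by linarith
  have hβ1 : 0 < 1 + β := by linarith
  set D : ℝ := C ^ q⁻¹ * β⁻¹ with hD
  have hD0 : 0 ≤ D := by positivity
  refine ⟨1 + ENNReal.ofReal D, by simp, fun h hh hint x => ?_⟩
  set M := maxFn h x with hM
  have hsmall : ∀ s : ℝ, ∫⁻ y, ENNReal.ofReal (gKer n α s (x - y)) * h y ≤ M := fun s =>
    (isMaxKernel_gKer hn hα hα1 s).2 h hh x
  have hlarge : ∀ s : ℝ, 0 < s → ∫⁻ y, ENNReal.ofReal (gKer n α s (x - y)) * h y ≤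
      ENNReal.ofReal (C ^ q⁻¹ * s ^ (-(1 + β))) := by
    intro s hs
    have h1 : (∫⁻ y, ENNReal.ofReal (gKer n α s (x - y)) * h y) ^ q ≤
        ENNReal.ofReal (C * s ^ (-((n : ℝ) / (2 * α)))) := by
      refine (lintegral_gKer_mul_rpow_le hn hα hα1 hq hh s x).trans ?_
      calc ∫⁻ y, ENNReal.ofReal (gKer n α s (x - y)) * h y ^ q
          ≤ ∫⁻ y, ENNReal.ofReal (C * s ^ (-((n : ℝ) / (2 * α)))) * h y ^ q := by
            refine lintegral_mono fun y => ?_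
            gcongr
            exact (le_abs_self _).trans (hC s hs _)
        _ ≤ _ := by
            rw [lintegral_const_mul _ (hh.pow_const q)]
            exact mul_le_of_le_one_right' hint
    have h2 := (ENNReal.le_rpow_inv_iff hq0).2 h1
    refine h2.trans (le_of_eq ?_)
    rw [ENNReal.ofReal_rpow_of_nonneg (by positivity) (by positivity),
      Real.mul_rpow hC0 (by positivity), ← Real.rpow_mul hs.le, ← hqβ]
    congr 3
    rw [div_eq_mul_inv _ q]
    ring
  rcases eq_or_ne M 0 with hM0 | hM0
  · have : heatPotential α h x = 0 := by
      have h0 : ∀ s : ℝ, ∫⁻ y, ENNReal.ofReal (gKer n α s (x - y)) * h y = 0 := fun s =>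
        le_antisymm ((hsmall s).trans hM0.le) zero_le
      simp only [heatPotential, h0, lintegral_zero]
    rw [this]
    exact zero_le
  rcases eq_or_ne M ⊤ with hMt | hMt
  · rw [hMt, ENNReal.top_rpow_of_pos (by positivity), ENNReal.mul_top (by simp)]
    exact le_top
  set m := M.toReal with hm
  have hm0 : 0 < m := ENNReal.toReal_pos hM0 hMt
  have hMm : M = ENNReal.ofReal m := (ENNReal.ofReal_toReal hMt).symm
  set T : ℝ := m ^ (-(1 / (1 + β))) with hT
  have hT0 : 0 < T := by positivity
  have hTm : T * m = m ^ (β / (1 + β)) := by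
    have h1 : T * m = m ^ (-(1 / (1 + β))) * m ^ (1 : ℝ) := by rw [Real.rpow_one]
    rw [h1, ← Real.rpow_add hm0]
    congr 1
    field_simp
    ring
  have hTβ : T ^ (-β) = m ^ (β / (1 + β)) := by
    rw [hT, ← Real.rpow_mul hm0.le]
    congr 1
    ring
  calc heatPotential α h x
      ≤ (∫⁻ s in Ioc 0 T, ∫⁻ y, ENNReal.ofReal (gKer n α s (x - y)) * h y) +
        ∫⁻ s in Ioi T, ∫⁻ y, ENNReal.ofReal (gKer n α s (x - y)) * h y := by
        rw [heatPotential, ← Ioc_union_Ioi_eq_Ioi hT0.le]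
        exact lintegral_union_le _ _ _
    _ ≤ (∫⁻ _ in Ioc 0 T, M) + ∫⁻ s in Ioi T, ENNReal.ofReal (C ^ q⁻¹ * s ^ (-(1 + β))) := by
        refine add_le_add (lintegral_mono fun s => hsmall s)
          (setLIntegral_mono (by fun_prop) fun s hs => hlarge s (hT0.trans hs))
    _ = ENNReal.ofReal (m ^ (β / (1 + β))) + ENNReal.ofReal (D * m ^ (β / (1 + β))) := by
        congr 1
        · rw [setLIntegral_const, Real.volume_Ioc, hMm, ← ENNReal.ofReal_mul hm0.le, ← hTm]
          congr 1
          ring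
        · simp only [ENNReal.ofReal_mul (Real.rpow_nonneg hC0 q⁻¹)]
          rw [lintegral_const_mul _ (by fun_prop), lintegral_Ioi_ofReal_rpow hβ hT0, hTβ,
            ← ENNReal.ofReal_mul (by positivity), hD, mul_assoc]
    _ = _ := by
        rw [hMm, ENNReal.ofReal_rpow_of_pos hm0, ENNReal.ofReal_mul hD0, add_mul, one_mul]

end potential

lemma lintegral_div_rpow_le_one {X : Type*} [MeasurableSpace X] {μ : Measure X} {p : X → ℝ}
    (hp : ∀ x, 1 ≤ p x) {f : X → ℝ≥0∞} {K : ℝ≥0∞} (hK1 : 1 ≤ K) (hK : K ≠ ⊤)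
    (h : ∫⁻ x, f x ^ p x ∂μ ≤ K) : ∫⁻ x, (f x / K) ^ p x ∂μ ≤ 1 := by
  calc ∫⁻ x, (f x / K) ^ p x ∂μ ≤ ∫⁻ x, K⁻¹ * f x ^ p x ∂μ := by
        refine lintegral_mono fun x => ?_
        rw [div_eq_mul_inv, mul_comm, ENNReal.mul_rpow_of_nonneg _ _ (by linarith [hp x])]
        gcongr
        calc K⁻¹ ^ p x ≤ K⁻¹ ^ (1 : ℝ) :=
              ENNReal.rpow_le_rpow_of_exponent_ge (ENNReal.inv_le_one.2 hK1) (hp x)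
          _ = K⁻¹ := ENNReal.rpow_one _
    _ = K⁻¹ * ∫⁻ x, f x ^ p x ∂μ :=
        lintegral_const_mul' _ _ (ENNReal.inv_ne_top.2 (zero_lt_one.trans_le hK1).ne')
    _ ≤ K⁻¹ * K := by gcongr
    _ = 1 := ENNReal.inv_mul_cancel (zero_lt_one.trans_le hK1).ne' hK

/-- Modular bounds, with a common constant `K`, for the maximal function and for the potential. -/
structure PotentialBounds {n : ℕ} (α κ r : ℝ) (p : Rn n → ℝ) (K : ℝ≥0∞) : Prop where
  one_le : 1 ≤ K
  ne_top : K ≠ ⊤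
  maxFn_var : ∀ f : Rn n → ℝ≥0∞, Measurable f → ∫⁻ x, f x ^ p x ≤ 1 →
    ∫⁻ x, (maxFn f x / K) ^ p x ≤ 1
  maxFn_const : ∀ f : Rn n → ℝ≥0∞, Measurable f → ∫⁻ x, f x ^ r ≤ 1 →
    ∫⁻ x, (maxFn f x / K) ^ r ≤ 1
  potential_const : ∀ h : Rn n → ℝ≥0∞, Measurable h → ∫⁻ x, h x ^ (r / κ) ≤ 1 →
    ∫⁻ x, (heatPotential α h x / K) ^ r ≤ 1
  potential_var : ∀ h : Rn n → ℝ≥0∞, Measurable h → ∫⁻ x, h x ^ (r / κ) ≤ 1 →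
    ∫⁻ x, h x ^ (p x / κ) ≤ 1 → ∫⁻ x, (heatPotential α h x / K) ^ p x ≤ 1

theorem exists_potentialBounds {n : ℕ} (hn : 1 ≤ n) {α κ r β l u : ℝ} (hα : 0 < α) (hα1 : α ≤ 1)
    (hκ : 1 < κ) (hr : κ < r) (hβ : 0 < β) (hβκ : β / (1 + β) = 1 / κ)
    (hqβ : (n : ℝ) / (2 * α) / (r / κ) = 1 + β) {p : Rn n → ℝ} (hp : IsPLog univ p)
    (hl : κ < l) (hpl : ∀ᵐ x, l ≤ p x) (hpu : ∀ᵐ x, p x ≤ u) :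
    ∃ K, PotentialBounds α κ r p K := by
  have hκ0 : 0 < κ := by linarith
  have hr0 : 0 < r := by linarith
  have hp1 : ∀ x, 1 ≤ p x := fun x => hp.2.1 x (mem_univ x)
  have hq : 1 < r / κ := by rwa [one_lt_div hκ0]
  obtain ⟨K₁, hK₁, h₁⟩ := hp.exists_lintegral_maxFn_rpow_le hn one_pos (hκ.trans hl) hpl hpu
  obtain ⟨K₂, hK₂, h₂⟩ := hp.exists_lintegral_maxFn_rpow_le hn hκ0 hl hpl hpu
  obtain ⟨K₃, hK₃, h₃⟩ := lintegral_maxFn_rpow_le hn (hκ.trans hr)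
  obtain ⟨K₄, hK₄, h₄⟩ := lintegral_maxFn_rpow_le hn hq
  obtain ⟨C, hC, h₅⟩ := exists_heatPotential_le hn hα hα1 hq.le hβ hqβ
  set D : ℝ≥0∞ := max 1 C with hD
  have hDt : D ≠ ⊤ := by simp [hD, hC]
  have hD1 : 1 ≤ D := le_max_left _ _
  have hpot : ∀ h : Rn n → ℝ≥0∞, Measurable h → ∫⁻ x, h x ^ (r / κ) ≤ 1 → ∀ x (s t : ℝ),
      0 ≤ s → s ≤ t → heatPotential α h x ^ s ≤ D ^ t * maxFn h x ^ (s / κ) := by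
    intro h hh hint x s t hs hst
    calc heatPotential α h x ^ s ≤ (D * maxFn h x ^ (1 / κ)) ^ s := by
          refine ENNReal.rpow_le_rpow ((h₅ h hh hint x).trans ?_) hs
          rw [hβκ]
          gcongr
          exact le_max_right _ _
      _ = D ^ s * maxFn h x ^ (s / κ) := by
          rw [ENNReal.mul_rpow_of_nonneg _ _ hs, ← ENNReal.rpow_mul, one_div_mul_eq_div]
      _ ≤ _ := by
          gcongr
  have hDu : ∀ t : ℝ, D ^ t ≠ ⊤ := fun t =>
    ENNReal.rpow_ne_top_of_ne_zero (zero_lt_one.trans_le hD1).ne' hDt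
  set K : ℝ≥0∞ := 1 + K₁ + K₃ + D ^ r * K₄ + D ^ u * K₂ with hK
  have hK1 : 1 ≤ K := by
    simp only [hK, add_assoc]
    exact le_self_add
  have hKt : K ≠ ⊤ := by
    simp only [hK, ne_eq, ENNReal.add_eq_top, not_or]
    exact ⟨⟨⟨⟨ENNReal.one_ne_top, hK₁⟩, hK₃⟩, ENNReal.mul_ne_top (hDu r) hK₄⟩,
      ENNReal.mul_ne_top (hDu u) hK₂⟩
  have hle₁ : K₁ ≤ K := by
    rw [hK, add_comm 1 K₁]; simp only [add_assoc]; exact le_self_add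
  have hle₃ : K₃ ≤ K := by
    rw [hK, add_comm (1 + K₁) K₃]; simp only [add_assoc]; exact le_self_add
  have hle₄ : D ^ r * K₄ ≤ K := le_add_right le_add_self
  have hle₂ : D ^ u * K₂ ≤ K := le_add_self
  refine ⟨K, hK1, hKt, fun f hf hint => ?_, fun f hf hint => ?_, fun h hh hint => ?_,
    fun h hh hint hint' => ?_⟩
  · refine lintegral_div_rpow_le_one hp1 hK1 hKt (le_trans ?_ hle₁)
    simpa only [div_one] using h₁ f hf (by simpa only [div_one] using hint)
  · refine lintegral_div_rpow_le_one (p := fun _ => r) (fun _ => by linarith) hK1 hKt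
      (le_trans ?_ hle₃)
    exact (h₃ f hf).trans (mul_le_of_le_one_right' hint)
  · refine lintegral_div_rpow_le_one (p := fun _ => r) (fun _ => by linarith) hK1 hKt
      (le_trans ?_ hle₄)
    calc ∫⁻ x, heatPotential α h x ^ r ≤ ∫⁻ x, D ^ r * maxFn h x ^ (r / κ) :=
          lintegral_mono fun x => hpot h hh hint x r r hr0.le le_rfl
      _ = D ^ r * ∫⁻ x, maxFn h x ^ (r / κ) := lintegral_const_mul' _ _ (hDu r)
      _ ≤ D ^ r * K₄ := by
          gcongr
          exact (h₄ h hh).trans (mul_le_of_le_one_right' hint)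
  · refine lintegral_div_rpow_le_one hp1 hK1 hKt (le_trans ?_ hle₂)
    calc ∫⁻ x, heatPotential α h x ^ p x ≤ ∫⁻ x, D ^ u * maxFn h x ^ (p x / κ) :=
          lintegral_mono_ae (hpu.mono fun x hx =>
            hpot h hh hint x (p x) u (by linarith [hp1 x]) hx)
      _ = D ^ u * ∫⁻ x, maxFn h x ^ (p x / κ) := lintegral_const_mul' _ _ (hDu u)
      _ ≤ D ^ u * K₂ := by
          gcongr
          exact h₂ h hh hint'

section Modular

variable {X : Type*} [MeasurableSpace X] {μ : Measure X} {p : X → ℝ}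

lemma lintegral_div_rpow_le_one_of_luxNorm_lt (hp : ∀ x, 0 ≤ p x) {f : X → ℝ≥0∞} {c : ℝ≥0∞}
    (h : luxNorm μ p f < c) : ∫⁻ x, (f x / c) ^ p x ∂μ ≤ 1 := by
  obtain ⟨d, hd, hdc⟩ := sInf_lt_iff.1 h
  refine le_trans (lintegral_mono fun x => ?_) hd.2
  gcongr
  exact hp x

lemma luxNorm_le_of_lintegral_div_rpow_le_one {f : X → ℝ≥0∞} {c : ℝ≥0∞} (hc : 0 < c)
    (h : ∫⁻ x, (f x / c) ^ p x ∂μ ≤ 1) : luxNorm μ p f ≤ c :=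
  sInf_le ⟨hc, h⟩

lemma lintegral_rpow_le_one_of_ae_le_max₃ (hpm : Measurable p) (hp : ∀ x, 1 ≤ p x)
    {f F G H : X → ℝ≥0∞} (hF : Measurable F) (hG : Measurable G)
    (hf : ∀ᵐ x ∂μ, f x ≤ max (max (F x) (G x)) (H x) / 3) (hF1 : ∫⁻ x, F x ^ p x ∂μ ≤ 1)
    (hG1 : ∫⁻ x, G x ^ p x ∂μ ≤ 1) (hH1 : ∫⁻ x, H x ^ p x ∂μ ≤ 1) :
    ∫⁻ x, f x ^ p x ∂μ ≤ 1 := by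
  calc ∫⁻ x, f x ^ p x ∂μ ≤ ∫⁻ x, 3⁻¹ * (F x ^ p x + G x ^ p x + H x ^ p x) ∂μ := by
        refine lintegral_mono_ae (hf.mono fun x hx => ?_)
        have hp0 : 0 ≤ p x := by linarith [hp x]
        calc f x ^ p x ≤ (max (max (F x) (G x)) (H x) / 3) ^ p x := by gcongr
          _ = (3⁻¹ : ℝ≥0∞) ^ p x * max (max (F x) (G x)) (H x) ^ p x := by
              rw [div_eq_mul_inv, mul_comm, ENNReal.mul_rpow_of_nonneg _ _ hp0]
          _ ≤ 3⁻¹ * (F x ^ p x + G x ^ p x + H x ^ p x) := by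
              gcongr
              · calc (3⁻¹ : ℝ≥0∞) ^ p x ≤ 3⁻¹ ^ (1 : ℝ) :=
                      ENNReal.rpow_le_rpow_of_exponent_ge
                        (ENNReal.inv_le_one.2 (by norm_num)) (hp x)
                  _ = _ := ENNReal.rpow_one _
              · have hmono : Monotone fun a : ℝ≥0∞ => a ^ p x := ENNReal.monotone_rpow_of_nonneg hp0
                rw [hmono.map_max, hmono.map_max]
                refine max_le (max_le ?_ ?_) le_add_self
                · exact le_self_add.trans le_self_add
                · exact le_add_self.trans le_self_add
    _ = 3⁻¹ * (∫⁻ x, F x ^ p x ∂μ + ∫⁻ x, G x ^ p x ∂μ + ∫⁻ x, H x ^ p x ∂μ) := by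
        rw [lintegral_const_mul' _ _ (by simp), lintegral_add_left (by fun_prop),
          lintegral_add_left (by fun_prop)]
    _ ≤ 3⁻¹ * (1 + 1 + 1) := by gcongr
    _ = 1 := by
        rw [one_add_one_eq_two, two_add_one_eq_three]
        exact ENNReal.inv_mul_cancel (by norm_num) (by norm_num)

lemma lintegral_rpow_le_one_of_ae_le_max (hpm : Measurable p) (hp : ∀ x, 1 ≤ p x)
    {f F G : X → ℝ≥0∞} (hF : Measurable F)
    (hf : ∀ᵐ x ∂μ, f x ≤ max (F x) (G x) / 2) (hF1 : ∫⁻ x, F x ^ p x ∂μ ≤ 1)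
    (hG1 : ∫⁻ x, G x ^ p x ∂μ ≤ 1) : ∫⁻ x, f x ^ p x ∂μ ≤ 1 := by
  calc ∫⁻ x, f x ^ p x ∂μ ≤ ∫⁻ x, 2⁻¹ * (F x ^ p x + G x ^ p x) ∂μ := by
        refine lintegral_mono_ae (hf.mono fun x hx => ?_)
        have hp0 : 0 ≤ p x := by linarith [hp x]
        calc f x ^ p x ≤ (max (F x) (G x) / 2) ^ p x := by gcongr
          _ = (2⁻¹ : ℝ≥0∞) ^ p x * max (F x) (G x) ^ p x := by
              rw [div_eq_mul_inv, mul_comm, ENNReal.mul_rpow_of_nonneg _ _ hp0]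
          _ ≤ 2⁻¹ * (F x ^ p x + G x ^ p x) := by
              gcongr
              · calc (2⁻¹ : ℝ≥0∞) ^ p x ≤ 2⁻¹ ^ (1 : ℝ) :=
                      ENNReal.rpow_le_rpow_of_exponent_ge
                        (ENNReal.inv_le_one.2 (by norm_num)) (hp x)
                  _ = _ := ENNReal.rpow_one _
              · have hmono : Monotone fun a : ℝ≥0∞ => a ^ p x := ENNReal.monotone_rpow_of_nonneg hp0
                rw [hmono.map_max]
                exact max_le le_self_add le_add_self
    _ = 2⁻¹ * (∫⁻ x, F x ^ p x ∂μ + ∫⁻ x, G x ^ p x ∂μ) := by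
        rw [lintegral_const_mul' _ _ (by simp), lintegral_add_left (by fun_prop)]
    _ ≤ 2⁻¹ * (1 + 1) := by gcongr
    _ = 1 := by
        rw [one_add_one_eq_two]
        exact ENNReal.inv_mul_cancel (by norm_num) (by norm_num)

lemma lintegral_iSup_div_rpow_le_one (hpm : Measurable p) (hp : ∀ x, 0 < p x)
    {f : ℕ → X → ℝ≥0∞} (hf : ∀ k, Measurable (f k)) (hmono : Monotone f) {c : ℝ≥0∞}
    (h : ∀ k, ∫⁻ x, (f k x / c) ^ p x ∂μ ≤ 1) : ∫⁻ x, ((⨆ k, f k x) / c) ^ p x ∂μ ≤ 1 := by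
  have : ∀ x, ((⨆ k, f k x) / c) ^ p x = ⨆ k, (f k x / c) ^ p x := fun x => by
    rw [ENNReal.iSup_div]
    exact (ENNReal.orderIsoRpow (p x) (hp x)).map_iSup _
  simp_rw [this]
  rw [lintegral_iSup (fun k => ((hf k).div_const c).pow hpm)]
  · exact iSup_le h
  · intro i j hij x
    have := (hp x).le
    dsimp only
    gcongr
    exact hmono hij x

lemma ae_lt_top_of_lintegral_div_rpow_le_one {r : ℝ} (hr : 0 < r) {f : X → ℝ≥0∞}
    (hf : Measurable f) {c : ℝ≥0∞} (hc : c ≠ ⊤) (h : ∫⁻ x, (f x / c) ^ r ∂μ ≤ 1) :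
    ∀ᵐ x ∂μ, f x < ⊤ := by
  filter_upwards [ae_lt_top (by fun_prop) (h.trans_lt ENNReal.one_lt_top).ne] with x hx
  rw [lt_top_iff_ne_top]
  rintro h
  rw [h, ENNReal.top_div_of_ne_top hc, ENNReal.top_rpow_of_pos hr] at hx
  exact lt_irrefl _ hx

end Modular

section TimeSup

variable {n : ℕ}

lemma timeSup_eq (u : ℝ → Rn n → ℝ) (x : Rn n) :
    timeSup n u x = essSup (fun t => ‖u t x‖ₑ) (volume.restrict (Ioi (0 : ℝ))) := by
  simp only [timeSup, Real.enorm_eq_ofReal_abs]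

lemma measurable_timeSup {u : ℝ → Rn n → ℝ} (hu : Measurable (Function.uncurry u)) :
    Measurable (timeSup n u) := by
  refine measurable_of_Iic fun c => ?_
  have hs : MeasurableSet {q : Rn n × ℝ | c < ‖u q.2 q.1‖ₑ} :=
    measurableSet_lt measurable_const ((hu.comp measurable_swap).enorm)
  convert (measurable_measure_prodMk_left (ν := volume.restrict (Ioi (0 : ℝ))) hs)
    (measurableSet_singleton 0) using 1
  ext x
  rw [mem_preimage, mem_Iic, mem_preimage, mem_singleton_iff, timeSup_eq]
  constructor
  · intro h
    have := ENNReal.ae_le_essSup (μ := volume.restrict (Ioi (0 : ℝ))) (fun t => ‖u t x‖ₑ)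
    rw [← compl_compl (Prod.mk x ⁻¹' _), ← mem_ae_iff]
    filter_upwards [this] with t ht
    exact not_lt.2 (ht.trans h)
  · intro h
    refine essSup_le_of_ae_le _ ?_
    rw [← compl_compl (Prod.mk x ⁻¹' _), ← mem_ae_iff] at h
    filter_upwards [h] with t ht
    exact not_lt.1 ht

lemma ae_enorm_le_timeSup {u : ℝ → Rn n → ℝ} (hu : Measurable (Function.uncurry u)) :
    ∀ᵐ q : ℝ × Rn n ∂((volume.restrict (Ioi (0 : ℝ))).prod volume),
      ‖u q.1 q.2‖ₑ ≤ timeSup n u q.2 := by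
  have hs : MeasurableSet {q : Rn n × ℝ | ‖u q.2 q.1‖ₑ ≤ timeSup n u q.1} :=
    measurableSet_le ((hu.comp measurable_swap).enorm)
      ((measurable_timeSup hu).comp measurable_fst)
  have h : ∀ᵐ q : Rn n × ℝ ∂(volume.prod (volume.restrict (Ioi (0 : ℝ)))),
      ‖u q.2 q.1‖ₑ ≤ timeSup n u q.1 := by
    refine (Measure.ae_prod_iff_ae_ae hs).2 (Filter.Eventually.of_forall fun x => ?_)
    simp only [timeSup_eq]
    exact ENNReal.ae_le_essSup _
  rw [← Measure.prod_swap] at h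
  exact ae_of_ae_map measurable_swap.aemeasurable h

lemma timeSup_le_of_ae_enorm_le {u : ℝ → Rn n → ℝ} {g : Rn n → ℝ≥0∞}
    (h : ∀ᵐ q : ℝ × Rn n ∂((volume.restrict (Ioi (0 : ℝ))).prod volume), ‖u q.1 q.2‖ₑ ≤ g q.2) :
    timeSup n u ≤ᵐ[volume] g := by
  rw [← Measure.prod_swap] at h
  filter_upwards [Measure.ae_ae_of_ae_prod (ae_of_ae_map measurable_swap.aemeasurable h)] with x hx
  rw [timeSup_eq]
  exact essSup_le_of_ae_le _ hx

end TimeSup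

section Majorant

variable {n b : ℕ} {α r : ℝ} {p : Rn n → ℝ} {K : ℝ≥0∞}

lemma heatPotential_eq_mul_div {h : Rn n → ℝ≥0∞} (hh : Measurable h) {c : ℝ≥0∞} (hc : c ≠ 0)
    (hc' : c ≠ ⊤) (x : Rn n) : heatPotential α h x = c * heatPotential α (fun y => h y / c) x := by
  rw [← heatPotential_const_mul (hh.div_const c)]
  simp_rw [ENNReal.mul_div_cancel hc hc']

lemma maxFn_le_mul_div {f : Rn n → ℝ≥0∞} (hf : Measurable f) {c : ℝ≥0∞} (hc : c ≠ 0)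
    (hc' : c ≠ ⊤) (x : Rn n) : maxFn f x ≤ c * maxFn (fun y => f y / c) x := by
  simpa only [ENNReal.mul_div_cancel hc hc'] using maxFn_const_mul_le (hf.div_const c) c x

lemma heatPotential_pow_eq {E : Rn n → ℝ≥0∞} (hE : Measurable E) {R : ℝ≥0∞} (hR : R ≠ 0)
    (hR' : R ≠ ⊤) (x : Rn n) : heatPotential α (fun y => E y ^ (b + 1)) x =
      R ^ (b + 1) * heatPotential α (fun y => (E y / R) ^ (b + 1)) x := by
  rw [heatPotential_eq_mul_div (hE.pow_const _) (pow_ne_zero (b + 1) hR)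
    (ENNReal.pow_ne_top hR')]
  simp_rw [div_eq_mul_inv, mul_pow, ENNReal.inv_pow]

/-- One step of the fixed point iteration for the majorant is a bounded multiple of the maximum of
three functions of modular at most one. -/
lemma maxFn_add_heatPotential_div_le {f h E : Rn n → ℝ≥0∞} (hf : Measurable f)
    (hh : Measurable h) (hE : Measurable E) {e R : ℝ≥0∞} (he : e ≠ 0) (he' : e ≠ ⊤) (hR : R ≠ 0)
    (hR' : R ≠ ⊤) (hK : K ≠ 0) (hK' : K ≠ ⊤) (heR : e * K ≤ R / 9) (hRK : R ^ b * K ≤ 9⁻¹)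
    (x : Rn n) :
    (maxFn f x + heatPotential α h x + heatPotential α (fun y => E y ^ (b + 1)) x) / R ≤
      max (max (maxFn (fun y => f y / e) x / K) (heatPotential α (fun y => h y / e) x / K))
        (heatPotential α (fun y => (E y / R) ^ (b + 1)) x / K) / 3 := by
  set X := maxFn (fun y => f y / e) x / K with hX
  set Y := heatPotential α (fun y => h y / e) x / K with hY
  set Z := heatPotential α (fun y => (E y / R) ^ (b + 1)) x / K with hZ
  set m := max (max X Y) Z with hm
  have hXm : X ≤ m := (le_max_left X Y).trans (le_max_left _ _)
  have hYm : Y ≤ m := (le_max_right X Y).trans (le_max_left _ _)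
  have hZm : Z ≤ m := le_max_right _ _
  refine ENNReal.div_le_of_le_mul ?_
  have h₁ : maxFn f x ≤ R / 9 * m :=
    calc maxFn f x ≤ e * (K * X) := by
          rw [hX, ENNReal.mul_div_cancel hK hK']
          exact maxFn_le_mul_div hf he he' x
      _ = e * K * X := by ring
      _ ≤ R / 9 * m := by gcongr
  have h₂ : heatPotential α h x ≤ R / 9 * m :=
    calc heatPotential α h x = e * (K * Y) := by
          rw [hY, ENNReal.mul_div_cancel hK hK']
          exact heatPotential_eq_mul_div hh he he' x
      _ = e * K * Y := by ring
      _ ≤ R / 9 * m := by gcongr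
  have h₃ : heatPotential α (fun y => E y ^ (b + 1)) x ≤ R / 9 * m :=
    calc heatPotential α (fun y => E y ^ (b + 1)) x = R ^ (b + 1) * (K * Z) := by
          rw [hZ, ENNReal.mul_div_cancel hK hK']
          exact heatPotential_pow_eq hE hR hR' x
      _ = R * (R ^ b * K) * Z := by ring
      _ ≤ R * 9⁻¹ * m := by gcongr
      _ = R / 9 * m := by rw [div_eq_mul_inv]
  calc maxFn f x + heatPotential α h x + heatPotential α (fun y => E y ^ (b + 1)) x
      ≤ R / 9 * m + R / 9 * m + R / 9 * m := by gcongr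
    _ = m * (3 * 9⁻¹) * R := by rw [div_eq_mul_inv]; ring
    _ = m / 3 * R := by
        rw [div_eq_mul_inv m, show (9 : ℝ≥0∞) = 3 * 3 by norm_num,
          ENNReal.mul_inv (by simp) (by simp), ← mul_assoc 3,
          ENNReal.mul_inv_cancel (by simp) (by simp), one_mul]

/-- The Picard iterates for the equation `E = A + I(E ^ (b + 1))`, where `I` is the potential. -/
def majorantSeq (α : ℝ) (b : ℕ) (A : Rn n → ℝ≥0∞) : ℕ → Rn n → ℝ≥0∞
  | 0 => fun _ => 0
  | k + 1 => fun x => A x + heatPotential α (fun y => majorantSeq α b A k y ^ (b + 1)) x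

lemma measurable_majorantSeq {A : Rn n → ℝ≥0∞} (hA : Measurable A) :
    ∀ k, Measurable (majorantSeq α b A k)
  | 0 => measurable_const
  | k + 1 => hA.add (measurable_heatPotential ((measurable_majorantSeq hA k).pow_const _))

lemma monotone_majorantSeq (A : Rn n → ℝ≥0∞) : Monotone (majorantSeq α b A) := by
  refine monotone_nat_of_le_succ fun k => ?_
  induction k with
  | zero => exact fun x => zero_le
  | succ k ih =>
      intro x
      refine add_le_add le_rfl (heatPotential_mono (Filter.Eventually.of_forall fun y => ?_) x)
      exact pow_le_pow_left' (ih y) _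

theorem PotentialBounds.exists_majorant (hK : PotentialBounds α ((b : ℝ) + 1) r p K)
    (hpm : Measurable p) (hp : ∀ x, 1 ≤ p x) (hr : 1 ≤ r) {f h : Rn n → ℝ≥0∞} (hf : Measurable f)
    (hh : Measurable h) {e R : ℝ≥0∞} (he : e ≠ 0) (he' : e ≠ ⊤) (hR : R ≠ 0)
    (hR' : R ≠ ⊤) (heR : e * K ≤ R / 9) (hRK : R ^ b * K ≤ 9⁻¹)
    (hfp : ∫⁻ x, (f x / e) ^ p x ≤ 1) (hfr : ∫⁻ x, (f x / e) ^ r ≤ 1)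
    (hhp : ∫⁻ x, (h x / e) ^ (p x / ((b : ℝ) + 1)) ≤ 1)
    (hhr : ∫⁻ x, (h x / e) ^ (r / ((b : ℝ) + 1)) ≤ 1) :
    ∃ E : Rn n → ℝ≥0∞, Measurable E ∧
      (∀ x, E x = maxFn f x + heatPotential α h x + heatPotential α (fun y => E y ^ (b + 1)) x) ∧
      ∫⁻ x, (E x / R) ^ p x ≤ 1 ∧ ∫⁻ x, (E x / R) ^ r ≤ 1 := by
  have hκ : (0 : ℝ) < (b : ℝ) + 1 := by positivity
  have hK0 : K ≠ 0 := (zero_lt_one.trans_le hK.one_le).ne'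
  set A : Rn n → ℝ≥0∞ := fun x => maxFn f x + heatPotential α h x with hA
  have hAm : Measurable A := (measurable_maxFn f).add (measurable_heatPotential hh)
  have hm := measurable_majorantSeq (α := α) (b := b) hAm
  have hmono := monotone_majorantSeq (α := α) (b := b) A
  have hfe : Measurable fun x => f x / e := hf.div_const e
  have hhe : Measurable fun x => h x / e := hh.div_const e
  have hpow : ∀ (a : ℝ≥0∞) (s : ℝ), (a ^ (b + 1)) ^ (s / ((b : ℝ) + 1)) = a ^ s := by
    intro a s
    rw [← ENNReal.rpow_natCast, ← ENNReal.rpow_mul]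
    congr 1
    push_cast
    field_simp
  have hind : ∀ k, ∫⁻ x, (majorantSeq α b A k x / R) ^ p x ≤ 1 ∧
      ∫⁻ x, (majorantSeq α b A k x / R) ^ r ≤ 1 := by
    intro k
    induction k with
    | zero =>
        have h0 : ∀ s : ℝ, 1 ≤ s → (0 : ℝ≥0∞) ^ s = 0 := fun s hs =>
          ENNReal.zero_rpow_of_pos (by linarith)
        have hp0 : ∀ x, (0 : ℝ≥0∞) ^ p x = 0 := fun x => h0 _ (hp x)
        simp [majorantSeq, h0 r hr, hp0]
    | succ k ih =>
        have hEm : Measurable fun y => (majorantSeq α b A k y / R) ^ (b + 1) :=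
          ((hm k).div_const R).pow_const _
        have hEr : ∫⁻ y, ((majorantSeq α b A k y / R) ^ (b + 1)) ^ (r / ((b : ℝ) + 1)) ≤ 1 := by
          simpa only [hpow] using ih.2
        have hEp : ∫⁻ y, ((majorantSeq α b A k y / R) ^ (b + 1)) ^ (p y / ((b : ℝ) + 1)) ≤ 1 := by
          simpa only [hpow] using ih.1
        have hle := maxFn_add_heatPotential_div_le (α := α) hf hh (hm k) he he' hR hR' hK0
          hK.ne_top heR hRK
        constructor
        · exact lintegral_rpow_le_one_of_ae_le_max₃ hpm hp ((measurable_maxFn _).div_const K)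
            ((measurable_heatPotential hhe).div_const K) (Filter.Eventually.of_forall hle)
            (hK.maxFn_var _ hfe hfp) (hK.potential_var _ hhe hhr hhp)
            (hK.potential_var _ hEm hEr hEp)
        · exact lintegral_rpow_le_one_of_ae_le_max₃ (p := fun _ => r) measurable_const
            (fun _ => hr) ((measurable_maxFn _).div_const K)
            ((measurable_heatPotential hhe).div_const K) (Filter.Eventually.of_forall hle)
            (hK.maxFn_const _ hfe hfr) (hK.potential_const _ hhe hhr)
            (hK.potential_const _ hEm hEr)
  refine ⟨fun x => ⨆ k, majorantSeq α b A k x, .iSup hm, fun x => ?_,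
    lintegral_iSup_div_rpow_le_one hpm (fun x => by linarith [hp x]) hm hmono
      fun k => (hind k).1,
    lintegral_iSup_div_rpow_le_one measurable_const (fun x => by linarith) hm hmono
      fun k => (hind k).2⟩
  have hsup : ∀ y, (⨆ k, majorantSeq α b A k y) ^ (b + 1) =
      ⨆ k, majorantSeq α b A k y ^ (b + 1) := fun y => ENNReal.iSup_pow _ _
  simp_rw [hsup]
  rw [heatPotential_iSup (fun k => (hm k).pow_const _)
    (fun i j hij y => pow_le_pow_left' (hmono hij y) _), ENNReal.add_iSup]
  refine le_antisymm (iSup_le fun k => ?_) (iSup_le fun k => ?_)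
  · exact (hmono k.le_succ x).trans
      (le_iSup (fun k => A x + heatPotential α (fun y => majorantSeq α b A k y ^ (b + 1)) x) k)
  · exact le_iSup (fun k => majorantSeq α b A k x) (k + 1)

end Majorant

section Linearized

variable {n b : ℕ} {α r : ℝ} {p : Rn n → ℝ} {K : ℝ≥0∞}

/-- The linearization at `G` of the map `E ↦ I(E ^ (b + 1))`, where `I` is the potential. -/
def linPotential (α : ℝ) (b : ℕ) (G δ : Rn n → ℝ≥0∞) (x : Rn n) : ℝ≥0∞ :=
  heatPotential α (fun y => ((b : ℝ≥0∞) + 1) * G y ^ b * δ y) x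

lemma measurable_linPotential {G δ : Rn n → ℝ≥0∞} (hG : Measurable G) (hδ : Measurable δ) :
    Measurable (linPotential α b G δ) :=
  measurable_heatPotential (by fun_prop)

lemma linPotential_add {G δ δ' : Rn n → ℝ≥0∞} (hG : Measurable G) (hδ : Measurable δ)
    (x : Rn n) : linPotential α b G (fun y => δ y + δ' y) x =
      linPotential α b G δ x + linPotential α b G δ' x := by
  simp only [linPotential, mul_add]
  exact heatPotential_add (by fun_prop) x

lemma linPotential_zero (G : Rn n → ℝ≥0∞) (x : Rn n) :
    linPotential α b G (fun _ => 0) x = 0 := by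
  simp [linPotential, heatPotential]

theorem PotentialBounds.lintegral_linPotential_le_one (hK : PotentialBounds α ((b : ℝ) + 1) r p K) (hr : 1 ≤ r)
    {G δ : Rn n → ℝ≥0∞} (hG : Measurable G) (hδ : Measurable δ) {P D : ℝ≥0∞} (hP : P ≠ 0)
    (hP' : P ≠ ⊤) (hD : D ≠ 0) (hD' : D ≠ ⊤)
    (hsmall : ((b : ℝ≥0∞) + 1) * 2 ^ (b + 1) * P ^ b * K ≤ 4⁻¹)
    (hGr : ∫⁻ x, (G x / P) ^ r ≤ 1) (hδr : ∫⁻ x, (δ x / D) ^ r ≤ 1) :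
    ∫⁻ x, (linPotential α b G δ x / (D / 4)) ^ r ≤ 1 := by
  have hκ : (0 : ℝ) < (b : ℝ) + 1 := by positivity
  have hK0 : K ≠ 0 := (zero_lt_one.trans_le hK.one_le).ne'
  set w : Rn n → ℝ≥0∞ := fun y => max (G y / P) (δ y / D) / 2 with hw
  have hwm : Measurable w := ((hG.div_const P).max (hδ.div_const D)).div_const 2
  have hw1 : ∫⁻ y, (w y ^ (b + 1)) ^ (r / ((b : ℝ) + 1)) ≤ 1 := by
    have : ∀ y, (w y ^ (b + 1)) ^ (r / ((b : ℝ) + 1)) = w y ^ r := by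
      intro y
      rw [← ENNReal.rpow_natCast, ← ENNReal.rpow_mul]
      congr 1
      push_cast
      field_simp
    simp_rw [this]
    exact lintegral_rpow_le_one_of_ae_le_max (p := fun _ => r) measurable_const (fun _ => hr)
      (hG.div_const P) (Filter.Eventually.of_forall fun _ => le_rfl) hGr hδr
  have h2w : ∀ y, max (G y / P) (δ y / D) = 2 * w y := fun y =>
    (ENNReal.mul_div_cancel (by simp) (by simp)).symm
  have hGw : ∀ y, G y ≤ P * (2 * w y) := fun y => by
    rw [← h2w]
    calc G y = P * (G y / P) := (ENNReal.mul_div_cancel hP hP').symm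
      _ ≤ _ := by
        gcongr
        exact le_max_left _ _
  have hδw : ∀ y, δ y ≤ D * (2 * w y) := fun y => by
    rw [← h2w]
    calc δ y = D * (δ y / D) := (ENNReal.mul_div_cancel hD hD').symm
      _ ≤ _ := by
        gcongr
        exact le_max_right _ _
  refine le_trans (lintegral_mono fun x => ENNReal.rpow_le_rpow ?_ (by linarith))
    (hK.potential_const _ (hwm.pow_const (b + 1)) hw1)
  refine ENNReal.div_le_of_le_mul ?_
  set Z := heatPotential α (fun y => w y ^ (b + 1)) x / K with hZ
  calc linPotential α b G δ x
      ≤ heatPotential α (fun y => (((b : ℝ≥0∞) + 1) * 2 ^ (b + 1) * P ^ b * D) *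
          w y ^ (b + 1)) x := by
        refine heatPotential_mono (Filter.Eventually.of_forall fun y => ?_) x
        calc ((b : ℝ≥0∞) + 1) * G y ^ b * δ y
            ≤ ((b : ℝ≥0∞) + 1) * (P * (2 * w y)) ^ b * (D * (2 * w y)) := by
              gcongr
              · exact hGw y
              · exact hδw y
          _ = _ := by ring
    _ = (((b : ℝ≥0∞) + 1) * 2 ^ (b + 1) * P ^ b * D) * (K * Z) := by
        rw [heatPotential_const_mul (hwm.pow_const _), hZ, ENNReal.mul_div_cancel hK0 hK.ne_top]
    _ = (((b : ℝ≥0∞) + 1) * 2 ^ (b + 1) * P ^ b * K) * D * Z := by ring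
    _ ≤ 4⁻¹ * D * Z := by gcongr
    _ = Z * (D / 4) := by
        rw [div_eq_mul_inv D]
        ring

/-- Successive images of `E` under the linearization at `E`. -/
def linSeq (α : ℝ) (b : ℕ) (E : Rn n → ℝ≥0∞) : ℕ → Rn n → ℝ≥0∞
  | 0 => E
  | k + 1 => linPotential α b E (linSeq α b E k)

lemma measurable_linSeq {E : Rn n → ℝ≥0∞} (hE : Measurable E) : ∀ k, Measurable (linSeq α b E k)
  | 0 => hE
  | k + 1 => measurable_linPotential hE (measurable_linSeq hE k)

lemma sum_linSeq_succ {E : Rn n → ℝ≥0∞} (hE : Measurable E) (N : ℕ) (x : Rn n) :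
    ∑ k ∈ Finset.range (N + 1), linSeq α b E k x =
      E x + linPotential α b E (fun y => ∑ k ∈ Finset.range N, linSeq α b E k y) x := by
  induction N with
  | zero => simp [linSeq, linPotential_zero]
  | succ N ih =>
      rw [Finset.sum_range_succ, ih]
      simp_rw [Finset.sum_range_succ _ N]
      rw [linPotential_add hE (Finset.measurable_fun_sum _ fun k _ => measurable_linSeq hE k),
        add_assoc]
      rfl

theorem PotentialBounds.ae_tsum_linSeq_lt_top (hK : PotentialBounds α ((b : ℝ) + 1) r p K)
    (hr : 1 ≤ r) {E : Rn n → ℝ≥0∞} (hE : Measurable E) {R : ℝ≥0∞} (hR : R ≠ 0) (hR' : R ≠ ⊤)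
    (hsmall : ((b : ℝ≥0∞) + 1) * 2 ^ (b + 1) * R ^ b * K ≤ 4⁻¹)
    (hEr : ∫⁻ x, (E x / R) ^ r ≤ 1) : ∀ᵐ x, ∑' k, linSeq α b E k x < ⊤ := by
  have hR4 : 4 * R ≠ 0 := mul_ne_zero (by simp) hR
  have hR4' : 4 * R ≠ ⊤ := ENNReal.mul_ne_top (by simp) hR'
  have hm := measurable_linSeq (α := α) (b := b) hE
  have hsm : ∀ N, Measurable fun y => ∑ k ∈ Finset.range N, linSeq α b E k y := fun N =>
    Finset.measurable_fun_sum _ fun k _ => hm k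
  have hind : ∀ N, ∫⁻ x, ((∑ k ∈ Finset.range N, linSeq α b E k x) / (4 * R)) ^ r ≤ 1 := by
    intro N
    induction N with
    | zero => simp [ENNReal.zero_rpow_of_pos (zero_lt_one.trans_le hr)]
    | succ N ih =>
        have h := hK.lintegral_linPotential_le_one hr hE (hsm N) hR hR' hR4 hR4' hsmall hEr ih
        rw [mul_comm, ENNReal.mul_div_cancel_right (by simp) (by simp)] at h
        refine lintegral_rpow_le_one_of_ae_le_max (p := fun _ => r) measurable_const (fun _ => hr)
          (hE.div_const R) (Filter.Eventually.of_forall fun x => ?_) hEr h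
        rw [sum_linSeq_succ hE]
        set S := linPotential α b E (fun y => ∑ k ∈ Finset.range N, linSeq α b E k y) x
        set m := max (E x / R) (S / R) with hm
        have h₁ : E x ≤ R * m := by
          rw [← ENNReal.mul_div_cancel hR hR' (b := E x)]
          gcongr
          exact le_max_left _ _
        have h₂ : S ≤ R * m := by
          rw [← ENNReal.mul_div_cancel hR hR' (b := S)]
          gcongr
          exact le_max_right _ _
        refine ENNReal.div_le_of_le_mul ?_
        calc E x + S ≤ R * m + R * m := by gcongr
          _ = m * R * 2 := by ring
          _ = m * R * (2 * (2⁻¹ * 2)) := by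
              rw [ENNReal.inv_mul_cancel (by simp) (by simp), mul_one]
          _ = m / 2 * (4 * R) := by
              rw [div_eq_mul_inv]
              ring
  have h := lintegral_iSup_div_rpow_le_one (p := fun _ : Rn n => r) (μ := volume) measurable_const
    (fun _ => by linarith) hsm (fun i j hij x => Finset.sum_le_sum_of_subset
      (Finset.range_subset_range.2 hij)) hind
  simp_rw [ENNReal.tsum_eq_iSup_nat]
  exact ae_lt_top_of_lintegral_div_rpow_le_one (by linarith) (.iSup hsm) hR4' h

theorem PotentialBounds.ae_eq_zero_of_le_linPotential
    (hK : PotentialBounds α ((b : ℝ) + 1) r p K)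
    (hr : 1 ≤ r) {G w : Rn n → ℝ≥0∞} (hG : Measurable G) (hw : Measurable w) {P D : ℝ≥0∞}
    (hP : P ≠ 0) (hP' : P ≠ ⊤) (hD : D ≠ 0) (hD' : D ≠ ⊤)
    (hsmall : ((b : ℝ≥0∞) + 1) * 2 ^ (b + 1) * P ^ b * K ≤ 4⁻¹)
    (hGr : ∫⁻ x, (G x / P) ^ r ≤ 1) (hwr : ∫⁻ x, (w x / D) ^ r ≤ 1)
    (hle : w ≤ᵐ[volume] linPotential α b G w) : w =ᵐ[volume] 0 := by
  have hr0 : 0 < r := by linarith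
  have hind : ∀ k : ℕ, ∫⁻ x, (w x / (D / 4 ^ k)) ^ r ≤ 1 := by
    intro k
    induction k with
    | zero => simpa using hwr
    | succ k ih =>
        have h := hK.lintegral_linPotential_le_one hr hG hw hP hP' (ENNReal.div_ne_zero.2 ⟨hD, by simp⟩)
          (ENNReal.div_ne_top hD' (by simp)) hsmall hGr ih
        have h4 : D / 4 ^ k / 4 = D / 4 ^ (k + 1) := by
          rw [div_eq_mul_inv, div_eq_mul_inv, div_eq_mul_inv, ENNReal.inv_pow,
            ENNReal.inv_pow, pow_succ, mul_assoc]
        rw [h4] at h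
        refine le_trans (lintegral_mono_ae (hle.mono fun x hx => ?_)) h
        gcongr
  have hk : ∀ k : ℕ, ∫⁻ x, (w x / D) ^ r ≤ (4⁻¹ : ℝ≥0∞) ^ k := by
    intro k
    calc ∫⁻ x, (w x / D) ^ r ≤ ∫⁻ x, (4⁻¹ : ℝ≥0∞) ^ k * (w x / (D / 4 ^ k)) ^ r := by
          refine lintegral_mono fun x => ?_
          have hwx : w x / D = (4⁻¹ : ℝ≥0∞) ^ k * (w x / (D / 4 ^ k)) := by
            calc w x / D = (4⁻¹ : ℝ≥0∞) ^ k * 4 ^ k * (w x * D⁻¹) := by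
                  rw [← mul_pow, ENNReal.inv_mul_cancel (by simp) (by simp), one_pow, one_mul,
                    div_eq_mul_inv]
              _ = (4⁻¹ : ℝ≥0∞) ^ k * (w x / (D / 4 ^ k)) := by
                  rw [div_eq_mul_inv D, div_eq_mul_inv (w x), ENNReal.mul_inv (.inl hD) (.inl hD'),
                    inv_inv]
                  ring
          rw [hwx, ENNReal.mul_rpow_of_nonneg _ _ hr0.le]
          gcongr
          have h1 : (4⁻¹ : ℝ≥0∞) ^ k ≤ 1 := pow_le_one₀ zero_le (ENNReal.inv_le_one.2 (by norm_num))
          calc ((4⁻¹ : ℝ≥0∞) ^ k) ^ r ≤ ((4⁻¹ : ℝ≥0∞) ^ k) ^ (1 : ℝ) :=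
                ENNReal.rpow_le_rpow_of_exponent_ge h1 hr
            _ = _ := ENNReal.rpow_one _
      _ = (4⁻¹ : ℝ≥0∞) ^ k * ∫⁻ x, (w x / (D / 4 ^ k)) ^ r :=
          lintegral_const_mul' _ _ (ENNReal.pow_ne_top (by simp))
      _ ≤ (4⁻¹ : ℝ≥0∞) ^ k * 1 := by
          gcongr
          exact hind k
      _ = _ := mul_one _
  have h0 : ∫⁻ x, (w x / D) ^ r = 0 :=
    le_antisymm (ge_of_tendsto' (ENNReal.tendsto_pow_atTop_nhds_zero_of_lt_one
      (ENNReal.inv_lt_one.2 (by norm_num))) hk) zero_le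
  rw [lintegral_eq_zero_iff (by fun_prop)] at h0
  filter_upwards [h0] with x hx
  simpa [ENNReal.rpow_eq_zero_iff_of_pos hr0, hD', ENNReal.div_eq_zero_iff] using hx

end Linearized

lemma abs_pow_mul_self_sub_le (b : ℕ) (a c : ℝ) :
    ‖|a| ^ b * a - |c| ^ b * c‖ ≤ ((b : ℝ) + 1) * max |a| |c| ^ b * |a - c| := by
  simp only [Real.norm_eq_abs]
  induction b with
  | zero => simp
  | succ b ih =>
      set m := max |a| |c| with hm
      have ha : |a| ≤ m := le_max_left _ _
      have hc : |c| ≤ m := le_max_right _ _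
      have hm0 : 0 ≤ m := (abs_nonneg a).trans ha
      have hcb : |c| ^ b * |c| ≤ m ^ b * m := by gcongr
      calc |(|a| ^ (b + 1) * a - |c| ^ (b + 1) * c)|
          = |(|a| * (|a| ^ b * a - |c| ^ b * c) + |c| ^ b * c * (|a| - |c|))| := by
            congr 1
            ring
        _ ≤ |a| * |(|a| ^ b * a - |c| ^ b * c)| + |c| ^ b * |c| * |(|a| - |c|)| := by
            refine (abs_add_le _ _).trans (le_of_eq ?_)
            simp only [abs_mul, abs_pow, abs_abs]
        _ ≤ m * (((b : ℝ) + 1) * m ^ b * |a - c|) + m ^ b * m * |a - c| := by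
            have hac := abs_abs_sub_abs_le_abs_sub a c
            refine add_le_add (by gcongr) (mul_le_mul hcb hac (abs_nonneg _) (by positivity))
        _ = (((b + 1 : ℕ) : ℝ) + 1) * m ^ (b + 1) * |a - c| := by
            push_cast
            ring

lemma enorm_abs_pow_mul_self_sub_le (b : ℕ) (a c : ℝ) :
    ‖|a| ^ b * a - |c| ^ b * c‖ₑ ≤ ((b : ℝ≥0∞) + 1) * max ‖a‖ₑ ‖c‖ₑ ^ b * ‖a - c‖ₑ := by
  have h := ENNReal.ofReal_le_ofReal (abs_pow_mul_self_sub_le b a c)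
  rw [ofReal_norm, ENNReal.ofReal_mul (by positivity), ENNReal.ofReal_mul (by positivity),
    ENNReal.ofReal_pow (by positivity), ENNReal.ofReal_max, ← Real.enorm_eq_ofReal_abs,
    ← Real.enorm_eq_ofReal_abs, ← Real.enorm_eq_ofReal_abs,
    ENNReal.ofReal_add (by positivity) zero_le_one, ENNReal.ofReal_natCast, ENNReal.ofReal_one] at h
  exact h

lemma enorm_abs_pow_mul_self (b : ℕ) (a : ℝ) : ‖|a| ^ b * a‖ₑ = ‖a‖ₑ ^ (b + 1) := by
  rw [enorm_mul, enorm_pow, ← Real.norm_eq_abs, enorm_norm, pow_succ]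

section Duhamel

variable {n : ℕ} {α : ℝ}

/-- The space-time measure on `(0, ∞) × ℝ^n`. -/
abbrev spaceTime (n : ℕ) : Measure (ℝ × Rn n) := (volume.restrict (Ioi (0 : ℝ))).prod volume

/-- The Duhamel integral `∫_0^t 𝔤_{t-s} ∗ f(s) ds`, written as a space-time integral; the kernel
vanishes for negative times. -/
def duhamel (α : ℝ) (f : ℝ → Rn n → ℝ) (t : ℝ) (x : Rn n) : ℝ :=
  ∫ q, gKer n α (t - q.1) (x - q.2) * f q.1 q.2 ∂(spaceTime n)

lemma ae_spaceTime_of_ae {P : Rn n → Prop} (h : ∀ᵐ x, P x) : ∀ᵐ q ∂(spaceTime n), P q.2 :=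
  Measure.quasiMeasurePreserving_snd.ae h

lemma lintegral_enorm_duhamel_le (hn : 1 ≤ n) (hα : 0 < α) (hα1 : α ≤ 1) {f : ℝ → Rn n → ℝ}
    {h : Rn n → ℝ≥0∞} (hh : Measurable h) (hle : ∀ᵐ q ∂(spaceTime n), ‖f q.1 q.2‖ₑ ≤ h q.2)
    (t : ℝ) (x : Rn n) :
    ∫⁻ q, ‖gKer n α (t - q.1) (x - q.2) * f q.1 q.2‖ₑ ∂(spaceTime n) ≤ heatPotential α h x := by
  have hk : ∀ (s : ℝ) (y : Rn n), ‖gKer n α s y‖ₑ = ENNReal.ofReal (gKer n α s y) := fun s y => by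
    rw [Real.enorm_eq_ofReal_abs, abs_of_nonneg ((isMaxKernel_gKer hn hα hα1 s).1 y)]
  have hm : Measurable fun s : ℝ => ∫⁻ y, ENNReal.ofReal (gKer n α s (x - y)) * h y :=
    measurable_lintegral_gKer_mul_time hh x
  calc ∫⁻ q, ‖gKer n α (t - q.1) (x - q.2) * f q.1 q.2‖ₑ ∂(spaceTime n)
      ≤ ∫⁻ q, ENNReal.ofReal (gKer n α (t - q.1) (x - q.2)) * h q.2 ∂(spaceTime n) := by
        refine lintegral_mono_ae (hle.mono fun q hq => ?_)
        rw [enorm_mul, hk]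
        gcongr
    _ = ∫⁻ s in Ioi (0 : ℝ), (∫⁻ y, ENNReal.ofReal (gKer n α (t - s) (x - y)) * h y) :=
        lintegral_prod _ (by fun_prop)
    _ ≤ ∫⁻ s : ℝ, (∫⁻ y, ENNReal.ofReal (gKer n α (t - s) (x - y)) * h y) :=
        setLIntegral_le_lintegral _ _
    _ = ∫⁻ s : ℝ, (∫⁻ y, ENNReal.ofReal (gKer n α s (x - y)) * h y) :=
        lintegral_sub_left_eq_self (fun s => ∫⁻ y, ENNReal.ofReal (gKer n α s (x - y)) * h y) t
    _ = heatPotential α h x := by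
        rw [heatPotential, ← lintegral_indicator measurableSet_Ioi]
        refine lintegral_congr fun s => ?_
        by_cases hs : s ∈ Ioi (0 : ℝ)
        · rw [indicator_of_mem hs]
        · rw [indicator_of_notMem hs]
          simp [gKer_of_nonpos hn (not_lt.1 hs)]

lemma integrable_duhamel (hn : 1 ≤ n) (hα : 0 < α) (hα1 : α ≤ 1) {f : ℝ → Rn n → ℝ}
    (hf : Measurable (Function.uncurry f)) {h : Rn n → ℝ≥0∞} (hh : Measurable h)
    (hle : ∀ᵐ q ∂(spaceTime n), ‖f q.1 q.2‖ₑ ≤ h q.2) {x : Rn n} (hx : heatPotential α h x < ⊤)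
    (t : ℝ) : Integrable (fun q => gKer n α (t - q.1) (x - q.2) * f q.1 q.2) (spaceTime n) := by
  have hf' : Measurable fun q : ℝ × Rn n => f q.1 q.2 := hf
  have hm : Measurable fun q : ℝ × Rn n => gKer n α (t - q.1) (x - q.2) * f q.1 q.2 := by fun_prop
  exact ⟨hm.aestronglyMeasurable, (lintegral_enorm_duhamel_le hn hα hα1 hh hle t x).trans_lt hx⟩

lemma enorm_duhamel_le (hn : 1 ≤ n) (hα : 0 < α) (hα1 : α ≤ 1) {f : ℝ → Rn n → ℝ}
    {h : Rn n → ℝ≥0∞} (hh : Measurable h) (hle : ∀ᵐ q ∂(spaceTime n), ‖f q.1 q.2‖ₑ ≤ h q.2)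
    (t : ℝ) (x : Rn n) : ‖duhamel α f t x‖ₑ ≤ heatPotential α h x :=
  (enorm_integral_le_lintegral_enorm _).trans (lintegral_enorm_duhamel_le hn hα hα1 hh hle t x)

lemma measurable_duhamel {f : ℝ → Rn n → ℝ} (hf : Measurable (Function.uncurry f)) :
    Measurable (Function.uncurry (duhamel α f)) := by
  have hf' : Measurable fun q : ℝ × Rn n => f q.1 q.2 := hf
  have hf'' : Measurable fun z : (ℝ × Rn n) × (ℝ × Rn n) => f z.2.1 z.2.2 :=
    hf'.comp measurable_snd
  have hm : Measurable fun z : (ℝ × Rn n) × (ℝ × Rn n) =>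
      gKer n α (z.1.1 - z.2.1) (z.1.2 - z.2.2) * f z.2.1 z.2.2 := by fun_prop
  exact hm.stronglyMeasurable.integral_prod_right'.measurable

lemma duhamel_sub {f g : ℝ → Rn n → ℝ} {t : ℝ} {x : Rn n}
    (hf : Integrable (fun q => gKer n α (t - q.1) (x - q.2) * f q.1 q.2) (spaceTime n))
    (hg : Integrable (fun q => gKer n α (t - q.1) (x - q.2) * g q.1 q.2) (spaceTime n)) :
    duhamel α (fun s y => f s y - g s y) t x = duhamel α f t x - duhamel α g t x := by
  simp only [duhamel, mul_sub]
  exact integral_sub hf hg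

lemma spaceTime_eq_restrict :
    spaceTime n = ((volume : Measure ℝ).prod (volume : Measure (Rn n))).restrict
      (Ioi (0 : ℝ) ×ˢ univ) := by
  rw [← Measure.prod_restrict, Measure.restrict_univ]

lemma integrableOn_duhamel {f : ℝ → Rn n → ℝ} {t : ℝ} {x : Rn n}
    (hf : Integrable (fun q => gKer n α (t - q.1) (x - q.2) * f q.1 q.2) (spaceTime n)) :
    IntegrableOn (fun q : ℝ × Rn n => gKer n α (t - q.1) (x - q.2) * f q.1 q.2)
      (Ioc 0 t ×ˢ univ) (volume.prod volume) := by
  rw [spaceTime_eq_restrict] at hf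
  exact IntegrableOn.mono_set hf (prod_mono Ioc_subset_Ioi_self subset_rfl)

/-- The kernel vanishes for nonpositive times, so only the times in `(0, t]` matter. -/
lemma integrable_duhamel_iff (hn : 1 ≤ n) {f : ℝ → Rn n → ℝ} {t : ℝ} {x : Rn n} :
    Integrable (fun q => gKer n α (t - q.1) (x - q.2) * f q.1 q.2) (spaceTime n) ↔
    IntegrableOn (fun q : ℝ × Rn n => gKer n α (t - q.1) (x - q.2) * f q.1 q.2)
      (Ioc 0 t ×ˢ univ) (volume.prod volume) := by
  refine ⟨integrableOn_duhamel, fun h => ?_⟩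
  rw [spaceTime_eq_restrict]
  refine IntegrableOn.of_forall_sdiff_eq_zero h (measurableSet_Ioi.prod .univ) fun q hq => ?_
  have hqt : t < q.1 := by
    by_contra! hle
    exact hq.2 ⟨⟨hq.1.1, hle⟩, mem_univ _⟩
  rw [gKer_of_nonpos hn (by linarith), zero_mul]

lemma duhamel_eq_integral_conv (hn : 1 ≤ n) {f : ℝ → Rn n → ℝ} {t : ℝ} {x : Rn n}
    (hf : IntegrableOn (fun q : ℝ × Rn n => gKer n α (t - q.1) (x - q.2) * f q.1 q.2)
      (Ioc 0 t ×ˢ univ) (volume.prod volume)) :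
    duhamel α f t x = ∫ s in Ioc (0 : ℝ) t, conv n (gKer n α (t - s)) (f s) x := by
  have h₁ : duhamel α f t x = ∫ q in Ioc 0 t ×ˢ univ,
      gKer n α (t - q.1) (x - q.2) * f q.1 q.2 ∂(volume.prod volume) := by
    rw [duhamel, spaceTime_eq_restrict]
    refine setIntegral_eq_of_subset_of_forall_sdiff_eq_zero (measurableSet_Ioi.prod .univ)
      (prod_mono Ioc_subset_Ioi_self subset_rfl) fun q hq => ?_
    have hqt : t < q.1 := by
      by_contra! hle
      exact hq.2 ⟨⟨hq.1.1, hle⟩, mem_univ _⟩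
    rw [gKer_of_nonpos hn (by linarith), zero_mul]
  rw [h₁, setIntegral_prod _ hf]
  simp only [Measure.restrict_univ, conv]

lemma lintegral_enorm_gKer_mul_le (hn : 1 ≤ n) (hα : 0 < α) (hα1 : α ≤ 1) {u₀ : Rn n → ℝ}
    (hu₀ : Measurable u₀) (t : ℝ) (x : Rn n) :
    ∫⁻ y, ‖gKer n α t (x - y) * u₀ y‖ₑ ≤ maxFn (fun y => ‖u₀ y‖ₑ) x := by
  have hk := isMaxKernel_gKer (n := n) hn hα hα1 t
  simp_rw [enorm_mul, Real.enorm_eq_ofReal_abs (gKer n α t _), abs_of_nonneg (hk.1 _)]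
  exact hk.2 _ hu₀.enorm x

lemma integrable_gKer_mul (hn : 1 ≤ n) (hα : 0 < α) (hα1 : α ≤ 1) {u₀ : Rn n → ℝ}
    (hu₀ : Measurable u₀) {x : Rn n} (hx : maxFn (fun y => ‖u₀ y‖ₑ) x < ⊤) (t : ℝ) :
    Integrable fun y => gKer n α t (x - y) * u₀ y := by
  have hm : Measurable fun y : Rn n => gKer n α t (x - y) * u₀ y := by fun_prop
  exact ⟨hm.aestronglyMeasurable, (lintegral_enorm_gKer_mul_le hn hα hα1 hu₀ t x).trans_lt hx⟩

lemma enorm_conv_gKer_le (hn : 1 ≤ n) (hα : 0 < α) (hα1 : α ≤ 1) {u₀ : Rn n → ℝ}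
    (hu₀ : Measurable u₀) (t : ℝ) (x : Rn n) :
    ‖conv n (gKer n α t) u₀ x‖ₑ ≤ maxFn (fun y => ‖u₀ y‖ₑ) x :=
  (enorm_integral_le_lintegral_enorm _).trans (lintegral_enorm_gKer_mul_le hn hα hα1 hu₀ t x)

lemma measurable_conv_gKer {u₀ : Rn n → ℝ} (hu₀ : Measurable u₀) :
    Measurable fun q : ℝ × Rn n => conv n (gKer n α q.1) u₀ q.2 := by
  have hm : Measurable fun z : (ℝ × Rn n) × Rn n => gKer n α z.1.1 (z.1.2 - z.2) * u₀ z.2 := by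
    fun_prop
  exact hm.stronglyMeasurable.integral_prod_right'.measurable

end Duhamel

section Picard

variable {n b : ℕ} {α : ℝ}

/-- The Picard iterates for the Duhamel formula, started at zero. -/
def picardSeq (α : ℝ) (b : ℕ) (F : ℝ → Rn n → ℝ) (u₀ : Rn n → ℝ) : ℕ → ℝ → Rn n → ℝ
  | 0 => fun _ _ => 0
  | k + 1 => fun t x => conv n (gKer n α t) u₀ x + duhamel α F t x -
      duhamel α (fun s y => |picardSeq α b F u₀ k s y| ^ b * picardSeq α b F u₀ k s y) t x

lemma measurable_uncurry_abs_pow_mul {u : ℝ → Rn n → ℝ} (hu : Measurable (Function.uncurry u)) :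
    Measurable (Function.uncurry fun s y => |u s y| ^ b * u s y) := by
  have hu' : Measurable fun q : ℝ × Rn n => u q.1 q.2 := hu
  exact (hu'.abs.pow_const b).mul hu'

lemma measurable_picardSeq {F : ℝ → Rn n → ℝ} {u₀ : Rn n → ℝ}
    (hF : Measurable (Function.uncurry F)) (hu₀ : Measurable u₀) :
    ∀ k, Measurable (Function.uncurry (picardSeq α b F u₀ k))
  | 0 => measurable_const
  | k + 1 => ((measurable_conv_gKer hu₀).add (measurable_duhamel hF)).sub
      (measurable_duhamel (measurable_uncurry_abs_pow_mul (measurable_picardSeq hF hu₀ k)))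

lemma enorm_picardSeq_le (hn : 1 ≤ n) (hα : 0 < α) (hα1 : α ≤ 1) {F : ℝ → Rn n → ℝ}
    {u₀ : Rn n → ℝ} (hu₀ : Measurable u₀) {h E : Rn n → ℝ≥0∞} (hh : Measurable h)
    (hE : Measurable E) (hle : ∀ᵐ q ∂(spaceTime n), ‖F q.1 q.2‖ₑ ≤ h q.2)
    (hfix : ∀ x, E x = maxFn (fun y => ‖u₀ y‖ₑ) x + heatPotential α h x +
      heatPotential α (fun y => E y ^ (b + 1)) x) (k : ℕ) (t : ℝ) (x : Rn n) :
    ‖picardSeq α b F u₀ k t x‖ₑ ≤ E x := by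
  induction k generalizing t x with
  | zero => simp [picardSeq]
  | succ k ih =>
      rw [hfix]
      refine (enorm_sub_le).trans (add_le_add ((enorm_add_le _ _).trans (add_le_add
        (enorm_conv_gKer_le hn hα hα1 hu₀ t x) (enorm_duhamel_le hn hα hα1 hh hle t x))) ?_)
      refine enorm_duhamel_le hn hα hα1 (hE.pow_const _) (Filter.Eventually.of_forall fun q => ?_)
        t x
      rw [enorm_abs_pow_mul_self]
      exact pow_le_pow_left' (ih _ _) _

/-- The Picard iterates converge to a pointwise solution of the Duhamel formula as soon as a
majorant `E` is available for which the linearized iteration is summable. -/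
theorem exists_duhamel_solution (hn : 1 ≤ n) (hα : 0 < α) (hα1 : α ≤ 1) {F : ℝ → Rn n → ℝ}
    {u₀ : Rn n → ℝ} (hF : Measurable (Function.uncurry F)) (hu₀ : Measurable u₀)
    {h E : Rn n → ℝ≥0∞} (hh : Measurable h)
    (hE : Measurable E) (hle : ∀ᵐ q ∂(spaceTime n), ‖F q.1 q.2‖ₑ ≤ h q.2)
    (hfix : ∀ x, E x = maxFn (fun y => ‖u₀ y‖ₑ) x + heatPotential α h x +
      heatPotential α (fun y => E y ^ (b + 1)) x)
    (hsum : ∀ᵐ x, ∑' k, linSeq α b E k x < ⊤) :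
    ∃ u : ℝ → Rn n → ℝ, Measurable (Function.uncurry u) ∧ (∀ t x, ‖u t x‖ₑ ≤ E x) ∧
      ∀ᵐ x, ∀ t, u t x = conv n (gKer n α t) u₀ x + duhamel α F t x -
        duhamel α (fun s y => |u s y| ^ b * u s y) t x := by
  have hwm := measurable_picardSeq (α := α) (b := b) hF hu₀
  have hwE := enorm_picardSeq_le (b := b) hn hα hα1 hu₀ hh hE hle hfix
  set w := picardSeq α b F u₀ with hw
  set G : Set (Rn n) := {x | ∑' k, linSeq α b E k x < ⊤} with hG
  have hGm : MeasurableSet G :=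
    measurableSet_lt (Measurable.tsum (measurable_linSeq hE)) measurable_const
  have hGE : ∀ x ∈ G, E x < ⊤ := fun x hx =>
    (ENNReal.le_tsum (f := fun k => linSeq α b E k x) 0).trans_lt hx
  have hGI : ∀ x ∈ G, heatPotential α (fun y => E y ^ (b + 1)) x < ⊤ := fun x hx =>
    (le_add_self.trans (hfix x).ge).trans_lt (hGE x hx)
  have hEb : Measurable fun y => E y ^ (b + 1) := hE.pow_const _
  have hNle : ∀ u : ℝ → Rn n → ℝ, (∀ t x, ‖u t x‖ₑ ≤ E x) →
      ∀ q : ℝ × Rn n, ‖|u q.1 q.2| ^ b * u q.1 q.2‖ₑ ≤ E q.2 ^ (b + 1) := fun u hu q => by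
    rw [enorm_abs_pow_mul_self]
    exact pow_le_pow_left' (hu _ _) _
  have hNint : ∀ u : ℝ → Rn n → ℝ, Measurable (Function.uncurry u) → (∀ t x, ‖u t x‖ₑ ≤ E x) →
      ∀ x ∈ G, ∀ t, Integrable (fun q => gKer n α (t - q.1) (x - q.2) *
        (|u q.1 q.2| ^ b * u q.1 q.2)) (spaceTime n) := fun u hum hu x hx t =>
    integrable_duhamel hn hα hα1 (f := fun s y => |u s y| ^ b * u s y)
      (measurable_uncurry_abs_pow_mul hum) hEb
      (Filter.Eventually.of_forall (hNle u hu)) (hGI x hx) t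
  have hdiff : ∀ k, ∀ x ∈ G, ∀ t, ‖w k t x - w (k + 1) t x‖ₑ ≤ linSeq α b E k x := by
    intro k
    induction k with
    | zero =>
        intro x _ t
        have h0 : w 0 t x = 0 := rfl
        rw [h0, zero_sub, enorm_neg]
        exact hwE 1 t x
    | succ k ih =>
        intro x hx t
        have : w (k + 1) t x - w (k + 2) t x = -duhamel α (fun s y =>
            |w k s y| ^ b * w k s y - |w (k + 1) s y| ^ b * w (k + 1) s y) t x := by
          rw [duhamel_sub (hNint _ (hwm k) (hwE k) x hx t)
            (hNint _ (hwm (k + 1)) (hwE (k + 1)) x hx t)]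
          simp only [hw, picardSeq]
          ring
        rw [this, enorm_neg]
        refine enorm_duhamel_le hn hα hα1 (h := fun y => ((b : ℝ≥0∞) + 1) * E y ^ b *
          linSeq α b E k y) ?_ ?_ t x
        · have := measurable_linSeq (α := α) (b := b) hE k
          fun_prop
        · filter_upwards [ae_spaceTime_of_ae hsum] with q hq
          refine (enorm_abs_pow_mul_self_sub_le b _ _).trans ?_
          gcongr
          · exact max_le (hwE _ _ _) (hwE _ _ _)
          · exact ih q.2 hq q.1
  have hconv : ∀ x ∈ G, ∀ t, ∃ l, Filter.Tendsto (fun k => w k t x) Filter.atTop (nhds l) := by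
    intro x hx t
    refine cauchySeq_tendsto_of_complete (cauchySeq_of_edist_le_of_tsum_ne_top
      (fun k => linSeq α b E k x) (fun k => ?_) (ne_of_lt hx))
    rw [edist_eq_enorm_sub]
    exact hdiff k x hx t
  have hlim : ∀ q : ℝ × Rn n, ∃ l, Filter.Tendsto
      (fun k => (Prod.snd ⁻¹' G).indicator (Function.uncurry (w k)) q) Filter.atTop (nhds l) := by
    intro q
    by_cases hq : q.2 ∈ G
    · obtain ⟨l, hl⟩ := hconv q.2 hq q.1
      refine ⟨l, ?_⟩
      have hq' : q ∈ (Prod.snd ⁻¹' G : Set (ℝ × Rn n)) := hq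
      simpa only [indicator_of_mem hq', Function.uncurry] using hl
    · have hq' : q ∉ (Prod.snd ⁻¹' G : Set (ℝ × Rn n)) := hq
      exact ⟨0, by simpa only [indicator_of_notMem hq'] using tendsto_const_nhds⟩
  choose U hU using hlim
  have hUm : Measurable U := measurable_of_tendsto_metrizable
    (fun k => (hwm k).indicator (measurable_snd hGm)) (tendsto_pi_nhds.2 hU)
  have hUG : ∀ x ∈ G, ∀ t, Filter.Tendsto (fun k => w k t x) Filter.atTop (nhds (U (t, x))) := by
    intro x hx t
    have hq' : (t, x) ∈ (Prod.snd ⁻¹' G : Set (ℝ × Rn n)) := hx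
    simpa only [indicator_of_mem hq', Function.uncurry] using hU (t, x)
  have hUE : ∀ t x, ‖U (t, x)‖ₑ ≤ E x := by
    intro t x
    refine le_of_tendsto' (hU (t, x)).enorm fun k => ?_
    by_cases hq : (t, x) ∈ (Prod.snd ⁻¹' G : Set (ℝ × Rn n))
    · rw [indicator_of_mem hq]
      exact hwE k t x
    · rw [indicator_of_notMem hq]
      simp
  refine ⟨fun t x => U (t, x), hUm, hUE, ?_⟩
  filter_upwards [hsum] with x hx t
  refine tendsto_nhds_unique ((hUG x hx t).comp (Filter.tendsto_add_atTop_nat 1)) ?_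
  refine Filter.Tendsto.sub tendsto_const_nhds ?_
  have hbm : Measurable (Function.uncurry fun (_ : ℝ) y => (E y ^ (b + 1)).toReal) :=
    (hEb.comp measurable_snd).ennreal_toReal
  refine tendsto_integral_of_dominated_convergence
    (fun q => gKer n α (t - q.1) (x - q.2) * (E q.2 ^ (b + 1)).toReal)
    (fun k => (hNint _ (hwm k) (hwE k) x hx t).aestronglyMeasurable)
    (integrable_duhamel hn hα hα1 hbm hEb (Filter.Eventually.of_forall fun q => ?_) (hGI x hx) t)
    (fun k => ?_) ?_
  · rw [Real.enorm_eq_ofReal ENNReal.toReal_nonneg]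
    exact ENNReal.ofReal_toReal_le
  · filter_upwards [ae_spaceTime_of_ae hsum] with q hq
    rw [norm_mul, Real.norm_of_nonneg ((isMaxKernel_gKer hn hα hα1 _).1 _)]
    gcongr
    · exact (isMaxKernel_gKer hn hα hα1 _).1 _
    · rw [← toReal_enorm]
      exact ENNReal.toReal_mono (ENNReal.pow_ne_top (hGE _ hq).ne) (hNle _ (hwE k) q)
  · filter_upwards [ae_spaceTime_of_ae hsum] with q hq
    have := hUG q.2 hq q.1
    exact tendsto_const_nhds.mul ((this.abs.pow b).mul this)

end Picard

section MildSolutions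

variable {n b : ℕ} {α r : ℝ} {p : Rn n → ℝ} {K : ℝ≥0∞}

lemma isMildSol0_of_duhamel (hn : 1 ≤ n) (hα : 0 < α) (hα1 : α ≤ 1) {F u : ℝ → Rn n → ℝ}
    {u₀ : Rn n → ℝ} (hF : Measurable (Function.uncurry F)) (hu₀ : Measurable u₀)
    (hu : Measurable (Function.uncurry u)) {h E : Rn n → ℝ≥0∞} (hh : Measurable h)
    (hE : Measurable E) (hle : ∀ᵐ q ∂(spaceTime n), ‖F q.1 q.2‖ₑ ≤ h q.2)
    (huE : ∀ t x, ‖u t x‖ₑ ≤ E x)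
    (hfin : ∀ᵐ x, maxFn (fun y => ‖u₀ y‖ₑ) x + heatPotential α h x +
      heatPotential α (fun y => E y ^ (b + 1)) x < ⊤)
    (heq : ∀ᵐ x, ∀ t, u t x = conv n (gKer n α t) u₀ x + duhamel α F t x -
        duhamel α (fun s y => |u s y| ^ b * u s y) t x) :
    IsMildSol0 n α b (Ioi 0) F u₀ u := by
  filter_upwards [ae_spaceTime_of_ae hfin, ae_spaceTime_of_ae heq] with q hq hq'
  rw [ENNReal.add_lt_top, ENNReal.add_lt_top] at hq
  have hFi := integrableOn_duhamel (integrable_duhamel hn hα hα1 hF hh hle hq.1.2 q.1)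
  have hui := integrableOn_duhamel (f := fun s y => |u s y| ^ b * u s y)
    (integrable_duhamel hn hα hα1 (f := fun s y => |u s y| ^ b * u s y) (measurable_uncurry_abs_pow_mul hu)
    (hE.pow_const _) (Filter.Eventually.of_forall fun q => by
      rw [enorm_abs_pow_mul_self]
      exact pow_le_pow_left' (huE _ _) _) hq.2 q.1)
  refine ⟨integrable_gKer_mul hn hα hα1 hu₀ hq.1.1 q.1, hFi, hui, ?_⟩
  rw [← duhamel_eq_integral_conv hn hFi, ← duhamel_eq_integral_conv hn hui]
  exact hq' q.1

lemma IsMildSol0.ae_duhamel (hn : 1 ≤ n) {F u : ℝ → Rn n → ℝ} {u₀ : Rn n → ℝ}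
    (hu : IsMildSol0 n α b (Ioi 0) F u₀ u) : ∀ᵐ q ∂(spaceTime n),
      Integrable (fun z => gKer n α (q.1 - z.1) (q.2 - z.2) * (|u z.1 z.2| ^ b * u z.1 z.2))
        (spaceTime n) ∧
      u q.1 q.2 = conv n (gKer n α q.1) u₀ q.2 + duhamel α F q.1 q.2 -
        duhamel α (fun s y => |u s y| ^ b * u s y) q.1 q.2 := by
  filter_upwards [hu] with q hq
  obtain ⟨-, hFi, hui, heq⟩ := hq
  refine ⟨(integrable_duhamel_iff hn (f := fun s y => |u s y| ^ b * u s y)).2 hui, ?_⟩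
  rw [heq, ← duhamel_eq_integral_conv hn hFi,
    ← duhamel_eq_integral_conv hn (f := fun s y => |u s y| ^ b * u s y) hui]

theorem PotentialBounds.ae_eq_of_isMildSol0 (hn : 1 ≤ n) (hα : 0 < α) (hα1 : α ≤ 1)
    (hK : PotentialBounds α ((b : ℝ) + 1) r p K) (hr : 1 ≤ r) {R : ℝ≥0∞} (hR : R ≠ 0)
    (hR' : R ≠ ⊤) (hsmall : ((b : ℝ≥0∞) + 1) * 2 ^ (b + 1) * (4 * R) ^ b * K ≤ 4⁻¹)
    {F u v : ℝ → Rn n → ℝ} {u₀ : Rn n → ℝ}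
    (hu : Measurable (Function.uncurry u)) (hv : Measurable (Function.uncurry v))
    (huR : luxNorm volume (fun _ => r) (timeSup n u) ≤ R)
    (hvR : luxNorm volume (fun _ => r) (timeSup n v) ≤ R)
    (hus : IsMildSol0 n α b (Ioi 0) F u₀ u) (hvs : IsMildSol0 n α b (Ioi 0) F u₀ v) :
    ∀ᵐ q ∂(spaceTime n), v q.1 q.2 = u q.1 q.2 := by
  have hr0 : 0 < r := by linarith
  have hum := measurable_timeSup hu
  have hvm := measurable_timeSup hv
  have hdm : Measurable (Function.uncurry fun s y => v s y - u s y) := Measurable.sub hv hu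
  set w := timeSup n fun s y => v s y - u s y with hw
  have hwm : Measurable w := measurable_timeSup hdm
  set G : Rn n → ℝ≥0∞ := fun x => max (timeSup n v x) (timeSup n u x) with hG
  have hGm : Measurable G := hvm.max hum
  have hwG : w ≤ᵐ[volume] fun x => 2 * G x := by
    refine timeSup_le_of_ae_enorm_le ?_
    filter_upwards [ae_enorm_le_timeSup hu, ae_enorm_le_timeSup hv] with q hqu hqv
    calc ‖v q.1 q.2 - u q.1 q.2‖ₑ ≤ ‖v q.1 q.2‖ₑ + ‖u q.1 q.2‖ₑ := enorm_sub_le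
      _ ≤ G q.2 + G q.2 :=
        add_le_add (hqv.trans (le_max_left _ _)) (hqu.trans (le_max_right _ _))
      _ = 2 * G q.2 := (two_mul _).symm
  have hwlin : w ≤ᵐ[volume] linPotential α b G w := by
    refine timeSup_le_of_ae_enorm_le ?_
    filter_upwards [hus.ae_duhamel hn, hvs.ae_duhamel hn] with q hqu hqv
    have hsub : v q.1 q.2 - u q.1 q.2 = -duhamel α (fun s y =>
        |v s y| ^ b * v s y - |u s y| ^ b * u s y) q.1 q.2 := by
      rw [duhamel_sub hqv.1 hqu.1, hqv.2, hqu.2]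
      ring
    rw [hsub, enorm_neg]
    refine enorm_duhamel_le hn hα hα1 (by fun_prop) ?_ _ _
    filter_upwards [ae_enorm_le_timeSup hu, ae_enorm_le_timeSup hv, ae_enorm_le_timeSup hdm]
      with z hzu hzv hzd
    refine (enorm_abs_pow_mul_self_sub_le b _ _).trans ?_
    gcongr
    exact max_le (hzv.trans (le_max_left _ _)) (hzu.trans (le_max_right _ _))
  have hR2 : R < 2 * R := by
    rw [two_mul]
    exact ENNReal.lt_add_right hR' hR
  have hum1 := lintegral_div_rpow_le_one_of_luxNorm_lt (fun _ => hr0.le) (huR.trans_lt hR2)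
  have hvm1 := lintegral_div_rpow_le_one_of_luxNorm_lt (fun _ => hr0.le) (hvR.trans_lt hR2)
  have h42 : ∀ a : ℝ≥0∞, a / (4 * R) = a / (2 * R) / 2 := fun a => by
    rw [div_eq_mul_inv, div_eq_mul_inv, div_eq_mul_inv, mul_assoc a,
      ← ENNReal.mul_inv (.inr (by simp)) (.inr (by simp))]
    congr 2
    ring
  have hG1 : ∫⁻ x, (G x / (4 * R)) ^ r ≤ 1 := by
    refine lintegral_rpow_le_one_of_ae_le_max (p := fun _ => r) measurable_const (fun _ => hr)
      (hvm.div_const (2 * R)) (Filter.Eventually.of_forall fun x => ?_) hvm1 hum1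
    rw [h42]
    gcongr
    have hmono : Monotone fun a : ℝ≥0∞ => a / (2 * R) := fun _ _ h =>
      ENNReal.div_le_div_right h _
    exact (hmono.map_max).le
  have h4R : 4 * R ≠ 0 := mul_ne_zero (by simp) hR
  have h4R' : 4 * R ≠ ⊤ := ENNReal.mul_ne_top (by simp) hR'
  have hw1 : ∫⁻ x, (w x / (2 * (4 * R))) ^ r ≤ 1 := by
    refine le_trans (lintegral_mono_ae (hwG.mono fun x hx => ?_)) hG1
    refine ENNReal.rpow_le_rpow ?_ hr0.le
    calc w x / (2 * (4 * R)) ≤ 2 * G x / (2 * (4 * R)) := by gcongr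
      _ = G x / (4 * R) := ENNReal.mul_div_mul_left _ _ (by simp) (by simp)
  have hw0 : w =ᵐ[volume] 0 := hK.ae_eq_zero_of_le_linPotential hr hGm hwm h4R h4R'
    (mul_ne_zero (by simp) h4R) (ENNReal.mul_ne_top (by simp) h4R') hsmall hG1 hw1 hwlin
  filter_upwards [ae_enorm_le_timeSup hdm, ae_spaceTime_of_ae hw0] with q hq hq0
  have h0 : ‖v q.1 q.2 - u q.1 q.2‖ₑ ≤ 0 := hq.trans hq0.le
  exact sub_eq_zero.1 (enorm_eq_zero.1 (le_antisymm h0 zero_le))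

end MildSolutions

/-- A radius and a size of the data for which the fixed point argument closes. -/
lemma exists_small_radius (b : ℕ) (hb : 1 ≤ b) {K : ℝ≥0∞} (hK : 1 ≤ K) (hK' : K ≠ ⊤) :
    ∃ e R : ℝ≥0∞, e ≠ 0 ∧ e ≠ ⊤ ∧ R ≠ 0 ∧ R ≠ ⊤ ∧ e * K ≤ R / 9 ∧ R ^ b * K ≤ 9⁻¹ ∧
      ((b : ℝ≥0∞) + 1) * 2 ^ (b + 1) * R ^ b * K ≤ 4⁻¹ ∧
      ((b : ℝ≥0∞) + 1) * 2 ^ (b + 1) * (4 * R) ^ b * K ≤ 4⁻¹ := by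
  have hK0 : K ≠ 0 := (zero_lt_one.trans_le hK).ne'
  set c : ℝ≥0∞ := ((b : ℝ≥0∞) + 1) * 2 ^ (b + 1) * 4 ^ b with hc
  have h1 : (1 : ℝ≥0∞) ≤ (b : ℝ≥0∞) + 1 := le_add_self
  have h2 : (1 : ℝ≥0∞) ≤ 2 ^ (b + 1) := one_le_pow₀ (by norm_num)
  have h4 : (1 : ℝ≥0∞) ≤ 4 ^ b := one_le_pow₀ (by norm_num)
  have hc1 : 1 ≤ c := one_le_mul (one_le_mul h1 h2) h4
  have hct : c ≠ ⊤ := ENNReal.mul_ne_top (ENNReal.mul_ne_top (by simp) (by simp)) (by simp)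
  set R : ℝ≥0∞ := (9 * c * K)⁻¹ with hR
  have h9 : 9 * c * K ≠ 0 :=
    mul_ne_zero (mul_ne_zero (by simp) (zero_lt_one.trans_le hc1).ne') hK0
  have h9' : 9 * c * K ≠ ⊤ := ENNReal.mul_ne_top (ENNReal.mul_ne_top (by simp) hct) hK'
  have hR0 : R ≠ 0 := ENNReal.inv_ne_zero.2 h9'
  have hRt : R ≠ ⊤ := ENNReal.inv_ne_top.2 h9
  have hR1 : R ≤ 1 := ENNReal.inv_le_one.2 (one_le_mul (one_le_mul (by norm_num) hc1) hK)
  have hRb : R ^ b ≤ R := pow_le_of_le_one zero_le hR1 (by omega)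
  have hcR : c * R ^ b * K ≤ 9⁻¹ := by
    calc c * R ^ b * K ≤ c * R * K := by gcongr
      _ = 9⁻¹ * 9 * (c * K) * R := by
          rw [ENNReal.inv_mul_cancel (by simp) (by simp)]
          ring
      _ = 9⁻¹ * ((9 * c * K) * R) := by ring
      _ = 9⁻¹ := by rw [hR, ENNReal.mul_inv_cancel h9 h9', mul_one]
  have h94 : (9⁻¹ : ℝ≥0∞) ≤ 4⁻¹ := ENNReal.inv_le_inv.2 (by norm_num)
  refine ⟨R / 9 / K, R, ENNReal.div_ne_zero.2 ⟨ENNReal.div_ne_zero.2 ⟨hR0, by simp⟩, hK'⟩,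
    ENNReal.div_ne_top (ENNReal.div_ne_top hRt (by simp)) hK0, hR0, hRt,
    (ENNReal.div_mul_cancel hK0 hK').le, ?_, ?_, ?_⟩
  · refine le_trans ?_ hcR
    gcongr
    exact le_mul_of_one_le_left zero_le hc1
  · refine le_trans ?_ (hcR.trans h94)
    gcongr
    exact le_mul_of_one_le_right zero_le h4
  · refine le_trans (le_of_eq ?_) (hcR.trans h94)
    rw [hc, mul_pow]
    ring

/-- Global well-posedness (γ = 0) for small data in mixed variable Lebesgue spaces. -/
theorem stmt0 (n b : ℕ) (hn : 1 ≤ n) (hb : 1 ≤ b) (α : ℝ) (hα : 1/2 < α ∧ α ≤ 1)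
    (h2α : 2 * α < n) (hnb : 2 * α * ((b:ℝ) + 1) < (n:ℝ) * b)
    (p : Rn n → ℝ) (hplog : IsPLog univ p)
    (hpminus : ∃ pm : ℝ, (b:ℝ) + 1 < pm ∧ ∀ᵐ x ∂(volume : Measure (Rn n)), pm ≤ p x)
    (hpplus : ∃ P : ℝ, (∀ᵐ x ∂(volume : Measure (Rn n)), p x ≤ P) ∧
      2 * α * P < (n:ℝ) * ((b:ℝ) + 1)) :
    ∃ ε > (0:ℝ), ∀ (u₀ : Rn n → ℝ) (F : ℝ → Rn n → ℝ),
      Measurable u₀ → Measurable (Function.uncurry F) →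
      mixedNorm n p ((n:ℝ) * b / (2 * α)) u₀
        + mixedN n (fun x => p x / ((b:ℝ) + 1)) ((n:ℝ) * b / (((b:ℝ) + 1) * (2 * α))) F
        < ENNReal.ofReal ε →
      ∃ R > (0:ℝ), ∃ u : ℝ → Rn n → ℝ, Measurable (Function.uncurry u) ∧
        mixedN n p ((n:ℝ) * b / (2 * α)) u ≤ ENNReal.ofReal R ∧
        IsMildSol0 n α b (Ioi 0) F u₀ u ∧
        ∀ v : ℝ → Rn n → ℝ, Measurable (Function.uncurry v) →
          mixedN n p ((n:ℝ) * b / (2 * α)) v ≤ ENNReal.ofReal R →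
          IsMildSol0 n α b (Ioi 0) F u₀ v →
          ∀ᵐ tx : ℝ × Rn n ∂((volume.restrict (Ioi (0:ℝ))).prod volume),
            v tx.1 tx.2 = u tx.1 tx.2 := by
  obtain ⟨hα₁, hα1⟩ := hα
  obtain ⟨l, hl, hpl⟩ := hpminus
  obtain ⟨m, hpm, -⟩ := hpplus
  have hα0 : 0 < α := by linarith
  have hb0 : (0 : ℝ) < b := by exact_mod_cast hb
  have hn0 : (0 : ℝ) < n := by exact_mod_cast hn
  have hκ : (1 : ℝ) < (b : ℝ) + 1 := by linarith
  have hr : (b : ℝ) + 1 < (n : ℝ) * b / (2 * α) := by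
    rw [lt_div_iff₀ (by positivity)]
    linarith
  obtain ⟨K, hK⟩ := exists_potentialBounds hn (κ := (b : ℝ) + 1) (r := (n : ℝ) * b / (2 * α))
    (β := 1 / b) hα0 hα1 hκ hr (by positivity) (by field_simp) (by field_simp) hplog hl hpl hpm
  have hq : (n : ℝ) * b / (((b : ℝ) + 1) * (2 * α)) = (n : ℝ) * b / (2 * α) / ((b : ℝ) + 1) := by
    field_simp
  rw [hq]
  set r := (n : ℝ) * b / (2 * α)
  have hr1 : 1 ≤ r := by linarith
  have hp1 : ∀ x, 1 ≤ p x := fun x => hplog.2.1 x (mem_univ x)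
  obtain ⟨e, R, he, he', hR, hR', heR, hRK, hs, hs4⟩ :=
    exists_small_radius b hb hK.one_le hK.ne_top
  refine ⟨e.toReal, ENNReal.toReal_pos he he', fun u₀ F hu₀ hF hsmall => ?_⟩
  rw [ENNReal.ofReal_toReal he'] at hsmall
  have hu₀s := le_self_add.trans_lt hsmall
  have hFs := le_add_self.trans_lt hsmall
  have hFm := measurable_timeSup hF
  have hu₀p := lintegral_div_rpow_le_one_of_luxNorm_lt (fun x => zero_le_one.trans (hp1 x))
    ((le_max_left _ _).trans_lt hu₀s)
  have hu₀r := lintegral_div_rpow_le_one_of_luxNorm_lt (fun _ => zero_le_one.trans hr1)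
    ((le_max_right _ _).trans_lt hu₀s)
  have hFp := lintegral_div_rpow_le_one_of_luxNorm_lt
    (fun x => div_nonneg (zero_le_one.trans (hp1 x)) (zero_le_one.trans hκ.le))
    ((le_max_left _ _).trans_lt hFs)
  have hFr := lintegral_div_rpow_le_one_of_luxNorm_lt
    (fun _ => div_nonneg (zero_le_one.trans hr1) (zero_le_one.trans hκ.le))
    ((le_max_right _ _).trans_lt hFs)
  simp only [← Real.enorm_eq_ofReal_abs] at hu₀p hu₀r
  obtain ⟨E, hE, hfix, hEp, hEr⟩ := hK.exists_majorant hplog.1 hp1 hr1 hu₀.enorm hFm he he' hR hR'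
    heR hRK hu₀p hu₀r hFp hFr
  have hsum := hK.ae_tsum_linSeq_lt_top hr1 hE hR hR' hs hEr
  have hEfin := ae_lt_top_of_lintegral_div_rpow_le_one (zero_lt_one.trans_le hr1) hE hR' hEr
  obtain ⟨u, hum, huE, hueq⟩ := exists_duhamel_solution hn hα0 hα1 hF hu₀ hFm hE
    (ae_enorm_le_timeSup hF) hfix hsum
  have hmild : IsMildSol0 n α b (Ioi 0) F u₀ u :=
    isMildSol0_of_duhamel hn hα0 hα1 hF hu₀ hum hFm hE (ae_enorm_le_timeSup hF) huE
      (hEfin.mono fun x hx => hfix x ▸ hx) hueq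
  have huS : timeSup n u ≤ᵐ[volume] E :=
    timeSup_le_of_ae_enorm_le (Filter.Eventually.of_forall fun q => huE q.1 q.2)
  have hRpos : 0 < R := pos_iff_ne_zero.2 hR
  have huR : mixedN n p r u ≤ R := by
    refine max_le (luxNorm_le_of_lintegral_div_rpow_le_one hRpos (le_trans ?_ hEp))
      (luxNorm_le_of_lintegral_div_rpow_le_one hRpos (le_trans ?_ hEr))
    · refine lintegral_mono_ae (huS.mono fun x hx => ?_)
      have := zero_le_one.trans (hp1 x)
      gcongr
    · refine lintegral_mono_ae (huS.mono fun x hx => ?_)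
      gcongr
  refine ⟨R.toReal, ENNReal.toReal_pos hR hR', u, hum, ?_, hmild, fun v hvm hvR hv => ?_⟩
  · rwa [ENNReal.ofReal_toReal hR']
  · rw [ENNReal.ofReal_toReal hR'] at hvR
    exact hK.ae_eq_of_isMildSol0 hn hα0 hα1 hr1 hR hR' hs4 hum hvm
      ((le_max_right _ _).trans huR) ((le_max_right _ _).trans hvR) hmild hv
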